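/- Boone–Higman theorem (hard direction): Let G be a group and suppose for some n there is a surjective homomorphism π : FreeGroup (Fin n) → G such that the set {w : FreeGroup (Fin n) | π w = 1} is computable. Then there exist a finitely presented group H, a simple subgroup S of H, and an injective group homomorphism from G into S; that is, every finitely generated group with solvable word problem embeds in a simple subgroup of a finitely presented group. -/

import Mathlib

/-- A group is finitely presented if it is isomorphic to the quotient of a finitely
generated free group by the normal closure of a finite set of relators. -/
def IsFinitelyPresented (H : Type*) [Group H] : Prop :=
  ∃ (n : ℕ) (R : Finset (FreeGroup (Fin n))),
    Nonempty (H ≃* FreeGroup (Fin n) ⧸ Subgroup.normalClosure (R : Set (FreeGroup (Fin n))))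

/-! ### Part 1: HNN extensions with respect to a pair of injective homomorphisms -/
namespace BHP

section HX
variable {G Y : Type} [Group G] [Group Y] (f₁ f₂ : Y →* G)
  (h₁ : Function.Injective f₁) (h₂ : Function.Injective f₂)

noncomputable def hxEquiv : f₁.range ≃* f₂.range :=
  (MonoidHom.ofInjective h₁).symm.trans (MonoidHom.ofInjective h₂)

theorem hxEquiv_apply (y : Y) (h : f₁ y ∈ f₁.range) :
    (hxEquiv f₁ f₂ h₁ h₂ ⟨f₁ y, h⟩ : G) = f₂ y := by
  have : (⟨f₁ y, h⟩ : f₁.range) = MonoidHom.ofInjective h₁ y := rfl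
  rw [this]
  simp only [hxEquiv, MulEquiv.trans_apply, MulEquiv.symm_apply_apply]
  rfl

/-- HNN extension conjugating `f₁ y` to `f₂ y`. -/
abbrev HX : Type := HNNExtension G f₁.range f₂.range (hxEquiv f₁ f₂ h₁ h₂)

noncomputable def HX.of : G →* HX f₁ f₂ h₁ h₂ := HNNExtension.of
noncomputable def HX.t : HX f₁ f₂ h₁ h₂ := HNNExtension.t

theorem HX.of_injective : Function.Injective (HX.of f₁ f₂ h₁ h₂) :=
  HNNExtension.of_injective _

theorem HX.conj (y : Y) : HX.t f₁ f₂ h₁ h₂ * HX.of f₁ f₂ h₁ h₂ (f₁ y) =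
    HX.of f₁ f₂ h₁ h₂ (f₂ y) * HX.t f₁ f₂ h₁ h₂ := by
  have := HNNExtension.t_mul_of (φ := hxEquiv f₁ f₂ h₁ h₂) ⟨f₁ y, f₁.mem_range.2 ⟨y, rfl⟩⟩
  rw [hxEquiv_apply] at this
  exact this

noncomputable def HX.lift {H : Type} [Group H] (f : G →* H) (x : H)
    (hx : ∀ y, x * f (f₁ y) = f (f₂ y) * x) : HX f₁ f₂ h₁ h₂ →* H :=
  HNNExtension.lift f x (by
    rintro ⟨a, ha⟩
    obtain ⟨y, rfl⟩ := f₁.mem_range.1 ha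
    rw [hxEquiv_apply]; exact hx y)

@[simp] theorem HX.lift_of {H : Type} [Group H] (f : G →* H) (x : H)
    (hx : ∀ y, x * f (f₁ y) = f (f₂ y) * x) (g : G) :
    HX.lift f₁ f₂ h₁ h₂ f x hx (HX.of f₁ f₂ h₁ h₂ g) = f g :=
  HNNExtension.lift_of _ _ _ _

@[simp] theorem HX.lift_t {H : Type} [Group H] (f : G →* H) (x : H)
    (hx : ∀ y, x * f (f₁ y) = f (f₂ y) * x) :
    HX.lift f₁ f₂ h₁ h₂ f x hx (HX.t f₁ f₂ h₁ h₂) = x :=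
  HNNExtension.lift_t _ _ _

end HX

section map
variable {G Y G' Y' : Type} [Group G] [Group Y] [Group G'] [Group Y']
  (f₁ f₂ : Y →* G) (h₁ : Function.Injective f₁) (h₂ : Function.Injective f₂)
  (k₁ k₂ : Y' →* G') (l₁ : Function.Injective k₁) (l₂ : Function.Injective k₂)
  (i : Y → Y') (j : G →* G')
  (e₁ : ∀ y, j (f₁ y) = k₁ (i y)) (e₂ : ∀ y, j (f₂ y) = k₂ (i y))

noncomputable def HX.map : HX f₁ f₂ h₁ h₂ →* HX k₁ k₂ l₁ l₂ :=
  HX.lift f₁ f₂ h₁ h₂ ((HX.of k₁ k₂ l₁ l₂).comp j) (HX.t k₁ k₂ l₁ l₂) (by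
    intro y
    simp only [MonoidHom.comp_apply, e₁, e₂]
    exact HX.conj _ _ _ _ _)

theorem HX.map_of (g : G) : HX.map f₁ f₂ h₁ h₂ k₁ k₂ l₁ l₂ i j e₁ e₂ (HX.of f₁ f₂ h₁ h₂ g) =
    HX.of k₁ k₂ l₁ l₂ (j g) := HX.lift_of f₁ f₂ h₁ h₂ _ _ _ _

theorem HX.map_t : HX.map f₁ f₂ h₁ h₂ k₁ k₂ l₁ l₂ i j e₁ e₂ (HX.t f₁ f₂ h₁ h₂) =
    HX.t k₁ k₂ l₁ l₂ := HX.lift_t f₁ f₂ h₁ h₂ _ _ _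

theorem HX.map_key
    (c₁ : ∀ g y, j g = k₁ y → g ∈ f₁.range) (c₂ : ∀ g y, j g = k₂ y → g ∈ f₂.range)
    (x : HX f₁ f₂ h₁ h₂)
    (hx : HX.map f₁ f₂ h₁ h₂ k₁ k₂ l₁ l₂ i j e₁ e₂ x ∈ (HX.of k₁ k₂ l₁ l₂).range) :
    ∃ g, x = HX.of f₁ f₂ h₁ h₂ g := by
  obtain ⟨d⟩ := HNNExtension.NormalWord.TransversalPair.nonempty G f₁.range f₂.range
  let w := HNNExtension.NormalWord.equiv (hxEquiv f₁ f₂ h₁ h₂) d x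
  have hw : w.toReducedWord.prod (hxEquiv f₁ f₂ h₁ h₂) = x :=
    (HNNExtension.NormalWord.equiv (hxEquiv f₁ f₂ h₁ h₂) d).symm_apply_apply x
  let w' : HNNExtension.NormalWord.ReducedWord G' k₁.range k₂.range :=
    { head := j w.head
      toList := w.toList.map (fun p => (p.1, j p.2))
      chain := by
        rw [List.isChain_map]
        refine w.chain.imp ?_
        rintro ⟨u, a⟩ ⟨v, b⟩ h h'
        refine h ?_
        simp only at h' ⊢
        rcases Int.units_eq_one_or u with rfl | rfl
        · obtain ⟨y, hy⟩ := h'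
          exact c₁ _ _ hy.symm
        · obtain ⟨y, hy⟩ := h'
          exact c₂ _ _ hy.symm }
  have hm : w'.prod (hxEquiv k₁ k₂ l₁ l₂) = HX.map f₁ f₂ h₁ h₂ k₁ k₂ l₁ l₂ i j e₁ e₂ x := by
    rw [← hw]
    simp only [HNNExtension.NormalWord.ReducedWord.prod, w', map_mul, map_list_prod, List.map_map]
    have A := HX.map_of f₁ f₂ h₁ h₂ k₁ k₂ l₁ l₂ i j e₁ e₂
    have B := HX.map_t f₁ f₂ h₁ h₂ k₁ k₂ l₁ l₂ i j e₁ e₂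
    refine congrArg₂ _ (A _).symm (congrArg List.prod ?_)
    apply List.map_congr_left
    intro p _
    simp only [Function.comp, map_mul, map_zpow]
    exact congrArg₂ _ (congrArg (· ^ (p.1 : ℤ)) B.symm) (A _).symm
  have := HNNExtension.ReducedWord.toList_eq_nil_of_mem_of_range (hxEquiv k₁ k₂ l₁ l₂) w'
    (by rw [hm]; exact hx)
  have h0 : w.toList = [] := by simpa [w'] using this
  refine ⟨w.head, ?_⟩
  rw [← hw]
  simp only [HNNExtension.NormalWord.ReducedWord.prod, h0, List.map_nil, List.prod_nil, mul_one]
  rfl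

theorem HX.map_injective (hj : Function.Injective j)
    (c₁ : ∀ g y, j g = k₁ y → g ∈ f₁.range) (c₂ : ∀ g y, j g = k₂ y → g ∈ f₂.range) :
    Function.Injective (HX.map f₁ f₂ h₁ h₂ k₁ k₂ l₁ l₂ i j e₁ e₂) := by
  rw [injective_iff_map_eq_one]
  intro x hx
  obtain ⟨g, rfl⟩ := HX.map_key f₁ f₂ h₁ h₂ k₁ k₂ l₁ l₂ i j e₁ e₂ c₁ c₂ x
    (by rw [hx]; exact one_mem _)
  have : HX.of k₁ k₂ l₁ l₂ (j g) = 1 := by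
    rw [← hx, HX.map_of]
  have := HX.of_injective k₁ k₂ l₁ l₂ (this.trans (map_one _).symm)
  have := hj (this.trans (map_one j).symm)
  rw [this, map_one]

end map

/-- Adding a stable letter while controlling a subgroup. -/
theorem exists_hnn {G Y : Type} [Group G] [Group Y] (f₁ f₂ : Y →* G)
    (h₁ : Function.Injective f₁) (h₂ : Function.Injective f₂) (P : Subgroup G)
    (hP : ∀ y, f₁ y ∈ P ↔ f₂ y ∈ P) :
    ∃ (L : Type) (_ : Group L) (e : G →* L) (r : L), Function.Injective e ∧
      (∀ y, r * e (f₁ y) = e (f₂ y) * r) ∧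
      ∀ g, e g ∈ Subgroup.closure (insert r (e '' P)) → g ∈ P := by
  refine ⟨HX f₁ f₂ h₁ h₂, inferInstance, HX.of _ _ _ _, HX.t _ _ _ _, HX.of_injective _ _ _ _,
    HX.conj _ _ _ _, ?_⟩
  intro g hg
  let Y₀ : Subgroup Y := P.comap f₁
  let a₁ : Y₀ →* P := (f₁.comp Y₀.subtype).codRestrict P (fun y => y.2)
  let a₂ : Y₀ →* P := (f₂.comp Y₀.subtype).codRestrict P (fun y => (hP _).1 y.2)
  have b₁ : Function.Injective a₁ := fun x y h =>
    Subtype.ext (h₁ (congrArg Subtype.val h))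
  have b₂ : Function.Injective a₂ := fun x y h =>
    Subtype.ext (h₂ (congrArg Subtype.val h))
  let m := HX.map a₁ a₂ b₁ b₂ f₁ f₂ h₁ h₂ (fun y => (y : Y)) P.subtype
    (fun y => rfl) (fun y => rfl)
  have hr : Subgroup.closure (insert (HX.t f₁ f₂ h₁ h₂) (HX.of f₁ f₂ h₁ h₂ '' P)) ≤ m.range := by
    rw [Subgroup.closure_le]
    rintro x (rfl | ⟨p, hp, rfl⟩)
    · exact ⟨HX.t _ _ _ _, HX.lift_t _ _ _ _ _ _ _⟩
    · exact ⟨HX.of _ _ _ _ ⟨p, hp⟩, HX.lift_of _ _ _ _ _ _ _ _⟩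
  obtain ⟨x, hx⟩ := hr hg
  obtain ⟨p, rfl⟩ := HX.map_key a₁ a₂ b₁ b₂ f₁ f₂ h₁ h₂ (fun y => (y : Y)) P.subtype
    (fun y => rfl) (fun y => rfl)
    (by
      rintro ⟨g, hg⟩ y (rfl : g = f₁ y)
      exact ⟨⟨y, hg⟩, rfl⟩)
    (by
      rintro ⟨g, hg⟩ y (rfl : g = f₂ y)
      exact ⟨⟨y, (hP y).2 hg⟩, rfl⟩) x ⟨g, hx.symm⟩
  have h2 : m (HX.of a₁ a₂ b₁ b₂ p) = HX.of f₁ f₂ h₁ h₂ (p : G) := HX.lift_of _ _ _ _ _ _ _ _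
  rw [h2] at hx
  rw [← HX.of_injective f₁ f₂ h₁ h₂ hx]
  exact p.2

end BHP

/-! ### Part 2a: free groups with translation action, towers of HNN extensions -/
namespace BHP

/-- Retraction lemma for free groups. -/
theorem mem_closure_of_map {X Y : Type} (j : X → Y) (hj : Function.Injective j) (I : Set Y)
    (w : FreeGroup X) :
    FreeGroup.map j w ∈ Subgroup.closure (FreeGroup.of '' I) ↔
      w ∈ Subgroup.closure (FreeGroup.of '' (j ⁻¹' I)) := by
  classical
  constructor
  · intro h
    let R : FreeGroup Y →* FreeGroup X := FreeGroup.lift (fun y =>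
      if h : ∃ x, j x = y ∧ y ∈ I then FreeGroup.of h.choose else 1)
    let S : FreeGroup Y →* FreeGroup X := FreeGroup.lift (fun y =>
      if h : ∃ x, j x = y then FreeGroup.of h.choose else 1)
    have hS : ∀ w, S (FreeGroup.map j w) = w := by
      intro w
      have : S.comp (FreeGroup.map j) = MonoidHom.id _ := by
        ext x
        have hx : ∃ x', j x' = j x := ⟨x, rfl⟩
        simp only [MonoidHom.comp_apply, FreeGroup.map.of, MonoidHom.id_apply, S,
          FreeGroup.lift_apply_of, dif_pos hx]
        rw [hj hx.choose_spec]
      exact DFunLike.congr_fun this w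
    have hsub : ∀ u ∈ Subgroup.closure (FreeGroup.of '' I),
        S u ∈ Subgroup.closure (FreeGroup.of '' (j ⁻¹' I)) := by
      intro u hu
      have : Subgroup.closure (FreeGroup.of '' I) ≤
          (Subgroup.closure (FreeGroup.of '' (j ⁻¹' I))).comap S := by
        rw [Subgroup.closure_le]
        rintro _ ⟨y, hy, rfl⟩
        simp only [Subgroup.coe_comap, Set.mem_preimage, SetLike.mem_coe, S,
          FreeGroup.lift_apply_of]
        split_ifs with h
        · apply Subgroup.subset_closure
          refine ⟨_, ?_, rfl⟩
          rw [Set.mem_preimage, h.choose_spec]; exact hy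
        · exact one_mem _
      exact this hu
    have := hsub _ h
    rwa [hS] at this
  · intro h
    have : Subgroup.closure (FreeGroup.of '' (j ⁻¹' I)) ≤
        (Subgroup.closure (FreeGroup.of '' I)).comap (FreeGroup.map j) := by
      rw [Subgroup.closure_le]
      rintro _ ⟨x, hx, rfl⟩
      simp only [Subgroup.coe_comap, Set.mem_preimage, SetLike.mem_coe, FreeGroup.map.of]
      exact Subgroup.subset_closure ⟨_, hx, rfl⟩
    exact this h

section CG
variable (Q V : Type) [Group V]

def cgAct : V →* MulAut (FreeGroup (Q × V)) where
  toFun v := FreeGroup.freeGroupCongr (Equiv.prodCongr (Equiv.refl Q) (Equiv.mulLeft v))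
  map_one' := by
    apply MulEquiv.toMonoidHom_injective
    ext x
    simp
  map_mul' a b := by
    apply MulEquiv.toMonoidHom_injective
    ext x
    obtain ⟨q, u⟩ := x
    simp [mul_assoc]

theorem cgAct_of (v : V) (q : Q) (u : V) :
    cgAct Q V v (FreeGroup.of (q, u)) = FreeGroup.of (q, v * u) := by
  simp [cgAct]

/-- The configuration group. -/
abbrev CG : Type := FreeGroup (Q × V) ⋊[cgAct Q V] V

variable {Q V}

def CG.t (p : Q × V) : CG Q V := SemidirectProduct.inl (FreeGroup.of p)
def CG.v : V →* CG Q V := SemidirectProduct.inr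

theorem CG.conj (v : V) (q : Q) (u : V) :
    CG.v v * CG.t (q, u) * (CG.v v)⁻¹ = CG.t (q, v * u) := by
  have := SemidirectProduct.inl_aut (φ := cgAct Q V) v (FreeGroup.of (q, u))
  rw [cgAct_of] at this
  exact this.symm

variable {V' : Type} [Group V']

/-- the homomorphism `t(u) ↦ t(q, φ(u) a)`, `v ↦ φ v` -/
def CG.map (φ : V →* V') (q : Q) (a : V') : CG Unit V →* CG Q V' :=
  SemidirectProduct.map (FreeGroup.map (fun u => (q, φ u.2 * a))) φ (by
    intro g
    ext x
    obtain ⟨⟨⟩, u⟩ := x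
    simp [cgAct_of, mul_assoc])

theorem CG.map_t (φ : V →* V') (q : Q) (a : V') (u : V) :
    CG.map φ q a (CG.t ((), u)) = CG.t (q, φ u * a) := by
  simp [CG.map, CG.t]

theorem CG.map_v (φ : V →* V') (q : Q) (a : V') (u : V) :
    CG.map φ q a (CG.v u) = CG.v (φ u) := by
  simp [CG.map, CG.v]

theorem CG.map_injective (φ : V →* V') (hφ : Function.Injective φ) (q : Q) (a : V') :
    Function.Injective (CG.map φ q a) := by
  intro x y h
  have hl := congrArg SemidirectProduct.left h
  have hr := congrArg SemidirectProduct.right h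
  simp only [CG.map, SemidirectProduct.map_left, SemidirectProduct.map_right] at hl hr
  refine SemidirectProduct.ext (FreeGroup.map_injective ?_ hl) (hφ hr)
  rintro ⟨⟨⟩, u⟩ ⟨⟨⟩, u'⟩ h
  simp only [Prod.mk.injEq, true_and, mul_left_inj] at h
  rw [hφ h]

def CG.sub (I : Set (Q × V)) : Subgroup (CG Q V) :=
  (Subgroup.closure (FreeGroup.of '' I)).map SemidirectProduct.inl

theorem CG.mem_sub (I : Set (Q × V)) (k : CG Q V) :
    k ∈ CG.sub I ↔ k.right = 1 ∧ k.left ∈ Subgroup.closure (FreeGroup.of '' I) := by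
  constructor
  · rintro ⟨x, hx, rfl⟩
    exact ⟨rfl, hx⟩
  · rintro ⟨h1, h2⟩
    refine ⟨k.left, h2, ?_⟩
    ext <;> simp [h1]

theorem CG.t_mem_sub (I : Set (Q × V)) (p : Q × V) (hp : p ∈ I) : CG.t p ∈ CG.sub I :=
  ⟨_, Subgroup.subset_closure ⟨p, hp, rfl⟩, rfl⟩

theorem CG.sub_le (I : Set (Q × V)) (P : Subgroup (CG Q V)) (h : ∀ p ∈ I, CG.t p ∈ P) :
    CG.sub I ≤ P := by
  rw [CG.sub, Subgroup.map_le_iff_le_comap, Subgroup.closure_le]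
  rintro _ ⟨p, hp, rfl⟩
  exact h p hp

theorem CG.map_mem_sub (φ : V →* V') (hφ : Function.Injective φ) (q : Q) (a : V')
    (I : Set (Q × V')) (k : CG Unit V) :
    CG.map φ q a k ∈ CG.sub I ↔ k ∈ CG.sub {u : Unit × V | (q, φ u.2 * a) ∈ I} := by
  rw [CG.mem_sub, CG.mem_sub]
  simp only [CG.map, SemidirectProduct.map_left, SemidirectProduct.map_right]
  rw [mem_closure_of_map]
  · rw [map_eq_one_iff _ hφ]; rfl
  rintro ⟨⟨⟩, u⟩ ⟨⟨⟩, u'⟩ h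
  simp only [Prod.mk.injEq, true_and, mul_left_inj] at h
  rw [hφ h]

end CG

theorem tower {K Y ι : Type} [Group K] [Group Y] (P : Subgroup K) (f₁ f₂ : ι → Y →* K)
    (h₁ : ∀ i, Function.Injective (f₁ i)) (h₂ : ∀ i, Function.Injective (f₂ i))
    (hP : ∀ i y, f₁ i y ∈ P ↔ f₂ i y ∈ P) (l : List ι) :
    ∃ (L : Type) (_ : Group L) (e : K →* L) (r : ι → L), Function.Injective e ∧
      (∀ i ∈ l, ∀ y, r i * e (f₁ i y) = e (f₂ i y) * r i) ∧
      ∀ g, e g ∈ Subgroup.closure (e '' P ∪ r '' {i | i ∈ l}) → g ∈ P := by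
  classical
  induction l with
  | nil =>
    refine ⟨K, inferInstance, MonoidHom.id K, fun _ => 1, fun _ _ h => h, by simp, ?_⟩
    intro g hg
    simpa using hg
  | cons i l ih =>
    obtain ⟨L, _, e, r, he, hr, hm⟩ := ih
    let P' := Subgroup.closure (e '' P ∪ r '' {i | i ∈ l})
    have hP' : ∀ g, e g ∈ P' ↔ g ∈ P := fun g =>
      ⟨hm g, fun h => Subgroup.subset_closure (Or.inl ⟨g, h, rfl⟩)⟩
    obtain ⟨L', _, e', r', he', hr', hm'⟩ := exists_hnn (e.comp (f₁ i)) (e.comp (f₂ i))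
      (he.comp (h₁ i)) (he.comp (h₂ i)) P' (by
        intro y
        simp only [MonoidHom.comp_apply, hP', hP])
    refine ⟨L', inferInstance, e'.comp e, fun k => if k = i then r' else e' (r k),
      he'.comp he, ?_, ?_⟩
    · intro k hk y
      by_cases hki : k = i
      · subst hki
        simpa using hr' y
      · have : k ∈ l := by simpa [hki] using hk
        simp only [if_neg hki, MonoidHom.comp_apply, ← map_mul, hr k this y]
    · intro g hg
      apply hm
      apply hm'
      refine (Subgroup.closure_le (Subgroup.closure (insert r' (e' '' P')))).2 ?_ hg
      rintro _ (⟨k, hk, rfl⟩ | ⟨k, hk, rfl⟩)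
      · apply Subgroup.subset_closure
        right
        exact ⟨e k, Subgroup.subset_closure (Or.inl ⟨k, hk, rfl⟩), rfl⟩
      · by_cases hki : k = i
        · subst hki
          simp only [if_true]
          exact Subgroup.subset_closure (Or.inl rfl)
        · have : k ∈ l := by simpa [hki] using hk
          simp only [if_neg hki]
          apply Subgroup.subset_closure
          right
          exact ⟨r k, Subgroup.subset_closure (Or.inr ⟨k, this, rfl⟩), rfl⟩

/-- The auxiliary group `W`. -/
theorem exists_W (Γ : Type) [Group Γ] : ∃ (W : Type) (_ : Group W) (a c : Γ →* W) (τ σ ρ : W),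
    Function.Injective c ∧ σ * τ = τ * σ ∧ (∀ g, ρ * a g = a g * c g * ρ) ∧
    (∀ g h, a g * c h = c h * a g) ∧
    (∀ g, ρ * (σ * a g * σ⁻¹) = σ * a g * σ⁻¹ * ρ) ∧
    (∀ g, ρ * (τ * a g * τ⁻¹) = τ * a g * τ⁻¹ * ρ) ∧
    (∀ g, ρ * (τ * σ * a g * (τ * σ)⁻¹) = τ * σ * a g * (τ * σ)⁻¹ * ρ) := by
  classical
  let Ω := (Bool × Bool → Γ) × Γ
  let a : Γ →* Equiv.Perm Ω :=
    { toFun := fun g =>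
        { toFun := fun ω => (fun k => if k = (false, false) then g * ω.1 k else ω.1 k, ω.2)
          invFun := fun ω => (fun k => if k = (false, false) then g⁻¹ * ω.1 k else ω.1 k, ω.2)
          left_inv := by intro ω; ext k <;> simp; split_ifs <;> simp
          right_inv := by intro ω; ext k <;> simp; split_ifs <;> simp }
      map_one' := by ext ω <;> simp
      map_mul' := by intro g h; ext ω <;> simp; split_ifs <;> simp [mul_assoc] }
  let c : Γ →* Equiv.Perm Ω :=
    { toFun := fun g =>
        { toFun := fun ω => (ω.1, g * ω.2)
          invFun := fun ω => (ω.1, g⁻¹ * ω.2)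
          left_inv := by intro ω; simp
          right_inv := by intro ω; simp }
      map_one' := by ext ω <;> simp
      map_mul' := by intro g h; ext ω <;> simp [mul_assoc] }
  let τ : Equiv.Perm Ω :=
    { toFun := fun ω => (fun k => ω.1 (!k.1, k.2), ω.2)
      invFun := fun ω => (fun k => ω.1 (!k.1, k.2), ω.2)
      left_inv := by intro ω; simp
      right_inv := by intro ω; simp }
  let σ : Equiv.Perm Ω :=
    { toFun := fun ω => (fun k => ω.1 (k.1, !k.2), ω.2)
      invFun := fun ω => (fun k => ω.1 (k.1, !k.2), ω.2)
      left_inv := by intro ω; simp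
      right_inv := by intro ω; simp }
  let ρ : Equiv.Perm Ω :=
    { toFun := fun ω => (ω.1, ω.1 (false, false) * ω.2)
      invFun := fun ω => (ω.1, (ω.1 (false, false))⁻¹ * ω.2)
      left_inv := by intro ω; simp
      right_inv := by intro ω; simp }
  have iσ : ∀ ω, σ⁻¹ ω = σ ω := fun ω => rfl
  have iτ : ∀ ω, τ⁻¹ ω = τ ω := fun ω => rfl
  refine ⟨Equiv.Perm Ω, inferInstance, a, c, τ, σ, ρ, ?_, ?_, ?_, ?_, ?_, ?_, ?_⟩
  · intro g h e
    have := congrArg (fun p : Equiv.Perm Ω => (p (fun _ => 1, 1)).2) e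
    simpa [c] using this
  · ext ω <;> simp [σ, τ]
  · intro g; ext ω <;> simp [a, c, ρ, mul_assoc]
  · intro g h; ext ω <;> simp [a, c]
  · intro g; ext ω <;> simp only [Equiv.Perm.mul_apply, iσ] <;> simp [a, ρ, σ]
  · intro g; ext ω <;> simp only [Equiv.Perm.mul_apply, iτ] <;> simp [a, ρ, τ]
  · intro g; ext ω <;> simp only [Equiv.Perm.mul_apply, mul_inv_rev, iσ, iτ] <;>
      simp [a, ρ, σ, τ]

end BHP

/-! ### Part 2b: the presentation -/
namespace BHP
set_option linter.unusedSectionVars false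

abbrev VG (κ : Type) (m : ℕ) : Type := (κ → Multiplicative ℤ) × FreeGroup (Fin m)

structure Tran (Q κ : Type) (m : ℕ) where
  src : Q
  dst : Q
  m₁ : κ → ℤ
  m₂ : κ → ℤ
  a : κ → ℤ
  c : κ → ℤ
  h₁ : ∀ k, m₁ k ≠ 0
  h₂ : ∀ k, m₂ k ≠ 0
  g : FreeGroup (Fin m)

section
variable {Q κ ι : Type} {m : ℕ}

/-- scaling -/
def sc (s : κ → ℤ) : VG κ m →* VG κ m where
  toFun v := (fun k => v.1 k ^ s k, v.2)
  map_one' := by ext <;> simp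
  map_mul' u v := by ext <;> simp [mul_zpow]

theorem sc_injective (s : κ → ℤ) (hs : ∀ k, s k ≠ 0) :
    Function.Injective (sc (m := m) s) := by
  rintro ⟨z, f⟩ ⟨z', f'⟩ h
  simp only [sc, MonoidHom.coe_mk, OneHom.coe_mk, Prod.mk.injEq] at h
  refine Prod.ext (funext fun k => ?_) h.2
  have := congrFun h.1 k
  have h2 : s k * Multiplicative.toAdd (z k) = s k * Multiplicative.toAdd (z' k) := by
    have := congrArg Multiplicative.toAdd this
    simpa [toAdd_zpow] using this
  exact Multiplicative.toAdd.injective (mul_left_cancel₀ (hs k) h2)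

def ofZ (z : κ → ℤ) : κ → Multiplicative ℤ := fun k => Multiplicative.ofAdd (z k)

def Tran.v₁ (T : Tran Q κ m) : VG κ m := (ofZ T.a, 1)
def Tran.v₂ (T : Tran Q κ m) : VG κ m := (ofZ T.c, T.g)

def TStep (T : ι → Tran Q κ m) (p p' : Q × VG κ m) : Prop :=
  ∃ i u, p = ((T i).src, sc (T i).m₁ u * (T i).v₁) ∧ p' = ((T i).dst, sc (T i).m₂ u * (T i).v₂)

def Conn (T : ι → Tran Q κ m) : Q × VG κ m → Q × VG κ m → Prop := Relation.EqvGen (TStep T)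

inductive Gen (Q κ ι : Type) (m : ℕ) : Type
  | x (k : κ) | b (i : Fin m) | t (q : Q) | r (i : ι) | s
  | a (i : Fin m) | c (i : Fin m) | τ | σ | ρ | z

instance [Finite Q] [Finite κ] [Finite ι] : Finite (Gen Q κ ι m) := by
  let f : Gen Q κ ι m → κ ⊕ Fin m ⊕ Q ⊕ ι ⊕ Fin m ⊕ Fin m ⊕ Fin 5 := fun g => match g with
    | .x k => .inl k
    | .b i => .inr (.inl i)
    | .t q => .inr (.inr (.inl q))
    | .r i => .inr (.inr (.inr (.inl i)))
    | .a i => .inr (.inr (.inr (.inr (.inl i))))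
    | .c i => .inr (.inr (.inr (.inr (.inr (.inl i)))))
    | .s => .inr (.inr (.inr (.inr (.inr (.inr 0)))))
    | .τ => .inr (.inr (.inr (.inr (.inr (.inr 1)))))
    | .σ => .inr (.inr (.inr (.inr (.inr (.inr 2)))))
    | .ρ => .inr (.inr (.inr (.inr (.inr (.inr 3)))))
    | .z => .inr (.inr (.inr (.inr (.inr (.inr 4)))))
  refine Finite.of_injective f ?_
  rintro (_ | _ | _ | _ | _ | _ | _ | _ | _ | _ | _) (_ | _ | _ | _ | _ | _ | _ | _ | _ | _ | _) h <;>
    simp_all [f]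

def Gen.isL : Gen Q κ ι m → Prop
  | .x _ => True | .b _ => True | .t _ => True | .r _ => True | .s => True | _ => False
def Gen.isW : Gen Q κ ι m → Prop
  | .a _ => True | .c _ => True | .τ => True | .σ => True | .ρ => True | _ => False

section words
variable {H : Type} [Group H] [Fintype κ] (γ : Gen Q κ ι m → H)

noncomputable def xw (z : κ → Multiplicative ℤ) : H :=
  (Finset.univ.toList.map fun k => γ (.x k) ^ (Multiplicative.toAdd (z k))).prod
def bw : FreeGroup (Fin m) →* H := FreeGroup.lift (fun i => γ (.b i))
noncomputable def vw (v : VG κ m) : H := xw γ v.1 * bw γ v.2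
noncomputable def tw (q : Q) (v : VG κ m) : H := vw γ v * γ (.t q) * (vw γ v)⁻¹

variable {H' : Type} [Group H'] (f : H →* H')
theorem map_xw (z) : f (xw γ z) = xw (f ∘ γ) z := by
  simp [xw, map_list_prod, Function.comp_def]
theorem map_bw (z) : f (bw γ z) = bw (f ∘ γ) z := by
  have : f.comp (bw γ) = bw (f ∘ γ) := by ext; simp [bw]
  exact DFunLike.congr_fun this z
theorem map_vw (z) : f (vw γ z) = vw (f ∘ γ) z := by
  simp [vw, map_xw, map_bw]
theorem map_tw (q z) : f (tw γ q z) = tw (f ∘ γ) q z := by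
  simp [tw, map_vw]

open Gen Set in
/-- The equations between generators. -/
noncomputable def eqs (T : ι → Tran Q κ m) (q₀ : Q) (z₀ : κ → Multiplicative ℤ) : Set (H × H) :=
  range (fun p : κ × κ => (γ (x p.1) * γ (x p.2), γ (x p.2) * γ (x p.1))) ∪
  range (fun p : κ × Fin m => (γ (x p.1) * γ (b p.2), γ (b p.2) * γ (x p.1))) ∪
  range (fun p : ι × κ => (γ (r p.1) * γ (x p.2) ^ (T p.1).m₁ p.2,
    γ (x p.2) ^ (T p.1).m₂ p.2 * γ (r p.1))) ∪
  range (fun p : ι × Fin m => (γ (r p.1) * γ (b p.2), γ (b p.2) * γ (r p.1))) ∪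
  range (fun i : ι => (γ (r i) * tw γ (T i).src (T i).v₁, tw γ (T i).dst (T i).v₂ * γ (r i))) ∪
  range (fun i : ι => (γ s * γ (r i), γ (r i) * γ s)) ∪
  {(γ s * tw γ q₀ (z₀, 1), tw γ q₀ (z₀, 1) * γ s)} ∪
  range (fun p : {g : Gen Q κ ι m // g.isL} × {g : Gen Q κ ι m // g.isW} =>
    (γ p.1.1 * γ p.2.1, γ p.2.1 * γ p.1.1)) ∪
  range (fun i : Fin m => (γ z * γ (b i), γ (b i) * γ (a i) * γ z)) ∪
  {(γ z * tw γ q₀ (z₀, 1), tw γ q₀ (z₀, 1) * γ τ * γ z)} ∪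
  {(γ z * γ s, γ s * γ σ * γ z)} ∪
  {(γ σ * γ τ, γ τ * γ σ)} ∪
  range (fun i : Fin m => (γ ρ * γ (a i), γ (a i) * γ (c i) * γ ρ)) ∪
  range (fun p : Fin m × Fin m => (γ (a p.1) * γ (c p.2), γ (c p.2) * γ (a p.1))) ∪
  range (fun i : Fin m => (γ ρ * (γ σ * γ (a i) * (γ σ)⁻¹), γ σ * γ (a i) * (γ σ)⁻¹ * γ ρ)) ∪
  range (fun i : Fin m => (γ ρ * (γ τ * γ (a i) * (γ τ)⁻¹), γ τ * γ (a i) * (γ τ)⁻¹ * γ ρ)) ∪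
  range (fun i : Fin m => (γ ρ * (γ τ * γ σ * γ (a i) * (γ τ * γ σ)⁻¹),
    γ τ * γ σ * γ (a i) * (γ τ * γ σ)⁻¹ * γ ρ))

theorem eqs_finite [Finite Q] [Finite ι] (T : ι → Tran Q κ m) (q₀ : Q)
    (z₀ : κ → Multiplicative ℤ) : (eqs γ T q₀ z₀).Finite := by
  unfold eqs
  exact Set.toFinite _

theorem eqs_map (T : ι → Tran Q κ m) (q₀ : Q)
    (z₀ : κ → Multiplicative ℤ) : eqs (f ∘ γ) T q₀ z₀ = Prod.map f f '' eqs γ T q₀ z₀ := by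
  unfold eqs
  simp only [Set.image_union, ← Set.range_comp, Set.image_singleton, Prod.map, Function.comp_def,
    map_mul, map_zpow, map_inv, map_tw]

structure Good (T : ι → Tran Q κ m) (q₀ : Q) (z₀ : κ → Multiplicative ℤ) : Prop where
  xx : ∀ k l, γ (.x k) * γ (.x l) = γ (.x l) * γ (.x k)
  xb : ∀ k i, γ (.x k) * γ (.b i) = γ (.b i) * γ (.x k)
  rx : ∀ i k, γ (.r i) * γ (.x k) ^ (T i).m₁ k = γ (.x k) ^ (T i).m₂ k * γ (.r i)
  rb : ∀ i j, γ (.r i) * γ (.b j) = γ (.b j) * γ (.r i)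
  rt : ∀ i, γ (.r i) * tw γ (T i).src (T i).v₁ = tw γ (T i).dst (T i).v₂ * γ (.r i)
  sr : ∀ i, γ .s * γ (.r i) = γ (.r i) * γ .s
  st : γ .s * tw γ q₀ (z₀, 1) = tw γ q₀ (z₀, 1) * γ .s
  lw : ∀ u v : Gen Q κ ι m, u.isL → v.isW → γ u * γ v = γ v * γ u
  zb : ∀ i, γ .z * γ (.b i) = γ (.b i) * γ (.a i) * γ .z
  zt : γ .z * tw γ q₀ (z₀, 1) = tw γ q₀ (z₀, 1) * γ .τ * γ .z
  zs : γ .z * γ .s = γ .s * γ .σ * γ .z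
  στ : γ .σ * γ .τ = γ .τ * γ .σ
  ρa : ∀ i, γ .ρ * γ (.a i) = γ (.a i) * γ (.c i) * γ .ρ
  ac : ∀ i j, γ (.a i) * γ (.c j) = γ (.c j) * γ (.a i)
  ρ₁ : ∀ i, γ .ρ * (γ .σ * γ (.a i) * (γ .σ)⁻¹) = γ .σ * γ (.a i) * (γ .σ)⁻¹ * γ .ρ
  ρ₂ : ∀ i, γ .ρ * (γ .τ * γ (.a i) * (γ .τ)⁻¹) = γ .τ * γ (.a i) * (γ .τ)⁻¹ * γ .ρ
  ρ₃ : ∀ i, γ .ρ * (γ .τ * γ .σ * γ (.a i) * (γ .τ * γ .σ)⁻¹) =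
    γ .τ * γ .σ * γ (.a i) * (γ .τ * γ .σ)⁻¹ * γ .ρ

theorem good_iff (T : ι → Tran Q κ m) (q₀ : Q) (z₀ : κ → Multiplicative ℤ) :
    Good γ T q₀ z₀ ↔ ∀ p ∈ eqs γ T q₀ z₀, p.1 = p.2 := by
  unfold eqs
  simp only [Set.mem_union, or_imp, forall_and, Set.forall_mem_range, Set.mem_singleton_iff,
    forall_eq, Prod.forall, Subtype.forall]
  constructor
  · intro h
    obtain ⟨h1, h2, h3, h4, h5, h6, h7, h8, h9, h10, h11, h12, h13, h14, h15, h16, h17⟩ := h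
    refine ⟨⟨⟨⟨⟨⟨⟨⟨⟨⟨⟨⟨⟨⟨⟨⟨?_, ?_⟩, ?_⟩, ?_⟩, ?_⟩, ?_⟩, ?_⟩, ?_⟩, ?_⟩, ?_⟩, ?_⟩, ?_⟩, ?_⟩, ?_⟩, ?_⟩,
      ?_⟩, ?_⟩ <;> grind
  · rintro ⟨⟨⟨⟨⟨⟨⟨⟨⟨⟨⟨⟨⟨⟨⟨⟨h1, h2⟩, h3⟩, h4⟩, h5⟩, h6⟩, h7⟩, h8⟩, h9⟩, h10⟩, h11⟩, h12⟩, h13⟩, h14⟩,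
      h15⟩, h16⟩, h17⟩
    constructor <;> grind

end words
end
end BHP

/-! ### Part 2c: consequences of the relations -/
namespace BHP
set_option linter.unusedSectionVars false

theorem commute_lift {m : ℕ} {H : Type} [Group H] (x : H) (u : Fin m → H)
    (h : ∀ i, x * u i = u i * x) (w : FreeGroup (Fin m)) : Commute x (FreeGroup.lift u w) := by
  have : Subgroup.centralizer {x} ≥ (FreeGroup.lift u).range := by
    rw [FreeGroup.range_lift_eq_closure, ge_iff_le, Subgroup.closure_le]
    rintro _ ⟨i, rfl⟩
    exact Subgroup.mem_centralizer_singleton_iff.2 (h i).symm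
  exact (Subgroup.mem_centralizer_singleton_iff.1 (this ⟨w, rfl⟩)).symm

/-- conjugating a homomorphism from a free group -/
theorem conj_lift {m : ℕ} {H : Type} [Group H] (r : H) (f g : FreeGroup (Fin m) →* H)
    (h : ∀ i, r * f (FreeGroup.of i) = g (FreeGroup.of i) * r) (w : FreeGroup (Fin m)) :
    r * f w = g w * r := by
  have : (MulAut.conj r).toMonoidHom.comp f = g := by
    ext i
    simp [h]
  rw [← this]; simp

section
variable {Q κ ι : Type} {m : ℕ} {H : Type} [Group H] [Fintype κ] {γ : Gen Q κ ι m → H}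
  {T : ι → Tran Q κ m} {q₀ : Q} {z₀ : κ → Multiplicative ℤ}

theorem exists_xhom (h : ∀ k l, γ (.x k) * γ (.x l) = γ (.x l) * γ (.x k)) :
    ∃ X : (κ → Multiplicative ℤ) →* H, (∀ z, X z = xw γ z) := by
  classical
  have hc : Pairwise fun i j : κ => ∀ (x y : Multiplicative ℤ),
      Commute (zpowersHom H (γ (.x i)) x) (zpowersHom H (γ (.x j)) y) := by
    intro i j _ x y
    simp only [zpowersHom_apply]
    exact Commute.zpow_zpow (h i j) _ _
  refine ⟨MonoidHom.noncommPiCoprod (fun k => zpowersHom H (γ (.x k))) hc, ?_⟩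
  intro z
  simp only [MonoidHom.noncommPiCoprod, MonoidHom.coe_mk, OneHom.coe_mk, xw]
  unfold Finset.noncommProd
  have : Multiset.map (fun i => (zpowersHom H (γ (.x i))) (z i)) (Finset.univ : Finset κ).val =
    ((Finset.univ.toList.map fun k => γ (.x k) ^ (Multiplicative.toAdd (z k)) : List H) :
      Multiset H) := by
    rw [← Multiset.map_coe, Finset.coe_toList]
    rfl
  simp only [this, Multiset.noncommProd_coe]

theorem exists_vhom' (hxx : ∀ k l, γ (.x k) * γ (.x l) = γ (.x l) * γ (.x k))
    (hxb : ∀ k i, γ (.x k) * γ (.b i) = γ (.b i) * γ (.x k)) :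
    ∃ X : VG κ m →* H, (∀ z, X z = vw γ z) := by
  obtain ⟨X, hX⟩ := exists_xhom hxx
  have hc : ∀ z f, Commute (X z) (bw γ f) := by
    intro z f
    apply commute_lift
    intro i
    rw [hX, xw]
    refine Commute.list_prod_left _ _ ?_
    intro y hy
    simp only [List.mem_map] at hy
    obtain ⟨k, _, rfl⟩ := hy
    exact Commute.zpow_left (hxb k i) _
  refine ⟨MonoidHom.noncommCoprod X (bw γ) hc, ?_⟩
  intro z
  simp [vw, hX]

theorem exists_vhom (h : Good γ T q₀ z₀) :
    ∃ X : VG κ m →* H, (∀ z, X z = vw γ z) := exists_vhom' h.xx h.xb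

theorem vhom_ext [DecidableEq κ] {X Y : VG κ m →* H}
    (h1 : ∀ k, X (Pi.mulSingle (M := fun _ => Multiplicative ℤ) k (Multiplicative.ofAdd 1), 1) =
      Y (Pi.mulSingle (M := fun _ => Multiplicative ℤ) k (Multiplicative.ofAdd 1), 1))
    (h2 : ∀ i, X (1, FreeGroup.of i) = Y (1, FreeGroup.of i)) : X = Y := by
  have e1 : X.comp (MonoidHom.inl _ _) = Y.comp (MonoidHom.inl _ _) := by
    apply MonoidHom.pi_ext
    intro k x
    have : (X.comp (MonoidHom.inl _ _)).comp
        (MonoidHom.mulSingle (fun _ : κ => Multiplicative ℤ) k) =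
        (Y.comp (MonoidHom.inl _ _)).comp
        (MonoidHom.mulSingle (fun _ : κ => Multiplicative ℤ) k) := by
      apply MonoidHom.ext_mint
      exact h1 k
    exact DFunLike.congr_fun this x
  have e2 : X.comp (MonoidHom.inr _ _) = Y.comp (MonoidHom.inr _ _) := by
    ext i
    exact h2 i
  ext ⟨z, f⟩
  have : ((z, f) : VG κ m) = (z, 1) * (1, f) := by simp
  rw [this, map_mul, map_mul]
  exact congrArg₂ _ (DFunLike.congr_fun e1 z) (DFunLike.congr_fun e2 f)

theorem xw_single [DecidableEq κ] (k : κ) (n : ℤ) :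
    xw γ (Pi.mulSingle (M := fun _ => Multiplicative ℤ) k (Multiplicative.ofAdd n)) =
      γ (.x k) ^ n := by
  unfold xw
  have hn : (Finset.univ : Finset κ).toList.Nodup := Finset.nodup_toList _
  have hk : k ∈ (Finset.univ : Finset κ).toList := by simp
  generalize (Finset.univ : Finset κ).toList = l at hn hk
  have key : ∀ l : List κ, k ∉ l → (l.map fun j => γ (.x j) ^ (Multiplicative.toAdd
      (Pi.mulSingle (M := fun _ => Multiplicative ℤ) k (Multiplicative.ofAdd n) j))).prod = 1 := by
    intro l hl
    apply List.prod_eq_one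
    intro y hy
    simp only [List.mem_map] at hy
    obtain ⟨j, hj, rfl⟩ := hy
    have : j ≠ k := by rintro rfl; exact hl hj
    simp [Pi.mulSingle_eq_of_ne this]
  induction l with
  | nil => simp at hk
  | cons j l ih =>
    rw [List.map_cons, List.prod_cons]
    by_cases hj : j = k
    · subst hj
      rw [key l (List.nodup_cons.1 hn).1]
      simp
    · have : k ∈ l := by simpa [Ne.symm hj] using hk
      rw [ih (List.nodup_cons.1 hn).2 this]
      simp [Pi.mulSingle_eq_of_ne hj]

theorem good_rv (h : Good γ T q₀ z₀) (i : ι) (v : VG κ m) :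
    γ (.r i) * vw γ (sc (T i).m₁ v) = vw γ (sc (T i).m₂ v) * γ (.r i) := by
  classical
  obtain ⟨X, hX⟩ := exists_vhom h
  have e : (MulAut.conj (γ (.r i))).toMonoidHom.comp (X.comp (sc (T i).m₁)) =
      X.comp (sc (T i).m₂) := by
    have hs : ∀ (s : κ → ℤ) k, (sc s (Pi.mulSingle (M := fun _ => Multiplicative ℤ) k
        (Multiplicative.ofAdd 1), 1) : VG κ m) = (Pi.mulSingle (M := fun _ => Multiplicative ℤ) k
        (Multiplicative.ofAdd (s k)), 1) := by
      intro s k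
      simp only [sc, MonoidHom.coe_mk, OneHom.coe_mk, Prod.mk.injEq, and_true]
      funext j
      by_cases hj : j = k
      · subst hj; simp [← ofAdd_zsmul]
      · simp [Pi.mulSingle_eq_of_ne hj]
    apply vhom_ext
    · intro k
      simp only [MonoidHom.comp_apply, hX, hs]
      simp only [vw, xw_single, map_one, mul_one]
      simp [h.rx]
    · intro j
      have hs2 : ∀ (s : κ → ℤ), (sc s (1, FreeGroup.of j) : VG κ m) = (1, FreeGroup.of j) := by
        intro s; ext <;> simp [sc]
      simp only [MonoidHom.comp_apply, hX, hs2]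
      simp only [vw]
      simp [xw, bw, h.rb]
  have := DFunLike.congr_fun e v
  simp only [MonoidHom.comp_apply, hX] at this
  rw [← this]; simp

theorem good_step (h : Good γ T q₀ z₀) (i : ι) (u : VG κ m) :
    γ (.r i) * tw γ (T i).src (sc (T i).m₁ u * (T i).v₁) =
      tw γ (T i).dst (sc (T i).m₂ u * (T i).v₂) * γ (.r i) := by
  obtain ⟨X, hX⟩ := exists_vhom h
  have h1 := good_rv h i u
  have h2 := h.rt i
  simp only [tw, ← hX, map_mul] at *
  have k1 : X (sc (T i).m₁ u) = (γ (.r i))⁻¹ * X (sc (T i).m₂ u) * γ (.r i) := by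
    rw [mul_assoc, ← h1]; simp
  have k2 : X (T i).v₁ * γ (.t (T i).src) * (X (T i).v₁)⁻¹ =
      (γ (.r i))⁻¹ * (X (T i).v₂ * γ (.t (T i).dst) * (X (T i).v₂)⁻¹) * γ (.r i) := by
    rw [mul_assoc (γ (.r i))⁻¹, ← h2]; simp
  have k3 : ∀ a b t : H, a * b * t * (a * b)⁻¹ = a * (b * t * b⁻¹) * a⁻¹ := by
    intro a b t; group
  rw [k3, k3, k2, k1]
  group

theorem good_conn (h : Good γ T q₀ z₀) (p p' : Q × VG κ m) (hp : Conn T p p') :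
    tw γ p.1 p.2 ∈ Subgroup.closure (insert (tw γ q₀ (z₀, 1)) (Set.range fun i => γ (.r i))) ↔
    tw γ p'.1 p'.2 ∈ Subgroup.closure (insert (tw γ q₀ (z₀, 1)) (Set.range fun i => γ (.r i))) := by
  induction hp with
  | rel x y hxy =>
    obtain ⟨i, u, rfl, rfl⟩ := hxy
    have hs := good_step h i u
    have hr : γ (.r i) ∈ Subgroup.closure
        (insert (tw γ q₀ (z₀, 1)) (Set.range fun i => γ (.r i))) :=
      Subgroup.subset_closure (Or.inr ⟨i, rfl⟩)
    rw [← Subgroup.mul_mem_cancel_left _ hr]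
    simp only at hs ⊢
    rw [hs, Subgroup.mul_mem_cancel_right _ hr]
  | refl => rfl
  | symm _ _ _ ih => exact ih.symm
  | trans _ _ _ _ _ ih1 ih2 => exact ih1.trans ih2

theorem good_s (h : Good γ T q₀ z₀) (f : FreeGroup (Fin m))
    (hf : Conn T (q₀, (z₀, 1)) (q₀, (z₀, f))) :
    γ .s * tw γ q₀ (z₀, f) = tw γ q₀ (z₀, f) * γ .s := by
  have h1 := (good_conn h _ _ hf).1 (Subgroup.subset_closure (Or.inl rfl))
  have h2 : Subgroup.closure (insert (tw γ q₀ (z₀, 1)) (Set.range fun i => γ (.r i))) ≤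
      Subgroup.centralizer {γ .s} := by
    rw [Subgroup.closure_le]
    rintro _ (rfl | ⟨i, rfl⟩)
    · exact Subgroup.mem_centralizer_singleton_iff.2 h.st.symm
    · exact Subgroup.mem_centralizer_singleton_iff.2 (h.sr i).symm
  exact (Subgroup.mem_centralizer_singleton_iff.1 (h2 h1)).symm

def aw (γ : Gen Q κ ι m → H) : FreeGroup (Fin m) →* H := FreeGroup.lift (fun i => γ (.a i))
def cw (γ : Gen Q κ ι m → H) : FreeGroup (Fin m) →* H := FreeGroup.lift (fun i => γ (.c i))

/-- subgroup generated by the `L` generators commutes with the `W` generators -/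
theorem good_LW (h : Good γ T q₀ z₀) (x y : H) (hx : x ∈ Subgroup.closure (γ '' {g | g.isL}))
    (hy : y ∈ Subgroup.closure (γ '' {g | g.isW})) : x * y = y * x := by
  have h1 : Subgroup.closure (γ '' {g | g.isL}) ≤
      Subgroup.centralizer (Subgroup.closure (γ '' {g | g.isW})) := by
    rw [Subgroup.centralizer_closure, Subgroup.closure_le]
    rintro _ ⟨g, hg, rfl⟩
    rw [SetLike.mem_coe, Subgroup.mem_centralizer_iff]
    rintro _ ⟨g', hg', rfl⟩
    exact (h.lw _ _ hg hg').symm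
  exact (Subgroup.mem_centralizer_iff.1 (h1 hx) y hy).symm

theorem L_gen {g : Gen Q κ ι m} (hg : g.isL) : γ g ∈ Subgroup.closure (γ '' {g | g.isL}) :=
  Subgroup.subset_closure ⟨g, hg, rfl⟩
theorem W_gen {g : Gen Q κ ι m} (hg : g.isW) : γ g ∈ Subgroup.closure (γ '' {g | g.isW}) :=
  Subgroup.subset_closure ⟨g, hg, rfl⟩

theorem lift_mem {S : Subgroup H} (u : Fin m → H) (hu : ∀ i, u i ∈ S) (w : FreeGroup (Fin m)) :
    FreeGroup.lift u w ∈ S := by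
  have : (FreeGroup.lift u).range ≤ S := by
    rw [FreeGroup.range_lift_eq_closure, Subgroup.closure_le]
    rintro _ ⟨i, rfl⟩
    exact hu i
  exact this ⟨w, rfl⟩

theorem tw_mem_L (q : Q) (v : VG κ m) : tw γ q v ∈ Subgroup.closure (γ '' {g | g.isL}) := by
  have hv : vw γ v ∈ Subgroup.closure (γ '' {g | g.isL}) := by
    refine mul_mem (Subgroup.list_prod_mem _ ?_) (lift_mem _ (fun i => L_gen (by trivial)) _)
    intro y hy
    simp only [List.mem_map] at hy
    obtain ⟨k, _, rfl⟩ := hy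
    exact zpow_mem (L_gen (by trivial)) _
  exact mul_mem (mul_mem hv (L_gen (by trivial))) (inv_mem hv)

theorem good_forces (h : Good γ T q₀ z₀) (f : FreeGroup (Fin m))
    (hf : Conn T (q₀, (z₀, 1)) (q₀, (z₀, f))) : cw γ f = 1 := by
  obtain ⟨X, hX⟩ := exists_vhom h
  have hba : ∀ f g, bw γ f * aw γ g = aw γ g * bw γ f := fun f g =>
    good_LW h _ _ (lift_mem _ (fun i => L_gen (by trivial)) _)
      (lift_mem _ (fun i => W_gen (by trivial)) _)
  have hac : ∀ f g, aw γ f * cw γ g = cw γ g * aw γ f := by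
    intro f g
    refine commute_lift _ _ (fun i => ?_) _
    exact (commute_lift _ _ (fun j => (h.ac j i).symm) f).symm
  -- conjugation by z
  have hzb : γ .z * bw γ f = bw γ f * aw γ f * γ .z := by
    have := conj_lift (γ .z) (bw γ)
      ((MonoidHom.noncommCoprod (bw γ) (aw γ) hba).comp
        ((MonoidHom.id _).prod (MonoidHom.id _))) (by
          intro i
          simp [bw, aw, h.zb]) f
    exact this
  have hρa : γ .ρ * aw γ f = aw γ f * cw γ f * γ .ρ := by
    have := conj_lift (γ .ρ) (aw γ)
      ((MonoidHom.noncommCoprod (aw γ) (cw γ) hac).comp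
        ((MonoidHom.id _).prod (MonoidHom.id _))) (by
          intro i
          simp [cw, aw, h.ρa]) f
    exact this
  have hρ : ∀ y : H, (∀ i, γ .ρ * (y * γ (.a i) * y⁻¹) = y * γ (.a i) * y⁻¹ * γ .ρ) →
      γ .ρ * (y * aw γ f * y⁻¹) = y * aw γ f * y⁻¹ * γ .ρ := by
    intro y hy
    have := conj_lift (γ .ρ) ((MulAut.conj y).toMonoidHom.comp (aw γ))
      ((MulAut.conj y).toMonoidHom.comp (aw γ)) (by
          intro i
          simp [aw, hy]) f
    simpa using this
  have e1 := hρ _ h.ρ₁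
  have e2 := hρ _ h.ρ₂
  have e3 := hρ _ h.ρ₃
  have hs := good_s h f hf
  have htw : tw γ q₀ (z₀, f) = bw γ f * tw γ q₀ (z₀, 1) * (bw γ f)⁻¹ := by
    have h0 : vw γ (1, f) = bw γ f := by simp [vw, xw]
    have : ((z₀, f) : VG κ m) = (1, f) * (z₀, 1) := by simp
    simp only [tw, ← hX] at *
    rw [this, map_mul, h0]
    group
  set B := bw γ f
  set t := tw γ q₀ (z₀, 1)
  set A := aw γ f
  set C := cw γ f
  set τ := γ .τ
  set σ := γ .σ
  set ρ := γ .ρ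
  set s := γ .s
  set z := γ .z
  have hzt : z * t = t * τ * z := h.zt
  have hzs : z * s = s * σ * z := h.zs
  have hst : σ * τ = τ * σ := h.στ
  have cB : B ∈ Subgroup.closure (γ '' {g | g.isL}) := lift_mem _ (fun i => L_gen (by trivial)) _
  have ct : t ∈ Subgroup.closure (γ '' {g | g.isL}) := tw_mem_L _ _
  have cs : s ∈ Subgroup.closure (γ '' {g | g.isL}) := L_gen (by trivial)
  have wA : A ∈ Subgroup.closure (γ '' {g | g.isW}) := lift_mem _ (fun i => W_gen (by trivial)) _
  have wτ : τ ∈ Subgroup.closure (γ '' {g | g.isW}) := W_gen (by trivial)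
  have wσ : σ ∈ Subgroup.closure (γ '' {g | g.isW}) := W_gen (by trivial)
  -- conjugate relation
  have hzu : z * (B * t * B⁻¹) * z⁻¹ = (B * t * B⁻¹) * (A * τ * A⁻¹) := by
    have k1 : z * B * z⁻¹ = B * A := by rw [hzb]; group
    have k2 : z * t * z⁻¹ = t * τ := by rw [hzt]; group
    have : z * (B * t * B⁻¹) * z⁻¹ = (z * B * z⁻¹) * (z * t * z⁻¹) * (z * B * z⁻¹)⁻¹ := by group
    rw [this, k1, k2]
    have l1 : A * t = t * A := (good_LW h _ _ ct wA).symm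
    have l2 : (A * τ * A⁻¹) * B⁻¹ = B⁻¹ * (A * τ * A⁻¹) :=
      (good_LW h _ _ (inv_mem cB) (mul_mem (mul_mem wA wτ) (inv_mem wA))).symm
    calc B * A * (t * τ) * (B * A)⁻¹ = B * (A * t) * τ * A⁻¹ * B⁻¹ := by group
      _ = B * t * ((A * τ * A⁻¹) * B⁻¹) := by rw [l1]; group
      _ = _ := by rw [l2]; group
  have hzs' : z * s * z⁻¹ = s * σ := by rw [hzs]; group
  set D := B * t * B⁻¹
  set E := A * τ * A⁻¹
  have cD : D ∈ Subgroup.closure (γ '' {g | g.isL}) := mul_mem (mul_mem cB ct) (inv_mem cB)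
  have wE : E ∈ Subgroup.closure (γ '' {g | g.isW}) := mul_mem (mul_mem wA wτ) (inv_mem wA)
  have hσE : σ * E = E * σ := by
    have hsD : s * D = D * s := by rw [← htw]; exact hs
    have k : (z * s * z⁻¹) * (z * D * z⁻¹) = (z * D * z⁻¹) * (z * s * z⁻¹) := by
      have : z * (s * D) * z⁻¹ = z * (D * s) * z⁻¹ := by rw [hsD]
      calc _ = z * (s * D) * z⁻¹ := by group
        _ = z * (D * s) * z⁻¹ := this
        _ = _ := by group
    rw [hzs', hzu] at k
    have m1 : D * σ = σ * D := good_LW h _ _ cD wσ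
    have m2 : s * E = E * s := good_LW h _ _ cs wE
    have k' : s * D * (σ * E) = s * D * (E * σ) := by
      calc s * D * (σ * E) = s * (D * σ) * E := by group
        _ = s * σ * (D * E) := by rw [m1]; group
        _ = D * E * (s * σ) := k
        _ = D * (E * s) * σ := by group
        _ = (D * s) * (E * σ) := by rw [← m2]; group
        _ = s * D * (E * σ) := by rw [hsD]
    exact mul_left_cancel k'
  have hA : A = (σ * A * σ⁻¹) * (τ * σ * A * (τ * σ)⁻¹)⁻¹ * (τ * A * τ⁻¹) := by
    have hσE' : E = σ * E * σ⁻¹ := by rw [hσE]; group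
    have hτσ : σ * τ * σ⁻¹ = τ := by rw [hst]; group
    have : A = E * τ⁻¹ * (τ * A * τ⁻¹) * (τ * τ⁻¹) := by simp only [E]; group
    have h5 : τ * σ = σ * τ := hst.symm
    calc A = E * τ⁻¹ * (τ * A * τ⁻¹) := by simp only [E]; group
      _ = (σ * E * σ⁻¹) * τ⁻¹ * (τ * A * τ⁻¹) := by rw [← hσE']
      _ = (σ * A * σ⁻¹) * (σ * τ * A⁻¹ * (σ * τ)⁻¹) * (σ * τ * σ⁻¹) * τ⁻¹ * (τ * A * τ⁻¹) := by
        simp only [E]; group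
      _ = _ := by rw [hτσ, h5]; group
  have hρA : ρ * A = A * ρ := by
    have c1 : Commute ρ (σ * A * σ⁻¹) := e1
    have c2 : Commute ρ (τ * A * τ⁻¹) := e2
    have c3 : Commute ρ (τ * σ * A * (τ * σ)⁻¹) := e3
    have := (c1.mul_right c3.inv_right).mul_right c2
    rw [← hA] at this
    exact this
  rw [hρA] at hρa
  have := mul_right_cancel hρa
  exact (left_eq_mul.1 this)

end
end BHP

/-! ### Part 2d: the model -/
namespace BHP
set_option linter.unusedSectionVars false

section
variable {Q κ ι : Type} {m : ℕ} [Fintype κ] [Fintype ι]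
  (T : ι → Tran Q κ m) (q₀ : Q) (z₀ : κ → Multiplicative ℤ)

def sgl [DecidableEq κ] (k : κ) : VG κ m :=
  (Pi.mulSingle (M := fun _ => Multiplicative ℤ) k (Multiplicative.ofAdd 1), 1)

theorem sc_sgl [DecidableEq κ] (s : κ → ℤ) (k : κ) :
    (sc s (sgl k) : VG κ m) = (sgl k) ^ (s k) := by
  simp only [sc, sgl, MonoidHom.coe_mk, OneHom.coe_mk]
  refine Prod.ext (funext fun j => ?_) (by simp)
  by_cases hj : j = k
  · subst hj; simp
  · simp [Pi.mulSingle_eq_of_ne hj]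

theorem exists_L : ∃ (L : Type) (_ : Group L) (e : CG Q (VG κ m) →* L) (r : ι → L)
    (P : Subgroup L), Function.Injective e ∧
    (∀ i u, r i * e (CG.v (sc (T i).m₁ u)) = e (CG.v (sc (T i).m₂ u)) * r i) ∧
    (∀ i, r i * e (CG.t ((T i).src, (T i).v₁)) = e (CG.t ((T i).dst, (T i).v₂)) * r i) ∧
    (∀ i, r i ∈ P) ∧
    (∀ k, e k ∈ P ↔ k ∈ CG.sub {p | Conn T (q₀, (z₀, 1)) p}) := by
  obtain ⟨L, _, e, r, he, hr, hm⟩ := tower (CG.sub {p | Conn T (q₀, (z₀, 1)) p})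
    (fun i => CG.map (sc (T i).m₁) (T i).src (T i).v₁)
    (fun i => CG.map (sc (T i).m₂) (T i).dst (T i).v₂)
    (fun i => CG.map_injective _ (sc_injective _ (T i).h₁) _ _)
    (fun i => CG.map_injective _ (sc_injective _ (T i).h₂) _ _)
    (by
      intro i y
      rw [CG.map_mem_sub _ (sc_injective _ (T i).h₁), CG.map_mem_sub _ (sc_injective _ (T i).h₂)]
      have : {u : Unit × VG κ m | ((T i).src, sc (T i).m₁ u.2 * (T i).v₁) ∈
          {p | Conn T (q₀, (z₀, 1)) p}} = {u : Unit × VG κ m |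
          ((T i).dst, sc (T i).m₂ u.2 * (T i).v₂) ∈ {p | Conn T (q₀, (z₀, 1)) p}} := by
        ext u
        have hs : Conn T ((T i).src, sc (T i).m₁ u.2 * (T i).v₁)
          ((T i).dst, sc (T i).m₂ u.2 * (T i).v₂) := .rel _ _ ⟨i, u.2, rfl, rfl⟩
        exact ⟨fun h => .trans _ _ _ h hs, fun h => .trans _ _ _ h (.symm _ _ hs)⟩
      rw [this]) Finset.univ.toList
  refine ⟨L, inferInstance, e, r, Subgroup.closure
    (e '' (CG.sub {p | Conn T (q₀, (z₀, 1)) p}) ∪ r '' {i | i ∈ Finset.univ.toList}), he,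
    ?_, ?_, ?_, ?_⟩
  · intro i u
    have := hr i (by simp) (CG.v u)
    rwa [CG.map_v, CG.map_v] at this
  · intro i
    have := hr i (by simp) (CG.t ((), 1))
    rwa [CG.map_t, CG.map_t, map_one, map_one, one_mul, one_mul] at this
  · intro i
    exact Subgroup.subset_closure (Or.inr ⟨i, by simp, rfl⟩)
  · intro k
    exact ⟨hm k, fun h => Subgroup.subset_closure (Or.inl ⟨k, h, rfl⟩)⟩

/-- `η₀ : t(f) ↦ a(f) τ a(f)⁻¹` -/
def eta0 {F W : Type} [Group F] [Group W] (a : F →* W) (τ : W) : CG Unit F →* W :=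
  SemidirectProduct.lift (FreeGroup.lift (fun p => a p.2 * τ * (a p.2)⁻¹)) a (by
    intro g
    ext ⟨⟨⟩, u⟩
    simp [cgAct_of, mul_assoc])

theorem exists_model (N : Subgroup (FreeGroup (Fin m))) [N.Normal]
    (hN : ∀ f, Conn T (q₀, (z₀, 1)) (q₀, (z₀, f)) ↔ f ∈ N) :
    ∃ (H : Type) (_ : Group H) (γ : Gen Q κ ι m → H), Good γ T q₀ z₀ ∧
      ∀ f, cw γ f = 1 → f ∈ N := by
  classical
  obtain ⟨L, _, e, r, P, he, hrv, hrt, hrP, hPm⟩ := exists_L T q₀ z₀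
  obtain ⟨W, _, a, c, τ, σ, ρ, hc, hστ, hρa, hac, hρ1, hρ2, hρ3⟩ := exists_W (FreeGroup (Fin m) ⧸ N)
  let ψ : CG Unit (FreeGroup (Fin m)) →* L :=
    e.comp (CG.map (MonoidHom.inr (κ → Multiplicative ℤ) (FreeGroup (Fin m))) q₀ (z₀, 1))
  have hinr : Function.Injective (MonoidHom.inr (κ → Multiplicative ℤ) (FreeGroup (Fin m))) := by
    intro x y h; simpa using h
  have hψ : Function.Injective ψ := he.comp (CG.map_injective _ hinr _ _)
  have ψt : ∀ f, ψ (CG.t ((), f)) = e (CG.t (q₀, (z₀, f))) := by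
    intro f; simp [ψ, CG.map_t]
  have ψv : ∀ f, ψ (CG.v f) = e (CG.v (1, f)) := by
    intro f; simp [ψ, CG.map_v]
  let B := P.comap ψ
  have hBs : B = CG.sub {u : Unit × FreeGroup (Fin m) | u.2 ∈ N} := by
    ext k
    rw [Subgroup.mem_comap]
    simp only [ψ, MonoidHom.comp_apply]
    rw [hPm, CG.map_mem_sub _ hinr]
    have : {u : Unit × FreeGroup (Fin m) | (q₀, (MonoidHom.inr (κ → Multiplicative ℤ)
        (FreeGroup (Fin m))) u.2 * (z₀, 1)) ∈ {p | Conn T (q₀, z₀, 1) p}} =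
        {u : Unit × FreeGroup (Fin m) | u.2 ∈ N} := by
      ext u
      simp [hN]
    rw [this]
  let a' : FreeGroup (Fin m) →* W := a.comp (QuotientGroup.mk' N)
  let η0 := eta0 a' τ
  have η0t : ∀ f, η0 (CG.t ((), f)) = a' f * τ * (a' f)⁻¹ := by
    intro f; simp [η0, eta0, CG.t]
  have η0v : ∀ f, η0 (CG.v f) = a' f := by
    intro f; simp [η0, eta0, CG.v]
  let Ls := HX P.subtype P.subtype P.subtype_injective P.subtype_injective
  let os : L →* Ls := HX.of _ _ _ _
  let s : Ls := HX.t _ _ _ _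
  have hs : ∀ x ∈ P, s * os x = os x * s := fun x hx =>
    HX.conj P.subtype P.subtype P.subtype_injective P.subtype_injective (⟨x, hx⟩ : P)
  let M := HX B.subtype B.subtype B.subtype_injective B.subtype_injective
  let oM : CG Unit (FreeGroup (Fin m)) →* M := HX.of _ _ _ _
  let sM : M := HX.t _ _ _ _
  let j : M →* Ls := HX.map B.subtype B.subtype B.subtype_injective B.subtype_injective
    P.subtype P.subtype P.subtype_injective P.subtype_injective
    (fun y => ⟨ψ y, y.2⟩) ψ (fun y => rfl) (fun y => rfl)
  have hj : Function.Injective j := HX.map_injective _ _ _ _ _ _ _ _ _ _ _ _ hψ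
    (by rintro g ⟨y, hy⟩ (h : ψ g = y)
        exact ⟨⟨g, by rw [Subgroup.mem_comap, h]; exact hy⟩, rfl⟩)
    (by rintro g ⟨y, hy⟩ (h : ψ g = y)
        exact ⟨⟨g, by rw [Subgroup.mem_comap, h]; exact hy⟩, rfl⟩)
  have hjo : ∀ x, j (oM x) = os (ψ x) := fun x => HX.map_of _ _ _ _ _ _ _ _ _ _ _ _ x
  have hjs : j sM = s := HX.map_t _ _ _ _ _ _ _ _ _ _ _ _
  have hση : ∀ y : B, σ * η0 (B.subtype y) = η0 (B.subtype y) * σ := by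
    rintro ⟨y, hy⟩
    rw [hBs] at hy
    have : CG.sub {u : Unit × FreeGroup (Fin m) | u.2 ∈ N} ≤
        (Subgroup.centralizer {σ}).comap η0 := by
      apply CG.sub_le
      rintro ⟨⟨⟩, f⟩ (hf : f ∈ N)
      rw [Subgroup.mem_comap, η0t, Subgroup.mem_centralizer_singleton_iff]
      have : a' f = 1 := by
        simp only [a', MonoidHom.comp_apply, QuotientGroup.mk'_apply,
          (QuotientGroup.eq_one_iff f).2 hf, map_one]
      rw [this]
      simp [hστ]
    exact (Subgroup.mem_centralizer_singleton_iff.1 (this hy)).symm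
  let η : M →* W := HX.lift _ _ _ _ η0 σ hση
  have hηo : ∀ x, η (oM x) = η0 x := fun x => HX.lift_of _ _ _ _ _ _ _ _
  have hηs : η sM = σ := HX.lift_t _ _ _ _ _ _ _
  have hj1 : Function.Injective (j.prod (1 : M →* W)) := fun x y h =>
    hj (congrArg Prod.fst h)
  have hj2 : Function.Injective (j.prod η) := fun x y h =>
    hj (congrArg Prod.fst h)
  let H := HX (j.prod (1 : M →* W)) (j.prod η) hj1 hj2
  let oH : Ls × W →* H := HX.of _ _ _ _
  have oHi : Function.Injective oH := HX.of_injective _ _ _ _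
  let z : H := HX.t _ _ _ _
  have hz : ∀ y, z * oH (j y, 1) = oH (j y, η y) * z := fun y => HX.conj _ _ _ _ y
  let lam : Ls →* H := oH.comp (MonoidHom.inl Ls W)
  let om : W →* H := oH.comp (MonoidHom.inr Ls W)
  have hlo : ∀ x y, lam x * om y = om y * lam x := by
    intro x y
    simp [lam, om, ← map_mul]
  have hoH : ∀ x y, oH (x, y) = lam x * om y := by
    intro x y
    simp [lam, om, ← map_mul]
  have hz' : ∀ y, z * lam (j y) = lam (j y) * om (η y) * z := by
    intro y
    rw [← hoH, ← hz]; rfl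
  let q : FreeGroup (Fin m) → FreeGroup (Fin m) ⧸ N := fun w => QuotientGroup.mk w
  let γ : Gen Q κ ι m → H := fun g => match g with
    | .x k => lam (os (e (CG.v (sgl k))))
    | .b i => lam (os (e (CG.v (1, FreeGroup.of i))))
    | .t q => lam (os (e (CG.t (q, 1))))
    | .r i => lam (os (r i))
    | .s => lam s
    | .a i => om (a (q (FreeGroup.of i)))
    | .c i => om (c (q (FreeGroup.of i)))
    | .τ => om τ
    | .σ => om σ
    | .ρ => om ρ
    | .z => z
  have hxx : ∀ k l, γ (.x k) * γ (.x l) = γ (.x l) * γ (.x k) := by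
    intro k l
    simp only [γ, ← map_mul]
    congr 4
    simp [sgl, mul_comm]
  have hxb : ∀ k i, γ (.x k) * γ (.b i) = γ (.b i) * γ (.x k) := by
    intro k l
    simp only [γ, ← map_mul]
    congr 4
    simp [sgl]
  have hvw : ∀ v, vw γ v = lam (os (e (CG.v v))) := by
    obtain ⟨X, hX⟩ := exists_vhom' hxx hxb
    intro v
    rw [← hX]
    have : X = lam.comp (os.comp (e.comp CG.v)) := by
      apply vhom_ext
      · intro k
        rw [hX, vw]
        simp only [xw_single, map_one, mul_one, zpow_one]
        rfl
      · intro i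
        rw [hX, vw]
        simp [xw, bw]
        rfl
    rw [this]; rfl
  have htw : ∀ q v, tw γ q v = lam (os (e (CG.t (q, v)))) := by
    intro q v
    have : γ (.t q) = lam (os (e (CG.t (q, 1)))) := rfl
    rw [tw, hvw, this, ← map_inv, ← map_inv, ← map_inv]
    simp only [← map_mul, ← map_inv]
    congr 3
    rw [map_inv, CG.conj, mul_one]
  refine ⟨H, inferInstance, γ, ⟨hxx, hxb, ?_, ?_, ?_, ?_, ?_, ?_, ?_, ?_, ?_, ?_, ?_, ?_, ?_, ?_,
    ?_⟩, ?_⟩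
  · intro i k
    have := congrArg (fun x => lam (os x)) (hrv i (sgl k))
    simpa only [γ, sc_sgl, map_zpow, map_mul] using this
  · intro i k
    have := congrArg (fun x => lam (os x)) (hrv i (1, FreeGroup.of k))
    have e2 : ∀ s : κ → ℤ, (sc s (1, FreeGroup.of k) : VG κ m) = (1, FreeGroup.of k) := by
      intro s; ext <;> simp [sc]
    simpa only [γ, e2, map_mul] using this
  · intro i
    have := congrArg (fun x => lam (os x)) (hrt i)
    rw [htw, htw]
    simpa only [γ, map_mul] using this
  · intro i
    have := congrArg lam (hs _ (hrP i))
    simpa only [γ, map_mul] using this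
  · have := congrArg lam (hs (e (CG.t (q₀, (z₀, 1)))) ((hPm _).2
      (CG.t_mem_sub _ _ (Relation.EqvGen.refl _))))
    rw [htw]
    simpa only [γ, map_mul] using this
  · rintro u v hu hv
    cases u <;> cases v <;> first | exact hu.elim | exact hv.elim | exact hlo _ _
  · intro i
    have := hz' (oM (CG.v (FreeGroup.of i)))
    rw [hjo, hηo, ψv, η0v] at this
    exact this
  · rw [htw]
    have := hz' (oM (CG.t ((), 1)))
    rw [hjo, hηo, ψt, η0t, map_one, one_mul, inv_one, mul_one] at this
    exact this
  · have := hz' sM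
    rw [hjs, hηs] at this
    exact this
  · simpa only [γ, map_mul] using congrArg om hστ
  · intro i
    simpa only [γ, map_mul] using congrArg om (hρa _)
  · intro i j
    simpa only [γ, map_mul] using congrArg om (hac _ _)
  · intro i
    simpa only [γ, map_mul, map_inv] using congrArg om (hρ1 _)
  · intro i
    simpa only [γ, map_mul, map_inv] using congrArg om (hρ2 _)
  · intro i
    simpa only [γ, map_mul, map_inv] using congrArg om (hρ3 _)
  · intro f hf
    have : cw γ = om.comp (c.comp (QuotientGroup.mk' N)) := by
      ext i
      simp [cw, γ, q]
    rw [this] at hf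
    have hf' : oH (1, c (QuotientGroup.mk' N f)) = 1 := hf
    rw [map_eq_one_iff oH oHi, Prod.mk_eq_one] at hf'
    have := hf'.2
    rw [map_eq_one_iff c hc] at this
    exact (QuotientGroup.eq_one_iff f).1 this

end
end BHP

/-! ### Part 2e: Theorem A -/
namespace BHP

theorem fp_of_presented {α : Type} [Finite α] (R : Set (FreeGroup α)) (hR : R.Finite) :
    IsFinitelyPresented (FreeGroup α ⧸ Subgroup.normalClosure R) := by
  classical
  obtain ⟨n, ⟨e⟩⟩ := Finite.exists_equiv_fin α
  let E := FreeGroup.freeGroupCongr e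
  refine ⟨n, hR.toFinset.image E, ⟨QuotientGroup.congr _ _ E ?_⟩⟩
  rw [Finset.coe_image, hR.coe_toFinset]
  exact Subgroup.map_normalClosure R E.toMonoidHom E.surjective

theorem theoremA {Q κ ι : Type} {m : ℕ} [Finite Q] [Finite κ] [Finite ι]
    (T : ι → Tran Q κ m) (q₀ : Q) (z₀ : κ → Multiplicative ℤ)
    (N : Subgroup (FreeGroup (Fin m))) [N.Normal]
    (hN : ∀ f, Conn T (q₀, (z₀, 1)) (q₀, (z₀, f)) ↔ f ∈ N) :
    ∃ (H : Type) (_ : Group H), IsFinitelyPresented H ∧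
      ∃ φ : (FreeGroup (Fin m) ⧸ N) →* H, Function.Injective φ := by
  have := Fintype.ofFinite κ
  have := Fintype.ofFinite ι
  obtain ⟨H, _, γ, hγ, hi⟩ := exists_model T q₀ z₀ N hN
  let α := Gen Q κ ι m
  let E : Set (FreeGroup α × FreeGroup α) := eqs FreeGroup.of T q₀ z₀
  let R : Set (FreeGroup α) := (fun p => p.1 * p.2⁻¹) '' E
  let H' := FreeGroup α ⧸ Subgroup.normalClosure R
  let p : FreeGroup α →* H' := QuotientGroup.mk' _
  have hp : Good (p ∘ FreeGroup.of) T q₀ z₀ := by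
    rw [good_iff, eqs_map]
    rintro _ ⟨⟨u, v⟩, huv, rfl⟩
    have : u * v⁻¹ ∈ Subgroup.normalClosure R := Subgroup.subset_normalClosure ⟨_, huv, rfl⟩
    have h2 : p (u * v⁻¹) = 1 := (QuotientGroup.eq_one_iff _).2 this
    rw [map_mul, map_inv, mul_inv_eq_one] at h2
    exact h2
  have hle : Subgroup.normalClosure R ≤ (FreeGroup.lift γ).ker := by
    apply Subgroup.normalClosure_le_normal
    rintro _ ⟨⟨u, v⟩, huv, rfl⟩
    have h1 : (FreeGroup.lift γ ∘ FreeGroup.of) = γ := by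
      funext x; simp
    have h2 := (good_iff _ _ _ _).1 hγ (FreeGroup.lift γ u, FreeGroup.lift γ v) (by
      have h3 := eqs_map FreeGroup.of (FreeGroup.lift γ) T q₀ z₀
      rw [h1] at h3
      rw [h3]
      exact ⟨(u, v), huv, by simp⟩)
    simp only at h2
    simp [MonoidHom.mem_ker, h2]
  let l : H' →* H := QuotientGroup.lift _ (FreeGroup.lift γ) hle
  have hl : ∀ f, l (cw (p ∘ FreeGroup.of) f) = cw γ f := by
    intro f
    have : l.comp (cw (p ∘ FreeGroup.of)) = cw γ := by
      ext i
      simp only [cw, MonoidHom.comp_apply, FreeGroup.lift_apply_of, Function.comp_apply]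
      show FreeGroup.lift γ (FreeGroup.of _) = _
      simp
    exact DFunLike.congr_fun this f
  refine ⟨H', inferInstance, fp_of_presented R ((eqs_finite _ _ _ _).image _),
    QuotientGroup.lift N (cw (p ∘ FreeGroup.of)) ?_, ?_⟩
  · intro f hf
    exact good_forces hp f ((hN f).2 hf)
  · rw [injective_iff_map_eq_one]
    intro x
    induction x using QuotientGroup.induction_on with
    | H f =>
      intro hf
      have hf' : cw (p ∘ FreeGroup.of) f = 1 := hf
      have := hl f
      rw [hf', map_one] at this
      exact (QuotientGroup.eq_one_iff f).2 (hi f this.symm)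

end BHP

/-! ### Part 3a: affine machines and connectivity systems -/
namespace BHP

/-- An affine transition `m u + a ↦ m' u + c`. -/
structure ATran (Q K : Type) where
  src : Q
  dst : Q
  m₁ : K → ℤ
  m₂ : K → ℤ
  a : K → ℤ
  c : K → ℤ
  h₁ : ∀ k, m₁ k ≠ 0
  h₂ : ∀ k, m₂ k ≠ 0

def AStep {Q K ι : Type} (T : ι → ATran Q K) (p p' : Q × (K → ℤ)) : Prop :=
  ∃ (i : ι) (u : K → ℤ), p = ((T i).src, fun k => (T i).m₁ k * u k + (T i).a k) ∧
    p' = ((T i).dst, fun k => (T i).m₂ k * u k + (T i).c k)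

section C
variable {Q K ι : Type} {m : ℕ} (T : ι → ATran Q K) (code : ι → ℤ) (D : ℤ)
  (q0 : Q) (s : List (Fin m × Bool) → K → ℤ)

inductive ReachH (w : List (Fin m × Bool)) : Q → (K → ℤ) → ℤ → Prop
  | start : ReachH w q0 (s w) 0
  | step (i : ι) (u : K → ℤ) (h : ℤ)
      (hr : ReachH w (T i).src (fun k => (T i).m₁ k * u k + (T i).a k) h) :
      ReachH w (T i).dst (fun k => (T i).m₂ k * u k + (T i).c k) (D * h + code i)

theorem code_aux {D x y c d : ℤ} (hc : 0 ≤ c) (hc' : c < D) (hd : 0 ≤ d) (hd' : d < D)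
    (h : D * x + c = D * y + d) : x = y ∧ c = d := by
  have h1 : c = d := by
    have := congrArg (· % D) h
    simpa [Int.add_emod, Int.emod_eq_of_lt hc hc', Int.emod_eq_of_lt hd hd'] using this
  refine ⟨?_, h1⟩
  subst h1
  have : D * x = D * y := by linarith
  exact mul_left_cancel₀ (by omega) this

variable (hc1 : ∀ i, 1 ≤ code i) (hc2 : ∀ i, code i < D) (hci : Function.Injective code)
include hc1 hc2

theorem ReachH.start_inv {w} {q : Q} {z : K → ℤ} {t h : ℤ} (hr : ReachH T code D q0 s w q z h)
    (hh : h = D * t) : t = 0 ∧ q = q0 ∧ z = s w ∨ D ≤ 0 := by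
  cases hr with
  | start =>
    by_cases hD : D ≤ 0
    · exact .inr hD
    · left
      have : D * t = 0 := hh.symm
      rcases mul_eq_zero.1 this with h | h
      · omega
      · exact ⟨h, rfl, rfl⟩
  | step i u h' hr =>
    exfalso
    have := code_aux (by linarith [hc1 i]) (hc2 i) le_rfl (by linarith [hc1 i, hc2 i])
      (by rw [hh, add_zero] : D * h' + code i = D * t + 0)
    linarith [hc1 i]

include hci
theorem ReachH.step_inv {w} {i : ι} {q : Q} {u z : K → ℤ} {h h0 : ℤ}
    (hr : ReachH T code D q0 s w q z h0) (hq : q = (T i).dst)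
    (hz : z = fun k => (T i).m₂ k * u k + (T i).c k) (hh : h0 = D * h + code i) :
    ReachH T code D q0 s w (T i).src (fun k => (T i).m₁ k * u k + (T i).a k) h := by
  cases hr with
  | start =>
    exfalso
    have := code_aux (by linarith [hc1 i]) (hc2 i) le_rfl (by linarith [hc1 i, hc2 i])
      (by rw [← hh]; ring : D * h + code i = D * 0 + 0)
    linarith [hc1 i]
  | step j u' h' hr =>
    obtain ⟨h1, h2⟩ := code_aux (by linarith [hc1 j]) (hc2 j) (by linarith [hc1 i]) (hc2 i) hh
    obtain rfl := hci h2
    subst h1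
    have : u' = u := by
      funext k
      have := congrFun hz k
      simp only [add_left_inj] at this
      exact mul_left_cancel₀ ((T j).h₂ k) this
    subst this
    exact hr

end C

section C2
variable {Q K ι : Type} {m : ℕ} (T : ι → ATran Q K) (code : ι → ℤ) (D : ℤ) (hD : D ≠ 0)
  (q0 : Q) (s : List (Fin m × Bool) → K → ℤ) (halt : Q → Prop)
  (la lc : Fin m × Bool → K → ℤ) (hla : ∀ l k, la l k ≠ 0)

open Classical in
/-- the connectivity system of an affine machine -/
noncomputable def CT : (ι × Bool) ⊕ Q ⊕ ((Fin m × Bool) × Bool) → Tran (Q × Bool) (Option K) m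
  | .inl (i, b) =>
    { src := ((T i).src, b), dst := ((T i).dst, b)
      m₁ := fun o => o.elim 1 (T i).m₁, m₂ := fun o => o.elim D (T i).m₂
      a := fun o => o.elim 0 (T i).a, c := fun o => o.elim (code i) (T i).c
      h₁ := by rintro (_ | k); exacts [one_ne_zero, (T i).h₁ k]
      h₂ := by rintro (_ | k); exacts [hD, (T i).h₂ k]
      g := 1 }
  | .inr (.inl q) =>
    { src := (q, false), dst := (q, if halt q then true else false)
      m₁ := fun _ => 1, m₂ := fun _ => 1
      a := fun _ => 0, c := fun _ => 0
      h₁ := by simp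
      h₂ := by simp
      g := 1 }
  | .inr (.inr (l, b)) =>
    { src := (q0, b), dst := (q0, b)
      m₁ := fun o => o.elim D fun _ => 1, m₂ := fun o => o.elim D (la l)
      a := fun _ => 0, c := fun o => o.elim 0 (lc l)
      h₁ := by rintro (_ | k); exacts [hD, one_ne_zero]
      h₂ := by rintro (_ | k); exacts [hD, hla l k]
      g := if b then 1 else (FreeGroup.mk [l])⁻¹ }

def cfg (z : K → ℤ) (h : ℤ) (f : FreeGroup (Fin m)) : VG (Option K) m :=
  (ofZ (fun o => o.elim h z), f)

theorem cfg_eta (v : VG (Option K) m) : ∃ z h f, v = cfg z h f := by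
  refine ⟨fun k => Multiplicative.toAdd (v.1 (some k)), Multiplicative.toAdd (v.1 none), v.2, ?_⟩
  refine Prod.ext ?_ rfl
  funext o
  cases o <;> rfl

theorem sc_cfg (m₁ a : Option K → ℤ) (z : K → ℤ) (h : ℤ) (f g : FreeGroup (Fin m)) :
    sc m₁ (cfg z h f) * (ofZ a, g) =
      cfg (fun k => m₁ (some k) * z k + a (some k)) (m₁ none * h + a none) (f * g) := by
  refine Prod.ext ?_ rfl
  funext o
  apply Multiplicative.toAdd.injective
  cases o <;> simp [sc, cfg, ofZ, mul_comm]

def CInv (N : Subgroup (FreeGroup (Fin m))) (q : Q × Bool) (v : VG (Option K) m) : Prop :=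
  ∃ w, ReachH T code D q0 s w q.1 (fun k => Multiplicative.toAdd (v.1 (some k)))
      (Multiplicative.toAdd (v.1 none)) ∧
    (q.2 = false → v.2 * FreeGroup.mk w ∈ N) ∧ (q.2 = true → v.2 ∈ N)

theorem cinv_cfg (N : Subgroup (FreeGroup (Fin m))) (q : Q) (b : Bool) (z : K → ℤ) (h f) :
    CInv T code D q0 s N (q, b) (cfg z h f) ↔
      ∃ w, ReachH T code D q0 s w q z h ∧ (b = false → f * FreeGroup.mk w ∈ N) ∧
        (b = true → f ∈ N) := Iff.rfl

theorem ReachH.reach {w q z h} (hr : ReachH T code D q0 s w q z h) :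
    Relation.ReflTransGen (AStep T) (q0, s w) (q, z) := by
  induction hr with
  | start => exact .refl
  | step i u h hr ih => exact ih.tail ⟨i, u, rfl, rfl⟩

theorem cinv_step (N : Subgroup (FreeGroup (Fin m))) [N.Normal]
    (hc1 : ∀ i, 1 ≤ code i) (hc2 : ∀ i, code i < D) (hci : Function.Injective code)
    (hD0 : 0 < D)
    (hs : ∀ l w k, s (l :: w) k = la l k * s w k + lc l k)
    (hsi : ∀ l w' u, (∀ k, la l k * u k + lc l k = s w' k) → ∃ w, w' = l :: w ∧ u = s w)
    (hp : ∀ w, FreeGroup.mk w ∈ N ↔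
      ∃ q z, halt q ∧ Relation.ReflTransGen (AStep T) (q0, s w) (q, z))
    (p p' : (Q × Bool) × VG (Option K) m) (h : TStep (CT T code D hD q0 halt la lc hla) p p') :
    CInv T code D q0 s N p.1 p.2 ↔ CInv T code D q0 s N p'.1 p'.2 := by
  obtain ⟨i, v, rfl, rfl⟩ := h
  obtain ⟨z, h, f, rfl⟩ := cfg_eta v
  rcases i with ⟨i, b⟩ | q | ⟨l, b⟩
  · simp only [CT, Tran.v₁, Tran.v₂, sc_cfg, cinv_cfg, mul_one, Option.elim]
    refine exists_congr fun w => and_congr_left fun _ => ?_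
    constructor
    · intro hr
      have := ReachH.step i z _ hr
      convert this using 1
      ring
    · intro hr
      have := hr.step_inv T code D q0 s hc1 hc2 hci rfl rfl rfl
      convert this using 1
      ring
  · simp only [CT, Tran.v₁, Tran.v₂, sc_cfg, cinv_cfg, mul_one, one_mul, add_zero]
    refine exists_congr fun w => and_congr_right fun hr => ?_
    by_cases hq : halt q
    · have hw := (hp w).2 ⟨q, z, hq, hr.reach⟩
      simp [hq, N.mul_mem_cancel_right hw]
    · simp [hq]
  · simp only [CT, Tran.v₁, Tran.v₂, sc_cfg, cinv_cfg, one_mul, Option.elim, add_zero]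
    constructor
    · rintro ⟨w, hr, h1, h2⟩
      rcases hr.start_inv T code D q0 s hc1 hc2 rfl with ⟨rfl, -, hz⟩ | hd
      · change z = s w at hz
        subst hz
        refine ⟨l :: w, ?_, ?_, ?_⟩
        · have := ReachH.start (T := T) (code := code) (D := D) (q0 := q0) (s := s) (w := l :: w)
          convert this using 1
          · funext k; exact (hs l w k).symm
          · ring
        · rintro rfl
          have := h1 rfl
          have e : FreeGroup.mk (l :: w) = FreeGroup.mk [l] * FreeGroup.mk w := rfl
          rw [e]
          generalize FreeGroup.mk [l] = gl at *
          simpa [mul_assoc] using this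
        · rintro rfl
          simpa using h2 rfl
      · omega
    · rintro ⟨w', hr, h1, h2⟩
      rcases hr.start_inv T code D q0 s hc1 hc2 rfl with ⟨rfl, -, hz⟩ | hd
      · obtain ⟨w, rfl, rfl⟩ := hsi l w' z (fun k => congrFun hz k)
        refine ⟨w, ?_, ?_, ?_⟩
        · have := ReachH.start (T := T) (code := code) (D := D) (q0 := q0) (s := s) (w := w)
          convert this using 1
          ring
        · rintro rfl
          have := h1 rfl
          have e : FreeGroup.mk (l :: w) = FreeGroup.mk [l] * FreeGroup.mk w := rfl
          rw [e] at this
          generalize FreeGroup.mk [l] = gl at *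
          simpa [mul_assoc] using this
        · rintro rfl
          simpa using h2 rfl
      · omega

theorem conn_machine {q z q' z'}
    (hr : Relation.ReflTransGen (AStep T) (q, z) (q', z')) (h : ℤ) :
    ∃ h', ∀ b f, Conn (CT T code D hD q0 halt la lc hla) ((q, b), cfg z h f) ((q', b), cfg z' h' f) := by
  generalize hp : (q', z') = p at hr
  induction hr generalizing q' z' with
  | refl => cases hp; exact ⟨h, fun b f => .refl _⟩
  | tail hab hbc ih =>
    obtain ⟨i, u, rfl, rfl⟩ := hbc
    obtain ⟨h', hh⟩ := ih rfl
    cases hp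
    refine ⟨D * h' + code i, fun b f => (hh b f).trans _ _ _ (.rel _ _ ?_)⟩
    refine ⟨.inl (i, b), cfg u h' f, ?_, ?_⟩
    · simp [CT, Tran.v₁, sc_cfg]
    · simp [CT, Tran.v₂, sc_cfg]

theorem theoremC [Finite Q] [Finite K] [Finite ι] (N : Subgroup (FreeGroup (Fin m))) [N.Normal]
    (hla : ∀ l k, la l k ≠ 0)
    (hs : ∀ l w k, s (l :: w) k = la l k * s w k + lc l k)
    (hsi : ∀ l w' u, (∀ k, la l k * u k + lc l k = s w' k) → ∃ w, w' = l :: w ∧ u = s w)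
    (hp : ∀ w, FreeGroup.mk w ∈ N ↔
      ∃ q z, halt q ∧ Relation.ReflTransGen (AStep T) (q0, s w) (q, z)) :
    ∃ (H : Type) (_ : Group H), IsFinitelyPresented H ∧
      ∃ φ : (FreeGroup (Fin m) ⧸ N) →* H, Function.Injective φ := by
  classical
  obtain ⟨M, ⟨e⟩⟩ := Finite.exists_equiv_fin ι
  let D : ℤ := M + 1
  let code : ι → ℤ := fun i => (e i : ℕ) + 1
  have hc1 : ∀ i, 1 ≤ code i := fun i => by simp [code]
  have hc2 : ∀ i, code i < D := fun i => by simp [code, D]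
  have hci : Function.Injective code := fun i j h => by
    simp only [code, add_left_inj, Nat.cast_inj] at h
    exact e.injective (Fin.ext h)
  have hD0 : 0 < D := by positivity
  have hD : D ≠ 0 := hD0.ne'
  let T' := CT T code D hD q0 halt la lc hla
  have hlink : ∀ w, FreeGroup.mk w ∈ N → ∀ f,
      Conn T' ((q0, true), cfg (s w) 0 f) ((q0, false), cfg (s w) 0 f) := by
    intro w hw f
    obtain ⟨q, z, hq, hr⟩ := (hp w).1 hw
    obtain ⟨h', hh⟩ := conn_machine T code D hD q0 halt la lc hla hr 0
    refine (hh true f).trans _ _ _ (Relation.EqvGen.trans _ _ _ (.symm _ _ (.rel _ _ ?_))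
      ((hh false f).symm))
    refine ⟨.inr (.inl q), cfg z h' f, ?_, ?_⟩
    · simp [T', CT, Tran.v₁, sc_cfg]
    · simp [T', CT, Tran.v₂, sc_cfg, hq]
  have hlt : ∀ w f, Conn T' ((q0, true), cfg (s []) 0 f) ((q0, true), cfg (s w) 0 f) := by
    intro w f
    induction w with
    | nil => exact .refl _
    | cons l w ih =>
      refine ih.trans _ _ _ (.rel _ _ ⟨.inr (.inr (l, true)), cfg (s w) 0 f, ?_, ?_⟩)
      · simp [T', CT, Tran.v₁, sc_cfg]
      · simp only [T', CT, Tran.v₂, sc_cfg, Option.elim, ← hs]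
        simp
  have hlf : ∀ w f, Conn T' ((q0, false), cfg (s []) 0 (f * FreeGroup.mk w))
      ((q0, false), cfg (s w) 0 f) := by
    intro w
    induction w with
    | nil => intro f; rw [← FreeGroup.one_eq_mk, mul_one]; exact .refl _
    | cons l w ih =>
      intro f
      have e : FreeGroup.mk (l :: w) = FreeGroup.mk [l] * FreeGroup.mk w := rfl
      rw [e, ← mul_assoc]
      refine (ih _).trans _ _ _ (.rel _ _
        ⟨.inr (.inr (l, false)), cfg (s w) 0 (f * FreeGroup.mk [l]), ?_, ?_⟩)
      · simp [T', CT, Tran.v₁, sc_cfg]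
      · simp only [T', CT, Tran.v₂, sc_cfg, Option.elim, ← hs]
        generalize FreeGroup.mk [l] = gl
        simp
  refine theoremA T' (q0, true) (ofZ (fun o => o.elim 0 (s []))) N fun f => ⟨?_, ?_⟩
  · intro hc
    have key : ∀ p p', Conn T' p p' →
        (CInv T code D q0 s N p.1 p.2 ↔ CInv T code D q0 s N p'.1 p'.2) := by
      intro p p' h
      induction h with
      | rel p p' h =>
        exact cinv_step T code D hD q0 s halt la lc hla N hc1 hc2 hci hD0 hs hsi hp p p' h
      | refl => rfl
      | symm _ _ _ ih => exact ih.symm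
      | trans _ _ _ _ _ ih ih' => exact ih.trans ih'
    have h0 : CInv T code D q0 s N (q0, true) (cfg (s []) 0 1) :=
      (cinv_cfg ..).2 ⟨[], .start, by simp, by simp⟩
    obtain ⟨w, -, -, h⟩ := (cinv_cfg T code D q0 s N q0 true (s []) 0 f).1 ((key _ _ hc).1 h0)
    exact h rfl
  · intro hf
    change Conn T' ((q0, true), cfg (s []) 0 1) ((q0, true), cfg (s []) 0 f)
    have h1 := hlink [] (by rw [← FreeGroup.one_eq_mk]; exact N.one_mem) 1
    have h2 := hlf (f⁻¹).toWord f
    have h3 := hlink (f⁻¹).toWord (by rw [FreeGroup.mk_toWord]; exact N.inv_mem hf) f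
    have h4 := hlt (f⁻¹).toWord f
    rw [FreeGroup.mk_toWord, mul_inv_cancel] at h2
    exact h1.trans _ _ _ (h2.trans _ _ _ (h3.symm.trans _ _ _ h4.symm))

end C2
end BHP

/-! ### Part 3b: stack machines as affine machines -/
namespace BHP
open Turing Turing.PartrecToTM2 Function

abbrev MSt := TM2.Stmt (fun _ : K' => Γ') Λ' (Option Γ')

def dg : Γ' → ℤ
  | .consₗ => 1
  | .cons => 2
  | .bit0 => 3
  | .bit1 => 4

def dgo : Option Γ' → ℤ
  | none => 0
  | some g => dg g

theorem dgo_nonneg (o) : 0 ≤ dgo o := by rcases o with _ | (_ | _ | _ | _) <;> simp [dgo, dg]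
theorem dgo_lt (o) : dgo o < 5 := by rcases o with _ | (_ | _ | _ | _) <;> simp [dgo, dg]
theorem dgo_inj {o o'} (h : dgo o = dgo o') : o = o' := by
  rcases o with _ | (_ | _ | _ | _) <;> rcases o' with _ | (_ | _ | _ | _) <;> simp [dgo, dg] at h ⊢

def encS : List Γ' → ℤ
  | [] => 0
  | g :: l => 5 * encS l + dg g

def encSt (S : K' → List Γ') : K' → ℤ := fun k => encS (S k)

theorem encS_eq (l : List Γ') : encS l = 5 * encS l.tail + dgo l.head? := by
  cases l <;> simp [encS, dgo]

theorem encS_dec {x : ℤ} {o : Option Γ'} {l : List Γ'} (h : 5 * x + dgo o = encS l) :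
    o = l.head? ∧ x = encS l.tail := by
  rw [encS_eq] at h
  obtain ⟨h1, h2⟩ := code_aux (dgo_nonneg _) (dgo_lt _) (dgo_nonneg _) (dgo_lt _) h
  exact ⟨dgo_inj h2, h1⟩

theorem upd_ne (k : K') : ∀ k', update (1 : K' → ℤ) k 5 k' ≠ 0 := by
  intro k'
  by_cases h : k' = k
  · subst h; simp
  · simp [h]

/-- micro step transition -/
def micro (M : Λ' → MSt) : (MSt × Option Γ') × Option Γ' → ATran (MSt × Option Γ') K'
  | ((.push k f q, v), _) =>
    { src := (.push k f q, v), dst := (q, v), m₁ := 1, m₂ := update 1 k 5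
      a := 0, c := update 0 k (dg (f v)), h₁ := by simp, h₂ := upd_ne k }
  | ((.peek k f q, v), o) =>
    { src := (.peek k f q, v), dst := (q, f v o), m₁ := update 1 k 5, m₂ := update 1 k 5
      a := update 0 k (dgo o), c := update 0 k (dgo o), h₁ := upd_ne k, h₂ := upd_ne k }
  | ((.pop k f q, v), o) =>
    { src := (.pop k f q, v), dst := (q, f v o), m₁ := update 1 k 5, m₂ := 1
      a := update 0 k (dgo o), c := 0, h₁ := upd_ne k, h₂ := by simp }
  | ((.load a q, v), _) =>
    { src := (.load a q, v), dst := (q, a v), m₁ := 1, m₂ := 1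
      a := 0, c := 0, h₁ := by simp, h₂ := by simp }
  | ((.branch f q₁ q₂, v), _) =>
    { src := (.branch f q₁ q₂, v), dst := (cond (f v) q₁ q₂, v), m₁ := 1, m₂ := 1
      a := 0, c := 0, h₁ := by simp, h₂ := by simp }
  | ((.goto l, v), _) =>
    { src := (.goto l, v), dst := (M (l v), v), m₁ := 1, m₂ := 1
      a := 0, c := 0, h₁ := by simp, h₂ := by simp }
  | ((.halt, v), _) =>
    { src := (.halt, v), dst := (.halt, v), m₁ := 1, m₂ := 1
      a := 0, c := 0, h₁ := by simp, h₂ := by simp }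

theorem micro_src (M) (x) : (micro M x).src = x.1 := by
  obtain ⟨⟨q, v⟩, o⟩ := x
  cases q <;> rfl

def Hlt (M : Λ' → MSt) (q : MSt) (v : Option Γ') (S : K' → List Γ') : Prop :=
  (StateTransition.eval (TM2.step M) (TM2.stepAux q v S)).Dom

theorem hlt_goto (M : Λ' → MSt) (l : Λ') (v : Option Γ') (S : K' → List Γ') :
    (StateTransition.eval (TM2.step M) ⟨some l, v, S⟩).Dom ↔ Hlt M (M l) v S := by
  unfold Hlt
  rw [StateTransition.reaches_eval (b := TM2.stepAux (M l) v S)]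
  exact Relation.ReflTransGen.single rfl

theorem encSt_upd_cons (S : K' → List Γ') (k : K') (g : Γ') :
    encSt (update S k (g :: S k)) = fun k' => update (1 : K' → ℤ) k 5 k' * encSt S k' +
      update (0 : K' → ℤ) k (dg g) k' := by
  funext k'
  by_cases h : k' = k
  · subst h; simp [encSt, encS]
  · simp [encSt, h]

theorem encSt_tail (S : K' → List Γ') (k : K') :
    encSt S = fun k' => update (1 : K' → ℤ) k 5 k' * encSt (update S k (S k).tail) k' +
      update (0 : K' → ℤ) k (dgo (S k).head?) k' := by
  funext k'
  by_cases h : k' = k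
  · subst h; simp [encSt, ← encS_eq]
  · simp [encSt, h]

theorem encSt_dec {S : K' → List Γ'} {k : K'} {u : K' → ℤ} {o : Option Γ'}
    (h : encSt S = fun k' => update (1 : K' → ℤ) k 5 k' * u k' +
      update (0 : K' → ℤ) k (dgo o) k') :
    o = (S k).head? ∧ u = encSt (update S k (S k).tail) := by
  have h1 := congrFun h k
  simp only [update_self] at h1
  obtain ⟨h2, h3⟩ := encS_dec h1.symm
  refine ⟨h2, funext fun k' => ?_⟩
  by_cases hk : k' = k
  · subst hk; simpa [encSt] using h3
  · have := congrFun h k'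
    simp [hk] at this
    simp [← this, encSt, hk]

theorem micro_sound (M : Λ' → MSt) (q v S p') (h : AStep (micro M) ((q, v), encSt S) p') :
    ∃ q' v' S', p' = ((q', v'), encSt S') ∧ (Hlt M q v S ↔ Hlt M q' v' S') := by
  obtain ⟨⟨⟨q, v⟩, o⟩, u, h1, rfl⟩ := h
  have := congrArg Prod.fst h1
  rw [micro_src] at this
  cases this
  have h1 := congrArg Prod.snd h1
  cases q with
  | push k f q =>
    refine ⟨q, v, update S k (f v :: S k), ?_, ?_⟩
    · simp only [micro] at h1 ⊢
      rw [encSt_upd_cons, h1]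
      simp
    · simp [Hlt]
  | peek k f q =>
    simp only [micro] at h1 ⊢
    obtain ⟨h2, h3⟩ := encSt_dec h1
    refine ⟨q, f v o, S, ?_, ?_⟩
    · rw [h1]
    · simp [Hlt, h2]
  | pop k f q =>
    simp only [micro] at h1 ⊢
    obtain ⟨h2, h3⟩ := encSt_dec h1
    refine ⟨q, f v o, update S k (S k).tail, ?_, ?_⟩
    · rw [h3]; simp
    · simp [Hlt, h2]
  | load a q =>
    simp only [micro] at h1 ⊢
    exact ⟨q, a v, S, by rw [h1], by simp [Hlt]⟩
  | branch f q₁ q₂ =>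
    simp only [micro] at h1 ⊢
    refine ⟨cond (f v) q₁ q₂, v, S, by rw [h1], ?_⟩
    cases hf : f v <;> simp [Hlt, hf]
  | goto l =>
    simp only [micro] at h1 ⊢
    refine ⟨_, v, S, by rw [h1], ?_⟩
    rw [← hlt_goto]
    simp [Hlt]
  | halt =>
    simp only [micro] at h1 ⊢
    exact ⟨_, v, S, by rw [h1], Iff.rfl⟩

def TGoal (M : Λ' → MSt) (p : (MSt × Option Γ') × (K' → ℤ)) :
    TM2.Cfg (fun _ : K' => Γ') Λ' (Option Γ') → Prop
  | ⟨some l, v, S⟩ => Relation.ReflTransGen (AStep (micro M)) p ((M l, v), encSt S)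
  | ⟨none, v, S⟩ => Relation.ReflTransGen (AStep (micro M)) p ((.halt, v), encSt S)

theorem TGoal.head {M p p'} (h : AStep (micro M) p p') : ∀ {c}, TGoal M p' c → TGoal M p c
  | ⟨some _, _, _⟩, h2 => Relation.ReflTransGen.head h h2
  | ⟨none, _, _⟩, h2 => Relation.ReflTransGen.head h h2

theorem micro_stepAux (M : Λ' → MSt) (q : MSt) : ∀ v S,
    TGoal M ((q, v), encSt S) (TM2.stepAux q v S) := by
  induction q with
  | push k f q ih =>
    intro v S
    refine TGoal.head ⟨((.push k f q, v), none), encSt S, ?_, rfl⟩ ?_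
    · simp [micro]
    · have := ih v (update S k (f v :: S k))
      rw [encSt_upd_cons] at this
      exact this
  | peek k f q ih =>
    intro v S
    have e := encSt_tail S k
    refine TGoal.head ⟨((.peek k f q, v), (S k).head?), encSt (update S k (S k).tail),
      ?_, rfl⟩ ?_
    · simp only [micro]
      rw [← e]
    · have := ih (f v (S k).head?) S
      rw [e] at this
      exact this
  | pop k f q ih =>
    intro v S
    have e := encSt_tail S k
    refine TGoal.head ⟨((.pop k f q, v), (S k).head?), encSt (update S k (S k).tail),
      ?_, rfl⟩ ?_
    · simp only [micro]
      rw [← e]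
    · have := ih (f v (S k).head?) (update S k (S k).tail)
      simpa [micro] using this
  | load a q ih =>
    intro v S
    refine TGoal.head ⟨((.load a q, v), none), encSt S, ?_, rfl⟩ ?_
    · simp [micro]
    · simpa [micro] using ih (a v) S
  | branch f q₁ q₂ ih1 ih2 =>
    intro v S
    refine TGoal.head ⟨((.branch f q₁ q₂, v), none), encSt S, ?_, rfl⟩ ?_
    · simp [micro]
    · cases h : f v
      · simpa [micro, h] using ih2 v S
      · simpa [micro, h] using ih1 v S
  | goto l =>
    intro v S
    refine TGoal.head ⟨((.goto l, v), none), encSt S, ?_, rfl⟩ ?_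
    · simp [micro]
    · simp [micro, TGoal]
      exact .refl
  | halt =>
    intro v S
    exact .refl

theorem micro_halts (M : Λ' → MSt) (q v S) :
    Hlt M q v S ↔ ∃ v' z, Relation.ReflTransGen (AStep (micro M)) ((q, v), encSt S)
      ((.halt, v'), z) := by
  constructor
  · intro h
    obtain ⟨c, hc⟩ := Part.dom_iff_mem.1 h
    rw [StateTransition.mem_eval] at hc
    obtain ⟨h1, h2⟩ := hc
    have key : TGoal M ((q, v), encSt S) c := by
      clear h2
      induction h1 with
      | refl => exact micro_stepAux M q v S
      | tail _ hs ih =>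
        rename_i b c' _
        obtain ⟨_ | l, v', S'⟩ := b
        · simp at hs
        · have hs : TM2.stepAux (M l) v' S' = c' := by simpa using hs
          have h3 := micro_stepAux M (M l) v' S'
          rw [hs] at h3
          have ih : Relation.ReflTransGen (AStep (micro M)) _ ((M l, v'), encSt S') := ih
          obtain ⟨_ | l, v'', S''⟩ := c'
          · exact ih.trans h3
          · exact ih.trans h3
    obtain ⟨_ | l, v', S'⟩ := c
    · exact ⟨_, _, key⟩
    · simp at h2
  · rintro ⟨v', z, h⟩
    have key : ∀ p, Relation.ReflTransGen (AStep (micro M)) ((q, v), encSt S) p →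
        ∃ q' v' S', p = ((q', v'), encSt S') ∧ (Hlt M q v S ↔ Hlt M q' v' S') := by
      intro p hp
      induction hp with
      | refl => exact ⟨_, _, _, rfl, Iff.rfl⟩
      | tail _ hs ih =>
        obtain ⟨q', v', S', rfl, h1⟩ := ih
        obtain ⟨q'', v'', S'', rfl, h2⟩ := micro_sound M _ _ _ _ hs
        exact ⟨_, _, _, rfl, h1.trans h2⟩
    obtain ⟨q', v'', S', he, h1⟩ := key _ h
    rw [h1]
    have e1 : q' = .halt := by
      have := congrArg (fun x => x.1.1) he
      exact this.symm
    subst e1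
    unfold Hlt
    rw [Part.dom_iff_mem]
    refine ⟨⟨none, v'', S'⟩, StateTransition.mem_eval.2 ⟨.refl, rfl⟩⟩

/-- restriction of a machine to a closed set of states -/
def restr {Q K ι : Type} (T : ι → ATran Q K) (C : Set Q)
    (hC : ∀ i, (T i).src ∈ C → (T i).dst ∈ C) :
    {i // (T i).src ∈ C} → ATran C K := fun i =>
  { src := ⟨(T i).src, i.2⟩, dst := ⟨(T i).dst, hC i i.2⟩, m₁ := (T i).m₁, m₂ := (T i).m₂
    a := (T i).a, c := (T i).c, h₁ := (T i).h₁, h₂ := (T i).h₂ }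

theorem restr_reach {Q K ι : Type} (T : ι → ATran Q K) (C : Set Q)
    (hC : ∀ i, (T i).src ∈ C → (T i).dst ∈ C) (q : C) (z : K → ℤ) (q' : Q) (z' : K → ℤ) :
    Relation.ReflTransGen (AStep T) (q.1, z) (q', z') ↔
      ∃ h : q' ∈ C, Relation.ReflTransGen (AStep (restr T C hC)) (q, z) (⟨q', h⟩, z') := by
  constructor
  · generalize hp : (q', z') = p
    intro h
    induction h generalizing q' z' with
    | refl => cases hp; exact ⟨q.2, .refl⟩
    | tail _ hs ih =>
      obtain ⟨i, u, rfl, rfl⟩ := hs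
      obtain ⟨h1, h2⟩ := ih _ _ rfl
      cases hp
      exact ⟨hC i h1, h2.tail ⟨⟨i, h1⟩, u, rfl, rfl⟩⟩
  · rintro ⟨h, hr⟩
    have : ∀ p, Relation.ReflTransGen (AStep (restr T C hC)) (q, z) p →
        Relation.ReflTransGen (AStep T) (q.1, z) (p.1.1, p.2) := by
      intro p hp
      induction hp with
      | refl => exact .refl
      | tail _ hs ih =>
        obtain ⟨i, u, rfl, rfl⟩ := hs
        exact ih.tail ⟨i.1, u, rfl, rfl⟩
    exact this _ hr

def trM : Λ' → MSt := tr

def mclosed (c : ToPartrec.Code) : Set (MSt × Option Γ') :=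
  {p | some p.1 ∈ TM2.stmts trM (codeSupp c Cont'.halt)}

theorem mclosed_finite (c) : (mclosed c).Finite := by
  have : (mclosed c) = (fun p : MSt × Option Γ' => (some p.1, p.2)) ⁻¹'
      ((↑(TM2.stmts trM (codeSupp c Cont'.halt)) : Set (Option MSt)) ×ˢ Set.univ) := by
    ext p
    simp [mclosed]
  rw [this]
  refine Set.Finite.preimage ?_ ((Finset.finite_toSet _).prod Set.finite_univ)
  rintro ⟨a, b⟩ _ ⟨a', b'⟩ _ h
  simpa using h

theorem mclosed_closed (c) (i) (hi : (micro trM i).src ∈ mclosed c) :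
    (micro trM i).dst ∈ mclosed c := by
  rw [micro_src] at hi
  obtain ⟨⟨q, v⟩, o⟩ := i
  have hi : some q ∈ TM2.stmts trM (codeSupp c Cont'.halt) := hi
  change some (micro trM ((q, v), o)).dst.1 ∈ TM2.stmts trM (codeSupp c Cont'.halt)
  cases q with
  | push k f q => exact TM2.stmts_trans (by simp [TM2.stmts₁]; exact .inr TM2.stmts₁_self) hi
  | peek k f q => exact TM2.stmts_trans (by simp [TM2.stmts₁]; exact .inr TM2.stmts₁_self) hi
  | pop k f q => exact TM2.stmts_trans (by simp [TM2.stmts₁]; exact .inr TM2.stmts₁_self) hi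
  | load a q => exact TM2.stmts_trans (by simp [TM2.stmts₁]; exact .inr TM2.stmts₁_self) hi
  | branch f q₁ q₂ =>
    simp only [micro]
    cases f v
    · exact TM2.stmts_trans (by simp [TM2.stmts₁]; exact .inr (.inr TM2.stmts₁_self)) hi
    · exact TM2.stmts_trans (by simp [TM2.stmts₁]; exact .inr (.inl TM2.stmts₁_self)) hi
  | goto l =>
    have := @TM2.stmts_supportsStmt _ _ _ _ ⟨trNormal c Cont'.halt⟩ _ _ _
      (tr_supports c Cont'.halt) hi
    have h2 : l v ∈ codeSupp c Cont'.halt := this v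
    simp only [micro, TM2.stmts, Finset.some_mem_insertNone, Finset.mem_biUnion]
    exact ⟨l v, h2, TM2.stmts₁_self⟩
  | halt => exact hi

end BHP

/-! ### Part 3c: recursively enumerable normal subgroups -/
namespace BHP
open Turing Turing.PartrecToTM2 Function

/-- numeric code of a word -/
def Nw {m : ℕ} : List (Fin m × Bool) → ℕ
  | [] => 0
  | l :: w => (fun x => 2 * x)^[Encodable.encode l] (2 * Nw w + 1)

theorem Nw_primrec {m : ℕ} : Primrec (Nw (m := m)) := by
  have h := Primrec.list_foldr (α := List (Fin m × Bool)) (β := Fin m × Bool) (σ := ℕ)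
    (f := fun w => w) (g := fun _ => 0)
    (h := fun _ p => (fun x => 2 * x)^[Encodable.encode p.1] (2 * p.2 + 1))
    Primrec.id (Primrec.const 0)
    (by
      refine Primrec.nat_iterate (f := fun a : List (Fin m × Bool) × ((Fin m × Bool) × ℕ) =>
          Encodable.encode a.2.1)
        (g := fun a => 2 * a.2.2 + 1) (h := fun _ x => 2 * x) ?_ ?_ ?_
      · exact Primrec.encode.comp (Primrec.fst.comp Primrec.snd)
      · exact Primrec.nat_add.comp (Primrec.nat_mul.comp (Primrec.const 2)
          (Primrec.snd.comp Primrec.snd)) (Primrec.const 1)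
      · exact Primrec.nat_mul.comp (Primrec.const 2) Primrec.snd)
  refine h.of_eq fun w => ?_
  induction w with
  | nil => rfl
  | cons l w ih => simp only [List.foldr_cons, Nw, ih]

def B0 (x : ℤ) : ℤ := 5 * x + 3
def B1 (x : ℤ) : ℤ := 5 * x + 4

theorem trNat_double (n : ℕ) (hn : n ≠ 0) : trNat (2 * n) = Γ'.bit0 :: trNat n := by
  unfold trNat
  have h : ((2 * n : ℕ) : Num) = Num.bit0 (n : Num) := by
    rw [← Num.of_to_nat' (Num.bit0 _)]
    simp [two_mul, Num.bit0_of_bit0]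
  rw [h]
  rcases hh : (n : Num) with _ | p
  · exfalso
    apply hn
    have := congrArg (fun x : Num => (x : ℕ)) hh
    simpa using this
  · rfl

theorem trNat_double1 (n : ℕ) : trNat (2 * n + 1) = Γ'.bit1 :: trNat n := by
  unfold trNat
  have h : ((2 * n + 1 : ℕ) : Num) = Num.bit1 (n : Num) := by
    rw [← Num.of_to_nat' (Num.bit1 _)]
    simp [two_mul, Num.bit1_of_bit1]
  rw [h]
  rcases hh : (n : Num) with _ | p <;> rfl

theorem iter_pos (k n : ℕ) (hn : n ≠ 0) : (fun x => 2 * x)^[k] n ≠ 0 := by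
  induction k with
  | zero => exact hn
  | succ k ih => rw [iterate_succ_apply']; omega

/-- encoded main stack -/
def ms {m : ℕ} (w : List (Fin m × Bool)) : ℤ := encS (trList [Nw w])

theorem enc_iter (k n : ℕ) (hn : n ≠ 0) :
    encS (trList [(fun x => 2 * x)^[k] n]) = B0^[k] (encS (trList [n])) := by
  induction k with
  | zero => rfl
  | succ k ih =>
    rw [iterate_succ_apply', iterate_succ_apply', ← ih, trList, trNat_double _ (iter_pos k n hn)]
    rfl

theorem ms_cons {m : ℕ} (l : Fin m × Bool) (w) :
    ms (l :: w) = B0^[Encodable.encode l] (B1 (ms w)) := by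
  unfold ms
  rw [Nw, enc_iter _ _ (by omega), trList, trNat_double1]
  rfl

theorem ms_nil {m : ℕ} : ms ([] : List (Fin m × Bool)) = 2 := by
  simp [ms, Nw, encS, dg]

theorem B_inj (k k' : ℕ) (x x' : ℤ) (h : B0^[k] (B1 x) = B0^[k'] (B1 x')) : k = k' ∧ x = x' := by
  induction k generalizing k' with
  | zero =>
    cases k' with
    | zero => simp [B1] at h; exact ⟨rfl, h⟩
    | succ k' => rw [iterate_succ_apply'] at h; simp [B1, B0] at h; omega
  | succ k ih =>
    cases k' with
    | zero => rw [iterate_succ_apply'] at h; simp [B1, B0] at h; omega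
    | succ k' =>
      rw [iterate_succ_apply', iterate_succ_apply'] at h
      have := ih k' (by unfold B0 at h ⊢; omega)
      omega

theorem ms_dec {m : ℕ} (l : Fin m × Bool) (w') (x : ℤ)
    (h : B0^[Encodable.encode l] (B1 x) = ms w') : ∃ w, w' = l :: w ∧ x = ms w := by
  cases w' with
  | nil =>
    exfalso
    rw [ms_nil] at h
    cases hk : Encodable.encode l with
    | zero => rw [hk] at h; simp [B1] at h; omega
    | succ k => rw [hk, iterate_succ_apply'] at h; simp [B0] at h; omega
  | cons l' w =>
    rw [ms_cons] at h
    obtain ⟨h1, h2⟩ := B_inj _ _ _ _ h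
    rw [Encodable.encode_injective h1]
    exact ⟨w, rfl, h2⟩

theorem ms_inj {m : ℕ} : Injective (ms (m := m)) := by
  intro w
  induction w with
  | nil =>
    intro w' h
    cases w' with
    | nil => rfl
    | cons l w' =>
      rw [ms_cons] at h
      obtain ⟨w, h1, -⟩ := ms_dec l [] (ms w') h.symm
      cases h1
  | cons l w ih =>
    intro w' h
    rw [ms_cons] at h
    obtain ⟨w'', rfl, h2⟩ := ms_dec l w' _ h
    rw [ih h2]

theorem Nw_inj {m : ℕ} : Injective (Nw (m := m)) := fun a b h => ms_inj (by unfold ms; rw [h])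

def off : ℕ → ℤ
  | 0 => 4
  | k + 1 => 5 * off k + 3

theorem B_affine (k : ℕ) (x : ℤ) : B0^[k] (B1 x) = 5 ^ (k + 1) * x + off k := by
  induction k with
  | zero => simp [B1, off]
  | succ k ih => rw [iterate_succ_apply', ih, B0, off]; ring

theorem code_of_re {m : ℕ} {p : List (Fin m × Bool) → Prop} (hp : REPred p) :
    ∃ c : ToPartrec.Code, ∀ w, (c.eval [Nw w]).Dom ↔ p w := by
  let f : ℕ → ℕ → Option (List (Fin m × Bool)) := fun n k =>
    (Encodable.decode (α := List (Fin m × Bool)) k).bind fun w => if Nw w = n then some w else none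
  have hf : Primrec₂ f := by
    refine Primrec.option_bind (Primrec.decode.comp Primrec.snd) ?_
    refine Primrec.ite (Primrec.eq.comp (Nw_primrec.comp Primrec.snd)
      (Primrec.fst.comp Primrec.fst)) (Primrec.option_some.comp Primrec.snd) (Primrec.const none)
  let F : ℕ →. Unit := fun n => (Nat.rfindOpt (f n)).bind
    fun w => Part.assert (p w) fun _ => Part.some ()
  have hF : Partrec F := Partrec.bind (Partrec.rfindOpt hf.to_comp) (hp.comp Computable.snd)
  let F' : ℕ →. ℕ := fun n => (F n).map fun _ => 0
  have hF' : Partrec F' := hF.map (Computable.const 0).to₂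
  obtain ⟨c, hc⟩ := ToPartrec.Code.exists_code (Nat.Partrec'.part_iff₁.2 hF')
  refine ⟨c, fun w => ?_⟩
  have e := hc ⟨[Nw w], rfl⟩
  change c.eval [Nw w] = pure <$> F' (Nw w) at e
  rw [e]
  change (F (Nw w)).Dom ↔ _
  have hm : ∀ w', w' ∈ Nat.rfindOpt (f (Nw w)) → w' = w := by
    intro w' h
    obtain ⟨k, hk⟩ := Nat.rfindOpt_spec h
    simp only [f, Option.mem_def, Option.bind_eq_some_iff] at hk
    obtain ⟨w'', -, h2⟩ := hk
    split_ifs at h2 with h3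
    rw [← Option.some.inj h2]
    exact Nw_inj h3
  have hd : (Nat.rfindOpt (f (Nw w))).Dom := by
    rw [Nat.rfindOpt_dom]
    exact ⟨Encodable.encode w, w, by simp [f]⟩
  have hw : w ∈ Nat.rfindOpt (f (Nw w)) := by
    have h1 := Part.get_mem hd
    rwa [hm _ h1] at h1
  have : F (Nw w) = Part.assert (p w) fun _ => Part.some () := by
    change (Nat.rfindOpt (f (Nw w))).bind _ = _
    rw [Part.eq_some_iff.2 hw, Part.bind_some]
  rw [this]
  simp [Part.assert]

theorem theoremB {m : ℕ} (N : Subgroup (FreeGroup (Fin m))) [N.Normal]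
    (hp : REPred fun w : List (Fin m × Bool) => FreeGroup.mk w ∈ N) :
    ∃ (H : Type) (_ : Group H), IsFinitelyPresented H ∧
      ∃ φ : (FreeGroup (Fin m) ⧸ N) →* H, Function.Injective φ := by
  obtain ⟨c, hc⟩ := code_of_re hp
  let C := mclosed c
  have : Finite C := mclosed_finite c
  let T := restr (micro trM) C (mclosed_closed c)
  have hq0 : ((trM (trNormal c Cont'.halt), none) : MSt × Option Γ') ∈ C := by
    change some (trM _) ∈ TM2.stmts trM (codeSupp c Cont'.halt)
    simp only [TM2.stmts, Finset.some_mem_insertNone, Finset.mem_biUnion]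
    exact ⟨_, (tr_supports c Cont'.halt).1, TM2.stmts₁_self⟩
  have : Finite {i // (micro trM i).src ∈ C} := by
    refine Finite.of_injective (β := C × Option Γ')
      (fun i => (⟨i.1.1, by have := i.2; rwa [micro_src] at this⟩, i.1.2)) ?_
    rintro ⟨⟨a, b⟩, _⟩ ⟨⟨a', b'⟩, _⟩ h
    simp only [Prod.mk.injEq, Subtype.mk.injEq] at h ⊢
    exact h
  have : Finite K' := by
    refine Finite.of_surjective (α := Fin 4)
      (fun i => if i = 0 then K'.main else if i = 1 then K'.rev else if i = 2 then K'.aux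
        else K'.stack) ?_
    intro k
    cases k
    exacts [⟨0, by simp⟩, ⟨1, by simp⟩, ⟨2, by simp⟩, ⟨3, by simp⟩]
  let s : List (Fin m × Bool) → K' → ℤ := fun w => encSt (K'.elim (trList [Nw w]) [] [] [])
  have s0 : ∀ w, s w K'.main = ms w := fun w => rfl
  refine theoremC T ⟨_, hq0⟩ s (fun q => q.1.1 = .halt)
    (fun l k => if k = K'.main then 5 ^ (Encodable.encode l + 1) else 1)
    (fun l k => if k = K'.main then off (Encodable.encode l) else 0) N ?_ ?_ ?_ ?_
  · intro l k
    split_ifs <;> positivity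
  · intro l w k
    cases k
    · simp only [if_true, s0, ms_cons, B_affine]
    all_goals simp [s, encSt, encS]
  · intro l w' u h
    have h1 := h K'.main
    simp only [if_true, s0, ← B_affine] at h1
    obtain ⟨w, rfl, h2⟩ := ms_dec l w' _ h1
    refine ⟨w, rfl, ?_⟩
    funext k
    have h3 := h k
    cases k
    · exact h2
    all_goals simpa [s, encSt, encS] using h3
  · intro w
    rw [← hc]
    have h1 : (c.eval [Nw w]).Dom ↔ (StateTransition.eval (TM2.step tr) (init c [Nw w])).Dom := by
      rw [tr_eval]; rfl
    rw [h1]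
    have h2 := hlt_goto trM (trNormal c Cont'.halt) none (K'.elim (trList [Nw w]) [] [] [])
    refine h2.trans ((micro_halts _ _ _ _).trans ?_)
    constructor
    · rintro ⟨v', z, h⟩
      obtain ⟨h3, h4⟩ := (restr_reach (micro trM) C (mclosed_closed c) ⟨_, hq0⟩ _ _ _).1 h
      exact ⟨_, z, rfl, h4⟩
    · rintro ⟨⟨⟨q, v⟩, hq⟩, z, h3, h4⟩
      change q = _ at h3
      subst h3
      exact ⟨v, z, (restr_reach (micro trM) C (mclosed_closed c) ⟨_, hq0⟩ _ _ _).2 ⟨hq, h4⟩⟩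

end BHP

/-! ### Part 4a: the ring -/
namespace BHP

/-- Data of a ring of characteristic two with a Leavitt-like structure over a group. -/
structure RD (G R : Type) [Group G] [Ring R] where
  γ : G →* R
  s : R
  s' : R
  p : R
  p' : R
  h2 : ∀ x : R, x + x = 0
  hss : s' * s = 1
  hsg : ∀ g, g ≠ 1 → s' * γ g * s = 0
  hpp : p' * p = 1
  hps : p' * s = 0
  hsp : s' * p = 0
  hpγ : ∀ g, γ g * p = p * γ g
  hp'γ : ∀ g, p' * γ g = γ g * p'
  hgen : Subring.closure (Set.range γ ∪ {s, s', p, p'}) = ⊤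

namespace RD
variable {G R : Type} [Group G] [Ring R] (d : RD G R)

include d in
theorem neg_eq (x : R) : -x = x := neg_eq_of_add_eq_zero_left (d.h2 x)
include d in
theorem sub_eq (x y : R) : x - y = x + y := by rw [sub_eq_add_neg, d.neg_eq]

def lt : Option G → R
  | none => d.p
  | some g => d.γ g * d.s

def lt' : Option G → R
  | none => d.p'
  | some g => d.s' * d.γ g⁻¹

theorem lt'_lt_self (a) : d.lt' a * d.lt a = 1 := by
  cases a with
  | none => exact d.hpp
  | some g => simp only [lt, lt']; rw [mul_assoc, ← mul_assoc (d.γ _), ← map_mul]; simp [d.hss]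

theorem lt'_lt_ne {a b} (h : a ≠ b) : d.lt' a * d.lt b = 0 := by
  cases a with
  | none =>
    cases b with
    | none => exact absurd rfl h
    | some g => simp only [lt, lt']; rw [← mul_assoc, d.hp'γ, mul_assoc, d.hps, mul_zero]
  | some g =>
    cases b with
    | none => simp only [lt, lt']; rw [mul_assoc, d.hpγ, ← mul_assoc, d.hsp, zero_mul]
    | some g' =>
      simp only [lt, lt']
      rw [mul_assoc, ← mul_assoc (d.γ _), ← map_mul, ← mul_assoc]
      apply d.hsg
      intro h1
      apply h
      rw [inv_mul_eq_one] at h1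
      rw [h1]

theorem γ_lt (g : G) (a : Option G) : ∃ b h, d.γ g * d.lt a = d.lt b * d.γ h := by
  cases a with
  | none => exact ⟨none, g, d.hpγ g⟩
  | some x => exact ⟨some (g * x), 1, by simp [lt, mul_assoc]⟩

def U : List (Option G) → R
  | [] => 1
  | a :: u => d.lt a * U u

def U' : List (Option G) → R
  | [] => 1
  | a :: u => U' u * d.lt' a

theorem U_append (u v) : d.U (u ++ v) = d.U u * d.U v := by
  induction u with
  | nil => simp [U]
  | cons a u ih => simp [U, ih, mul_assoc]

theorem U'_append (u v) : d.U' (u ++ v) = d.U' v * d.U' u := by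
  induction u with
  | nil => simp [U']
  | cons a u ih => simp [U', ih, mul_assoc]

theorem U'_U_self (u) : d.U' u * d.U u = 1 := by
  induction u with
  | nil => simp [U, U']
  | cons a u ih =>
    simp only [U, U']
    rw [mul_assoc, ← mul_assoc (d.lt' a), d.lt'_lt_self, one_mul, ih]

theorem γ_U (g : G) (u) : ∃ v h, d.γ g * d.U u = d.U v * d.γ h := by
  induction u generalizing g with
  | nil => exact ⟨[], g, by simp [U]⟩
  | cons a u ih =>
    obtain ⟨b, h, e⟩ := d.γ_lt g a
    obtain ⟨v, h', e'⟩ := ih h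
    refine ⟨b :: v, h', ?_⟩
    simp only [U]
    rw [← mul_assoc, e, mul_assoc, e', mul_assoc]

def mono (t : List (Option G) × G × List (Option G)) : R := d.U t.1 * d.γ t.2.1 * d.U' t.2.2

def Span : AddSubgroup R := AddSubgroup.closure (Set.range d.mono)

theorem mono_mem (u g v) : d.U u * d.γ g * d.U' v ∈ d.Span :=
  AddSubgroup.subset_closure ⟨(u, g, v), rfl⟩

theorem span_of_mul {r : R} (h : ∀ u g v, r * (d.U u * d.γ g * d.U' v) ∈ d.Span) :
    ∀ x ∈ d.Span, r * x ∈ d.Span := by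
  intro x hx
  induction hx using AddSubgroup.closure_induction with
  | mem x hx => obtain ⟨⟨u, g, v⟩, rfl⟩ := hx; exact h u g v
  | zero => rw [mul_zero]; exact zero_mem _
  | add x y _ _ h1 h2 => rw [mul_add]; exact add_mem h1 h2
  | neg x _ h1 => rw [mul_neg]; exact neg_mem h1

theorem span_lt (a : Option G) : ∀ x ∈ d.Span, d.lt a * x ∈ d.Span := by
  apply d.span_of_mul
  intro u g v
  rw [← mul_assoc, ← mul_assoc]
  exact d.mono_mem (a :: u) g v

theorem span_lt' (a : Option G) : ∀ x ∈ d.Span, d.lt' a * x ∈ d.Span := by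
  apply d.span_of_mul
  intro u g v
  cases u with
  | nil =>
    have : ∃ b h, d.lt' a * d.γ g = d.γ h * d.lt' b := by
      cases a with
      | none => exact ⟨none, g, d.hp'γ g⟩
      | some x => exact ⟨some (g⁻¹ * x), 1, by simp [lt', mul_assoc]⟩
    obtain ⟨b, h, e⟩ := this
    have h3 := d.mono_mem [] h (v ++ [b])
    rw [U'_append] at h3
    simp only [U, U', one_mul] at h3 ⊢
    rwa [← mul_assoc, e, mul_assoc]
  | cons b u =>
    simp only [U]
    by_cases hab : a = b
    · subst hab
      rw [← mul_assoc, ← mul_assoc, ← mul_assoc, d.lt'_lt_self, one_mul]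
      exact d.mono_mem u g v
    · rw [← mul_assoc, ← mul_assoc, ← mul_assoc, d.lt'_lt_ne hab]
      simp [zero_mem]

theorem span_γ (g : G) : ∀ x ∈ d.Span, d.γ g * x ∈ d.Span := by
  apply d.span_of_mul
  intro u h v
  obtain ⟨u', h', e⟩ := d.γ_U g u
  rw [← mul_assoc, ← mul_assoc, e, mul_assoc _ _ (d.γ h), ← map_mul]
  exact d.mono_mem u' _ v

theorem span_top (r : R) : r ∈ d.Span := by
  have key : ∀ r : R, ∀ x ∈ d.Span, r * x ∈ d.Span := by
    intro r
    have hr : r ∈ Subring.closure (Set.range d.γ ∪ {d.s, d.s', d.p, d.p'}) := by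
      rw [d.hgen]; trivial
    induction hr using Subring.closure_induction with
    | mem x hx =>
      rcases hx with ⟨g, rfl⟩ | hx
      · exact d.span_γ g
      · simp only [Set.mem_insert_iff, Set.mem_singleton_iff] at hx
        rcases hx with rfl | rfl | rfl | rfl
        · simpa [lt] using d.span_lt (some 1)
        · simpa [lt'] using d.span_lt' (some 1)
        · exact d.span_lt none
        · exact d.span_lt' none
    | zero => intro x _; rw [zero_mul]; exact zero_mem _
    | one => intro x hx; rwa [one_mul]
    | add x y _ _ h1 h2 => intro z hz; rw [add_mul]; exact add_mem (h1 z hz) (h2 z hz)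
    | neg x _ h1 => intro z hz; rw [neg_mul]; exact neg_mem (h1 z hz)
    | mul x y _ _ h1 h2 => intro z hz; rw [mul_assoc]; exact h1 _ (h2 z hz)
  have := key r 1 (by simpa [U, U'] using d.mono_mem [] 1 [])
  rwa [mul_one] at this

theorem exists_finset (r : R) : ∃ F : Finset (List (Option G) × G × List (Option G)),
    r = ∑ t ∈ F, d.mono t := by
  classical
  have hr := d.span_top r
  induction hr using AddSubgroup.closure_induction with
  | mem x hx => obtain ⟨t, rfl⟩ := hx; exact ⟨{t}, by simp⟩
  | zero => exact ⟨∅, by simp⟩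
  | neg x _ h => obtain ⟨F, h⟩ := h; exact ⟨F, by rw [d.neg_eq, h]⟩
  | add x y _ _ h1 h2 =>
    obtain ⟨F, rfl⟩ := h1
    obtain ⟨F', rfl⟩ := h2
    induction F' using Finset.induction_on with
    | empty => exact ⟨F, by simp⟩
    | insert t F' ht ih =>
      obtain ⟨F₁, e⟩ := ih (d.span_top _)
      rw [Finset.sum_insert ht]
      by_cases h : t ∈ F₁
      · refine ⟨F₁.erase t, ?_⟩
        rw [← Finset.add_sum_erase _ _ h] at e
        rw [add_left_comm, e, ← add_assoc, d.h2, zero_add]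
      · refine ⟨insert t F₁, ?_⟩
        rw [Finset.sum_insert h, add_left_comm, e]

theorem U'_U_of_le {v v₀ : List (Option G)} (h : v₀.length ≤ v.length) :
    (∃ t, v = v₀ ++ t ∧ d.U' v * d.U v₀ = d.U' t ∧ d.U' v₀ * d.U v = d.U t) ∨
    (¬ v₀ <+: v ∧ d.U' v * d.U v₀ = 0 ∧ d.U' v₀ * d.U v = 0) := by
  induction v₀ generalizing v with
  | nil => left; exact ⟨v, rfl, by simp [U], by simp [U']⟩
  | cons a v₀ ih =>
    cases v with
    | nil => simp at h
    | cons b v =>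
      by_cases hab : a = b
      · subst hab
        have e1 : d.U' (a :: v) * d.U (a :: v₀) = d.U' v * d.U v₀ := by
          simp only [U, U']
          rw [mul_assoc, ← mul_assoc (d.lt' a), d.lt'_lt_self, one_mul]
        have e2 : d.U' (a :: v₀) * d.U (a :: v) = d.U' v₀ * d.U v := by
          simp only [U, U']
          rw [mul_assoc, ← mul_assoc (d.lt' a), d.lt'_lt_self, one_mul]
        rw [e1, e2]
        rcases ih (v := v) (by simpa using h) with ⟨t, rfl, h1, h2⟩ | ⟨h1, h2⟩
        · exact .inl ⟨t, rfl, h1, h2⟩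
        · exact .inr ⟨fun hh => h1 (by simpa using hh), h2⟩
      · right
        refine ⟨fun hh => hab (by simpa using (List.cons_prefix_cons.1 hh).1), ?_, ?_⟩
        · simp only [U, U']
          rw [mul_assoc, ← mul_assoc (d.lt' b), d.lt'_lt_ne (Ne.symm hab)]; simp
        · simp only [U, U']
          rw [mul_assoc, ← mul_assoc (d.lt' a), d.lt'_lt_ne hab]; simp

theorem exists_one_words [Infinite G] (F : Finset (List (Option G))) (hF : F.Nonempty) :
    ∃ x y, x * (∑ w ∈ F, d.U w) * y = 1 := by
  classical
  obtain ⟨w₀, hw, hmin⟩ := F.exists_min_image List.length hF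
  obtain ⟨h, hh⟩ := Infinite.exists_notMem_finset
    (F.image fun w => ((w.drop w₀.length).head?.join).getD 1)
  refine ⟨d.lt' (some h) * d.U' w₀, d.lt (some h), ?_⟩
  rw [Finset.mul_sum, Finset.sum_mul, Finset.sum_eq_single_of_mem w₀ hw]
  · rw [mul_assoc (d.lt' _), d.U'_U_self, mul_one, d.lt'_lt_self]
  · intro w hwF hne
    rcases d.U'_U_of_le (hmin w hwF) with ⟨t, rfl, -, h2⟩ | ⟨-, -, h2⟩
    · rw [mul_assoc (d.lt' _), h2]
      cases t with
      | nil => simp at hne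
      | cons a t =>
        simp only [U]
        rw [← mul_assoc (d.lt' _), d.lt'_lt_ne]
        · simp
        · rintro rfl
          apply hh
          rw [Finset.mem_image]
          exact ⟨_, hwF, by simp⟩
    · rw [mul_assoc (d.lt' _), h2]; simp

include d in
theorem exists_one [Infinite G] {r : R} (hr : r ≠ 0) : ∃ x y, x * r * y = 1 := by
  classical
  obtain ⟨F, rfl⟩ := d.exists_finset r
  have hF : F.Nonempty := by
    rw [Finset.nonempty_iff_ne_empty]
    rintro rfl
    simp at hr
  obtain ⟨⟨u₀, g₀, v₀⟩, hw, hmin⟩ := F.exists_min_image (fun t => t.2.2.length) hF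
  obtain ⟨h, hh⟩ := Infinite.exists_notMem_finset
    (F.image fun w => ((w.2.2.drop v₀.length).head?.join).getD 1)
  let F₁ := F.filter fun t => t.2.2 = v₀
  let f : List (Option G) × G × List (Option G) → List (Option G) :=
    fun t => t.1 ++ [some (t.2.1 * h)]
  have hf : Set.InjOn f F₁ := by
    rintro ⟨u, g, v⟩ h1 ⟨u', g', v'⟩ h2 e
    simp only [F₁, Finset.coe_filter, Set.mem_setOf_eq] at h1 h2
    have e2 := List.append_inj' e rfl
    simp only [List.cons.injEq, Option.some.injEq, mul_left_inj, and_true] at e2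
    rw [h1.2, h2.2, e2.1, e2.2]
  have key : (∑ t ∈ F, d.mono t) * (d.U v₀ * d.lt (some h)) = ∑ w ∈ F₁.image f, d.U w := by
    rw [Finset.sum_image hf, Finset.sum_mul, Finset.sum_filter]
    refine Finset.sum_congr rfl ?_
    rintro ⟨u, g, v⟩ ht
    have hle := hmin _ ht
    simp only at hle
    simp only [mono, f]
    rw [mul_assoc, ← mul_assoc (d.U' v)]
    rcases d.U'_U_of_le hle with ⟨t, rfl, h1, -⟩ | ⟨h0, h1, -⟩
    · rw [h1]
      cases t with
      | nil => simp [U', U_append, U, lt, mul_assoc]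
      | cons a t =>
        rw [if_neg (by simp)]
        simp only [U']
        rw [mul_assoc (d.U' t), d.lt'_lt_ne]
        · simp
        · rintro rfl
          apply hh
          rw [Finset.mem_image]
          exact ⟨_, ht, by simp⟩
    · rw [h1, if_neg]
      · simp
      · rintro rfl
        exact h0 (List.prefix_refl _)
  have hne : (F₁.image f).Nonempty :=
    Finset.Nonempty.image ⟨(u₀, g₀, v₀), by simp [F₁, hw]⟩ f
  obtain ⟨x, y, hxy⟩ := d.exists_one_words _ hne
  rw [← key] at hxy
  exact ⟨x, d.U v₀ * d.lt (some h) * y, by simpa only [mul_assoc] using hxy⟩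

end RD
end BHP

/-! ### Part 4b: the elementary group -/
namespace BHP
namespace RD
variable {G R : Type} [Group G] [Ring R] (d : RD G R)

def σ (g : G) : R := d.lt (some g)
def σ' (g : G) : R := d.lt' (some g)

theorem σσ (g : G) : d.σ' g * d.σ g = 1 := d.lt'_lt_self _
theorem σσ_ne {g h : G} (hgh : g ≠ h) : d.σ' g * d.σ h = 0 := d.lt'_lt_ne (by simpa using hgh)
theorem σσ_assoc (g : G) (x : R) : d.σ' g * (d.σ g * x) = x := by rw [← mul_assoc, σσ, one_mul]
theorem σσ_ne_assoc {g h : G} (hgh : g ≠ h) (x : R) : d.σ' g * (d.σ h * x) = 0 := by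
  rw [← mul_assoc, σσ_ne _ hgh, zero_mul]

/-- `1 + x` as a unit when `x ^ 2 = 0`. -/
def un (x : R) (hx : x * x = 0) : Rˣ where
  val := 1 + x
  inv := 1 + x
  val_inv := by
    have : (1 + x) * (1 + x) = 1 + (x + x) + x * x := by noncomm_ring
    rw [this, d.h2, hx]; simp
  inv_val := by
    have : (1 + x) * (1 + x) = 1 + (x + x) + x * x := by noncomm_ring
    rw [this, d.h2, hx]; simp

theorem e_sq {g h : G} (hgh : g ≠ h) (r : R) :
    (d.σ g * r * d.σ' h) * (d.σ g * r * d.σ' h) = 0 := by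
  simp only [mul_assoc, d.σσ_ne_assoc hgh.symm, mul_zero]

open Classical in
/-- elementary units -/
noncomputable def e (g h : G) (r : R) : Rˣ :=
  if hgh : g ≠ h then d.un (d.σ g * r * d.σ' h) (d.e_sq hgh r) else 1

theorem e_val {g h : G} (hgh : g ≠ h) (r : R) : ((d.e g h r : Rˣ) : R) = 1 + d.σ g * r * d.σ' h := by
  rw [e, dif_pos hgh]; rfl

theorem e_inv (g h : G) (r : R) : (d.e g h r)⁻¹ = d.e g h r := by
  by_cases hgh : g ≠ h
  · rw [e, dif_pos hgh]; rfl
  · rw [e, dif_neg hgh]; simp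

theorem e_add {g h : G} (hgh : g ≠ h) (r r' : R) : d.e g h r * d.e g h r' = d.e g h (r + r') := by
  ext
  rw [Units.val_mul, d.e_val hgh, d.e_val hgh, d.e_val hgh]
  have : (d.σ g * r * d.σ' h) * (d.σ g * r' * d.σ' h) = 0 := by
    simp only [mul_assoc, d.σσ_ne_assoc hgh.symm, mul_zero]
  have h3 : ∀ x y : R, (1 + x) * (1 + y) = 1 + (x + y) + x * y := by intros; noncomm_ring
  rw [h3, this, mul_add, add_mul, add_zero]

theorem e_comm {a b c : G} (hab : a ≠ b) (hbc : b ≠ c) (hac : a ≠ c) (r r' : R) :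
    d.e a b r * d.e b c r' * (d.e a b r)⁻¹ * (d.e b c r')⁻¹ = d.e a c (r * r') := by
  rw [e_inv, e_inv]
  ext
  simp only [Units.val_mul, d.e_val hab, d.e_val hbc, d.e_val hac, mul_add, add_mul, mul_one,
    one_mul, mul_assoc, d.σσ_ne_assoc hab.symm, d.σσ_ne_assoc hbc.symm, d.σσ_ne_assoc hac.symm,
    d.σσ_assoc, mul_zero, add_zero]
  set x := d.σ a * (r * d.σ' b)
  set y := d.σ b * (r' * d.σ' c)
  set z := d.σ a * (r * (r' * d.σ' c))
  have : 1 + x + (y + z) + x + (y + z + z)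
     = 1 + (x + x) + (y + y) + z + (z + z) := by abel
  rw [this]; simp only [d.h2, add_zero]

/-- the elementary group -/
def E : Subgroup Rˣ := Subgroup.closure {u | ∃ g h r, g ≠ h ∧ u = d.e g h r}

theorem e_mem (g h : G) (r : R) : d.e g h r ∈ d.E := by
  by_cases hgh : g ≠ h
  · exact Subgroup.subset_closure ⟨g, h, r, hgh, rfl⟩
  · rw [e, dif_neg hgh]; exact one_mem _

def fc (P : Finset G) : R := 1 + ∑ g ∈ P, d.σ g * d.σ' g

theorem σ'_fc_mem {P : Finset G} {k : G} (hk : k ∈ P) : d.σ' k * d.fc P = 0 := by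
  classical
  rw [fc, mul_add, Finset.mul_sum, Finset.sum_eq_single_of_mem k hk]
  · rw [σσ_assoc, mul_one, d.h2]
  · intro b _ hb; rw [d.σσ_ne_assoc hb.symm]

theorem fc_σ_mem {P : Finset G} {k : G} (hk : k ∈ P) : d.fc P * d.σ k = 0 := by
  classical
  rw [fc, add_mul, Finset.sum_mul, Finset.sum_eq_single_of_mem k hk]
  · rw [mul_assoc, σσ, mul_one, one_mul, d.h2]
  · intro b _ hb; rw [mul_assoc, d.σσ_ne hb, mul_zero]

theorem σ'_fc_notMem {P : Finset G} {k : G} (hk : k ∉ P) : d.σ' k * d.fc P = d.σ' k := by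
  rw [fc, mul_add, Finset.mul_sum, Finset.sum_eq_zero, mul_one, add_zero]
  intro b hb; rw [d.σσ_ne_assoc]; rintro rfl; exact hk hb

theorem fc_σ_notMem {P : Finset G} {k : G} (hk : k ∉ P) : d.fc P * d.σ k = d.σ k := by
  rw [fc, add_mul, Finset.sum_mul, Finset.sum_eq_zero, one_mul, add_zero]
  intro b hb; rw [mul_assoc, d.σσ_ne, mul_zero]; rintro rfl; exact hk hb

/-- supported on the complement of `P` trivially -/
def Fx (P : Finset G) (x : R) : Prop := x * d.fc P = d.fc P ∧ d.fc P * x = d.fc P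

theorem fx_mono {P P' : Finset G} (h : P ⊆ P') {x : R} (hx : d.Fx P x) : d.Fx P' x := by
  have e1 : d.fc P * d.fc P' = d.fc P' := by
    rw [fc, add_mul, one_mul, Finset.sum_mul, Finset.sum_eq_zero, add_zero]
    intro k hk
    rw [mul_assoc, d.σ'_fc_mem (h hk), mul_zero]
  have e2 : d.fc P' * d.fc P = d.fc P' := by
    rw [fc, fc, ← fc, mul_add, mul_one, Finset.mul_sum, Finset.sum_eq_zero, add_zero]
    intro k hk
    rw [← mul_assoc, d.fc_σ_mem (h hk), zero_mul]
  constructor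
  · rw [← e1, ← mul_assoc, hx.1]
  · rw [← e2, mul_assoc, hx.2]

theorem fx_E {n : Rˣ} (hn : n ∈ d.E) : ∃ P, d.Fx P (n : R) := by
  classical
  induction hn using Subgroup.closure_induction with
  | mem x hx =>
    obtain ⟨g, h, r, hgh, rfl⟩ := hx
    refine ⟨{g, h}, ?_⟩
    rw [Fx, d.e_val hgh]
    constructor
    · rw [add_mul, one_mul, mul_assoc, d.σ'_fc_mem (by simp), mul_zero, add_zero]
    · rw [mul_add, mul_one, ← mul_assoc, ← mul_assoc, d.fc_σ_mem (by simp), zero_mul, zero_mul,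
        add_zero]
  | one => exact ⟨∅, by simp [Fx]⟩
  | mul x y _ _ h1 h2 =>
    obtain ⟨P, h1⟩ := h1
    obtain ⟨P', h2⟩ := h2
    have h1 := d.fx_mono (Finset.subset_union_left (s₂ := P')) h1
    have h2 := d.fx_mono (Finset.subset_union_right (s₁ := P)) h2
    refine ⟨P ∪ P', ?_⟩
    rw [Units.val_mul]
    constructor
    · rw [mul_assoc, h2.1, h1.1]
    · rw [← mul_assoc, h1.2, h2.2]
  | inv x _ h =>
    obtain ⟨P, h⟩ := h
    refine ⟨P, ?_, ?_⟩
    · rw [Units.inv_mul_eq_iff_eq_mul, h.1]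
    · rw [Units.mul_inv_eq_iff_eq_mul, h.2]

theorem fx_nσ {P : Finset G} {x : R} (hx : d.Fx P x) {k : G} (hk : k ∉ P) : x * d.σ k = d.σ k := by
  rw [← d.fc_σ_notMem hk, ← mul_assoc, hx.1]

theorem fx_σ'n {P : Finset G} {x : R} (hx : d.Fx P x) {k : G} (hk : k ∉ P) :
    d.σ' k * x = d.σ' k := by
  rw [← d.σ'_fc_notMem hk, mul_assoc, hx.2]

theorem exists_entry {P : Finset G} {x : R} (hx : d.Fx P x) (h1 : x ≠ 1) :
    ∃ a b, d.σ' a * (x + 1) * d.σ b ≠ 0 := by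
  by_contra! hall
  apply h1
  have hy : x + 1 = 0 := by
    set y := x + 1 with hy
    have y1 : y * d.fc P = 0 := by rw [hy, add_mul, one_mul, hx.1, d.h2]
    have y2 : d.fc P * y = 0 := by rw [hy, mul_add, mul_one, hx.2, d.h2]
    set f := ∑ g ∈ P, d.σ g * d.σ' g with hf
    have hfc : d.fc P = 1 + f := rfl
    have y3 : y * f = y := by
      rw [hfc, mul_add, mul_one] at y1
      rw [← d.neg_eq (y * f)]; exact (eq_neg_of_add_eq_zero_left y1).symm
    have y4 : f * y = y := by
      rw [hfc, add_mul, one_mul] at y2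
      rw [← d.neg_eq (f * y)]; exact (eq_neg_of_add_eq_zero_left y2).symm
    rw [← y3, ← y4, hf, Finset.mul_sum]
    refine Finset.sum_eq_zero fun b _ => ?_
    rw [Finset.sum_mul, Finset.sum_mul]
    refine Finset.sum_eq_zero fun a _ => ?_
    have := hall a b
    rw [show d.σ a * d.σ' a * y * (d.σ b * d.σ' b) = d.σ a * (d.σ' a * y * d.σ b) * d.σ' b by
      simp only [mul_assoc], this]
    simp
  rw [← d.neg_eq 1]; exact eq_neg_of_add_eq_zero_left hy

theorem exists_notMem [Infinite G] (P : Finset G) : ∃ k, k ∉ P := Infinite.exists_notMem_finset P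

theorem all_of_one [Infinite G] {M : Subgroup Rˣ} (hM : ∀ n ∈ M, ∀ x ∈ d.E, x * n * x⁻¹ ∈ M)
    {l k : G} (hlk : l ≠ k) (h : ∀ t, d.e l k t ∈ M) : d.E ≤ M := by
  classical
  have comm : ∀ n ∈ M, ∀ x ∈ d.E, x * n * x⁻¹ * n⁻¹ ∈ M := fun n hn x hx =>
    M.mul_mem (hM n hn x hx) (M.inv_mem hn)
  have comm' : ∀ n ∈ M, ∀ x ∈ d.E, n * x * n⁻¹ * x⁻¹ ∈ M := fun n hn x hx => by
    have := M.mul_mem hn (hM _ (M.inv_mem hn) x hx)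
    simpa only [mul_assoc] using this
  have h1 : ∀ g, g ≠ k → ∀ t, d.e g k t ∈ M := by
    intro g hg t
    by_cases hgl : g = l
    · subst hgl; exact h t
    · have := comm _ (h t) _ (d.e_mem g l 1)
      rwa [d.e_comm hgl hlk hg, one_mul] at this
  have h2 : ∀ g h, g ≠ h → g ≠ k → ∀ t, d.e g h t ∈ M := by
    intro g h hgh hgk t
    by_cases hhk : h = k
    · subst hhk; exact h1 g hgk t
    · have := comm' _ (h1 g hgk t) _ (d.e_mem k h 1)
      rwa [d.e_comm hgk (Ne.symm hhk) hgh, mul_one] at this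
  rw [E, Subgroup.closure_le]
  rintro _ ⟨g, j, t, hgh, rfl⟩
  by_cases hgk : g = k
  · obtain ⟨g', hg'⟩ := exists_notMem ({g, j} : Finset G)
    simp only [Finset.mem_insert, Finset.mem_singleton, not_or] at hg'
    have := comm _ (h2 g' j hg'.2 (hgk ▸ hg'.1) t) _ (d.e_mem g g' 1)
    rwa [d.e_comm (Ne.symm hg'.1) hg'.2 hgh, one_mul] at this
  · exact h2 g j hgh hgk t

theorem E_le_of_ne_one [Infinite G] {M : Subgroup Rˣ} (hME : M ≤ d.E)
    (hM : ∀ n ∈ M, ∀ x ∈ d.E, x * n * x⁻¹ ∈ M)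
    {n : Rˣ} (hn : n ∈ M) (hn1 : n ≠ 1) : d.E ≤ M := by
  classical
  obtain ⟨P, hP⟩ := d.fx_E (hME hn)
  obtain ⟨P', hP'⟩ := d.fx_E (hME (M.inv_mem hn))
  replace hP' := d.fx_mono (Finset.subset_union_right (s₁ := P)) hP'
  replace hP := d.fx_mono (Finset.subset_union_left (s₂ := P')) hP
  set P₁ := P ∪ P'
  obtain ⟨a, b, hc⟩ := d.exists_entry hP (by simpa using hn1)
  obtain ⟨x, y, hxy⟩ := d.exists_one hc
  obtain ⟨k, hk⟩ := exists_notMem (P₁ ∪ {a, b})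
  obtain ⟨l, hl⟩ := exists_notMem (P₁ ∪ {a, b, k})
  simp only [Finset.mem_insert, Finset.mem_singleton, not_or, Finset.mem_union] at hk hl
  obtain ⟨hkP, hka, hkb⟩ := hk
  obtain ⟨hlP, hla, hlb, hlk⟩ := hl
  have hkP : k ∉ P₁ := by simpa [P₁] using hkP
  have hlP : l ∉ P₁ := by simpa [P₁] using hlP
  refine d.all_of_one hM hlk fun t => ?_
  -- first commutator
  let m₁ := n * d.e b k y * n⁻¹ * (d.e b k y)⁻¹
  have hm₁ : m₁ ∈ M := by
    have := M.mul_mem hn (hM _ (M.inv_mem hn) _ (d.e_mem b k y))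
    simpa only [m₁, mul_assoc] using this
  set Y : R := ((n : R) + 1) * d.σ b * y with hY
  have kY : d.σ' k * Y = 0 := by
    rw [hY, ← mul_assoc, ← mul_assoc, mul_add, d.fx_σ'n hP hkP, mul_one, d.h2]; simp
  have v₁ : (m₁ : R) = 1 + Y * d.σ' k := by
    have e1 : ((n * d.e b k y * n⁻¹ : Rˣ) : R) = 1 + n * d.σ b * y * d.σ' k := by
      rw [Units.val_mul, Units.val_mul, d.e_val (Ne.symm hkb), mul_add, mul_one, add_mul,
        Units.mul_inv]
      congr 1
      rw [mul_assoc, mul_assoc, mul_assoc, d.fx_σ'n hP' hkP]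
      simp only [mul_assoc]
    have e2 : (m₁ : R) = (1 + n * d.σ b * y * d.σ' k) * (1 + d.σ b * y * d.σ' k) := by
      rw [← e1, ← d.e_val (Ne.symm hkb), ← Units.val_mul]
      simp only [m₁, e_inv]
    rw [e2, hY]
    simp only [mul_add, add_mul, mul_one, one_mul, mul_assoc, d.σσ_ne_assoc hkb, mul_zero,
      add_zero]
    abel
  have i₁ : ((m₁⁻¹ : Rˣ) : R) = 1 + Y * d.σ' k := by
    rw [Units.inv_eq_of_mul_eq_one_right]
    rw [v₁]
    exact (d.un (Y * d.σ' k) (by rw [mul_assoc, ← mul_assoc _ Y, kY]; simp)).val_inv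
  have hm₂ : d.e l a (t * x) * m₁ * (d.e l a (t * x))⁻¹ * m₁⁻¹ ∈ M :=
    M.mul_mem (hM _ hm₁ _ (d.e_mem _ _ _)) (M.inv_mem hm₁)
  have : d.e l a (t * x) * m₁ * (d.e l a (t * x))⁻¹ * m₁⁻¹ = d.e l k t := by
    ext
    rw [e_inv, Units.val_mul, Units.val_mul, Units.val_mul, i₁, v₁, d.e_val hla, d.e_val hlk]
    have aY : d.σ' a * Y = d.σ' a * (n + 1) * d.σ b * y := by rw [hY]; simp only [mul_assoc]
    have e3 : (1 + d.σ l * (t * x) * d.σ' a) * Y = Y + d.σ l * t := by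
      rw [add_mul, one_mul, mul_assoc, aY]
      congr 1
      have : x * (d.σ' a * (n + 1) * d.σ b * y) = 1 := by
        simpa only [mul_assoc] using hxy
      rw [mul_assoc (d.σ l), mul_assoc t, this, mul_one]
    have e4 : (1 + d.σ l * (t * x) * d.σ' a) * (1 + d.σ l * (t * x) * d.σ' a) = 1 := by
      have := d.e_inv l a (t * x)
      rw [← d.e_val hla, ← Units.val_mul]
      nth_rewrite 1 [← this]
      simp
    have e5 : d.σ' k * (1 + d.σ l * (t * x) * d.σ' a) = d.σ' k := by
      rw [mul_add, mul_one, mul_assoc, d.σσ_ne_assoc (Ne.symm hlk), add_zero]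
    generalize 1 + d.σ l * (t * x) * d.σ' a = ε at e3 e4 e5
    have e6 : ε * (1 + Y * d.σ' k) * ε * (1 + Y * d.σ' k) =
        (ε * ε + (ε * Y) * (d.σ' k * ε)) * (1 + Y * d.σ' k) := by noncomm_ring
    have e7 : ∀ z : R, (1 + z * d.σ' k) * (1 + Y * d.σ' k) =
        1 + z * d.σ' k + Y * d.σ' k + z * (d.σ' k * Y) * d.σ' k := by intro z; noncomm_ring
    rw [e6, e4, e3, e5, e7, kY]
    simp only [zero_mul, mul_zero, add_zero, add_mul]
    rw [show 1 + (Y * d.σ' k + d.σ l * t * d.σ' k) + Y * d.σ' k =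
      1 + d.σ l * t * d.σ' k + (Y * d.σ' k + Y * d.σ' k) by abel, d.h2, add_zero]
  rwa [this] at hm₂

theorem e_ne_one [Nontrivial R] {g h : G} (hgh : g ≠ h) : d.e g h 1 ≠ 1 := by
  intro h1
  have := congrArg (fun u : Rˣ => d.σ' g * (u : R) * d.σ h) h1
  simp only [d.e_val hgh, mul_add, add_mul, Units.val_one, mul_one, mul_assoc, d.σσ_ne hgh,
    d.σσ, d.σσ_assoc, zero_add] at this
  exact one_ne_zero this

theorem E_simple [Infinite G] [Nontrivial R] : IsSimpleGroup d.E := by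
  have : Nontrivial d.E := by
    obtain ⟨g, h, hgh⟩ := exists_pair_ne G
    exact ⟨⟨⟨d.e g h 1, d.e_mem g h 1⟩, 1, fun hh => d.e_ne_one hgh (congrArg Subtype.val hh)⟩⟩
  refine { eq_bot_or_eq_top_of_normal := fun M hM => ?_ }
  by_cases hb : M = ⊥
  · exact .inl hb
  right
  obtain ⟨⟨n, hn⟩, hn1⟩ := Subgroup.ne_bot_iff_exists_ne_one.1 hb
  replace hn1 : n ≠ 1 := fun h => hn1 (Subtype.ext h)
  have := d.E_le_of_ne_one (M := M.map d.E.subtype) (by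
      rintro _ ⟨x, _, rfl⟩; exact x.2)
    (by
      rintro _ ⟨x, hx, rfl⟩ y hy
      exact ⟨⟨y, hy⟩ * x * ⟨y, hy⟩⁻¹, hM.conj_mem x hx _, rfl⟩)
    (n := n) ⟨n, hn, rfl⟩ (fun h => hn1 (Subtype.ext h))
  rw [eq_top_iff]
  rintro ⟨x, hx⟩ -
  obtain ⟨y, hy, e⟩ := this hx
  have : y = ⟨x, hx⟩ := Subtype.ext e
  rwa [← this]

end RD
end BHP

/-! ### Part 4c: embedding of the group and finite generation -/
namespace BHP
namespace RD
variable {G R : Type} [Group G] [Ring R] (d : RD G R)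

/-- projection-like element -/
def q : R := d.p * d.p'

theorem q_p : d.q * d.p = d.p := by rw [q, mul_assoc, d.hpp, mul_one]
theorem p'_q : d.p' * d.q = d.p' := by rw [q, ← mul_assoc, d.hpp, one_mul]
theorem q_q : d.q * d.q = d.q := by rw [q, mul_assoc, ← mul_assoc d.p', d.hpp, one_mul]
theorem γ_q (g : G) : d.γ g * d.q = d.q * d.γ g := by
  rw [q, ← mul_assoc, d.hpγ, mul_assoc, mul_assoc, d.hp'γ]

/-- the twisted copy of `G` -/
def τ : G →* R where
  toFun g := d.q + (1 + d.q) * d.γ g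
  map_one' := by
    rw [map_one, mul_one, add_left_comm, d.h2, add_zero]
  map_mul' g h := by
    have e1 : (d.q + (1 + d.q) * d.γ g) * (d.q + (1 + d.q) * d.γ h) =
      d.q * d.q + (d.q + d.q * d.q) * d.γ h + (1 + d.q) * (d.γ g * d.q)
        + ((1 + d.q) * (d.γ g + d.γ g * d.q)) * d.γ h := by noncomm_ring
    have e2 : (1 + d.q) * (d.q * d.γ g) = (d.q + d.q * d.q) * d.γ g := by noncomm_ring
    have e3 : (1 + d.q) * (d.γ g + d.q * d.γ g) = (1 + d.q + (d.q + d.q * d.q)) * d.γ g := by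
      noncomm_ring
    rw [e1, γ_q, e2, e3, q_q, d.h2, map_mul]
    simp only [zero_mul, add_zero, mul_assoc]

theorem τ_apply (g : G) : d.τ g = d.q + (1 + d.q) * d.γ g := rfl

/-- corner idempotent -/
def j (b : G) : R := 1 + (d.σ 1 * d.σ' 1 + d.σ b * d.σ' b)

/-- two by two matrices -/
def T (b : G) (x y z w : R) : R :=
  d.j b + (d.σ 1 * (x * d.σ' 1) + d.σ 1 * (y * d.σ' b) + d.σ b * (z * d.σ' 1) + d.σ b * (w * d.σ' b))

section
variable {b : G} (hb : 1 ≠ b)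
include hb

theorem j_σ1 : d.j b * d.σ 1 = 0 := by
  simp only [j, add_mul, one_mul, mul_assoc, σσ, d.σσ_ne hb.symm, mul_one, mul_zero, add_zero, d.h2]
theorem j_σb : d.j b * d.σ b = 0 := by
  simp only [j, add_mul, one_mul, mul_assoc, σσ, d.σσ_ne hb, mul_one, mul_zero, zero_add, d.h2]
theorem σ1_j : d.σ' 1 * d.j b = 0 := by
  simp only [j, mul_add, σσ_assoc, d.σσ_ne_assoc hb, mul_one, add_zero, d.h2]
theorem σb_j : d.σ' b * d.j b = 0 := by
  simp only [j, mul_add, σσ_assoc, d.σσ_ne_assoc hb.symm, mul_one, zero_add, d.h2]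
theorem j_j : d.j b * d.j b = d.j b := by
  have : d.j b * d.j b = d.j b * 1 + d.j b * d.σ 1 * d.σ' 1 + d.j b * d.σ b * d.σ' b := by
    nth_rewrite 2 [j]; noncomm_ring
  rw [this, d.j_σ1 hb, d.j_σb hb]; simp

theorem T_mul (x y z w x' y' z' w' : R) : d.T b x y z w * d.T b x' y' z' w' =
    d.T b (x * x' + y * z') (x * y' + y * w') (z * x' + w * z') (z * y' + w * w') := by
  have e1 : ∀ r, d.j b * (d.σ 1 * r) = 0 := fun r => by rw [← mul_assoc, d.j_σ1 hb, zero_mul]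
  have e2 : ∀ r, d.j b * (d.σ b * r) = 0 := fun r => by rw [← mul_assoc, d.j_σb hb, zero_mul]
  simp only [T, mul_add, add_mul, mul_assoc, e1, e2, d.j_j hb, d.σ1_j hb, d.σb_j hb, mul_zero,
    add_zero, zero_add, σσ_assoc, d.σσ_ne_assoc hb, d.σσ_ne_assoc hb.symm]
  abel

theorem T_12 (r : R) : (d.e 1 b r : R) = d.T b 1 r 0 1 := by
  rw [d.e_val hb, T, j]
  simp only [one_mul, zero_mul, mul_zero, add_zero, mul_assoc]
  rw [show ∀ a b c : R, 1 + (a + b) + (a + c + b) = 1 + c + (a + a) + (b + b) by intros; abel,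
    d.h2, d.h2, add_zero, add_zero]

theorem T_21 (r : R) : (d.e b 1 r : R) = d.T b 1 0 r 1 := by
  rw [d.e_val hb.symm, T, j]
  simp only [one_mul, zero_mul, mul_zero, add_zero, mul_assoc]
  rw [show ∀ a b c : R, 1 + (a + b) + (a + c + b) = 1 + c + (a + a) + (b + b) by intros; abel,
    d.h2, d.h2, add_zero, add_zero]

theorem τ_prod (g : G) : d.T b (d.τ g) 0 0 1 =
   ((d.e 1 b d.p * d.e b 1 d.p' * d.e 1 b d.p *
    (d.e 1 b 1 * d.e b 1 1 * d.e 1 b 1) *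
    (d.e 1 b (d.γ g⁻¹) * d.e b 1 (d.γ g) * d.e 1 b (d.γ g⁻¹)) *
    (d.e 1 b (d.γ g⁻¹ * d.p) * d.e b 1 (d.p' * d.γ g) * d.e 1 b (d.γ g⁻¹ * d.p)) : Rˣ) : R) := by
  have g1 : d.γ g * d.γ g⁻¹ = 1 := by rw [← map_mul]; simp
  have g2 : d.γ g⁻¹ * d.γ g = 1 := by rw [← map_mul]; simp
  have hq0 : d.p * d.p' = d.q := rfl
  have m1 : (d.T b 1 d.p 0 1 * d.T b 1 0 d.p' 1 * d.T b 1 d.p 0 1) = d.T b (1 + d.q) d.p d.p' 0 := by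
    simp only [d.T_mul hb, mul_one, one_mul, mul_zero, zero_mul, add_zero, zero_add, hq0, d.hpp,
      d.h2, add_mul, q_p]
  have m2 : (d.T b 1 1 0 1 * d.T b 1 0 1 1 * d.T b 1 1 0 1) = d.T b 0 1 1 0 := by
    simp only [d.T_mul hb, mul_one, one_mul, mul_zero, zero_mul, add_zero, zero_add, d.h2]
  have m3 : (d.T b 1 (d.γ g⁻¹) 0 1 * d.T b 1 0 (d.γ g) 1 * d.T b 1 (d.γ g⁻¹) 0 1) =
      d.T b 0 (d.γ g⁻¹) (d.γ g) 0 := by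
    simp only [d.T_mul hb, mul_one, one_mul, mul_zero, zero_mul, add_zero, zero_add, d.h2, g1, g2]
  have q1 : d.γ g⁻¹ * d.p * (d.p' * d.γ g) = d.q := by
    rw [mul_assoc, ← mul_assoc d.p, ← q, ← γ_q, ← mul_assoc, g2, one_mul]
  have q2 : d.p' * d.γ g * (d.γ g⁻¹ * d.p) = 1 := by
    rw [mul_assoc, ← mul_assoc (d.γ g), g1, one_mul, d.hpp]
  have q3 : d.q * (d.γ g⁻¹ * d.p) = d.γ g⁻¹ * d.p := by
    rw [← mul_assoc, ← γ_q, mul_assoc, q_p]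
  have m4 : (d.T b 1 (d.γ g⁻¹ * d.p) 0 1 * d.T b 1 0 (d.p' * d.γ g) 1 *
      d.T b 1 (d.γ g⁻¹ * d.p) 0 1) = d.T b (1 + d.q) (d.γ g⁻¹ * d.p) (d.p' * d.γ g) 0 := by
    simp only [d.T_mul hb, mul_one, one_mul, mul_zero, zero_mul, add_zero, zero_add, d.h2, q1, q2,
      add_mul, q3]
  have q4 : d.p * d.γ g⁻¹ * (d.p' * d.γ g) = d.q := by rw [← d.hpγ, q1]
  have q5 : (1 + d.q) * d.γ g * (1 + d.q) = (1 + d.q) * d.γ g := by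
    rw [mul_assoc, mul_add, mul_one, γ_q, show (1 + d.q) * (d.γ g + d.q * d.γ g) =
      (1 + d.q + (d.q + d.q * d.q)) * d.γ g by noncomm_ring, q_q, d.h2, add_zero]
  have q6 : (1 + d.q) * d.γ g * (d.γ g⁻¹ * d.p) = 0 := by
    rw [mul_assoc, ← mul_assoc (d.γ g), g1, one_mul, add_mul, q_p, one_mul, d.h2]
  have q7 : d.p' * d.γ g * (1 + d.q) = 0 := by
    rw [mul_assoc, mul_add, mul_one, γ_q, mul_add, ← mul_assoc, p'_q, d.h2]
  simp only [Units.val_mul, d.T_12 hb, d.T_21 hb]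
  rw [m1, m2, m3, m4]
  simp only [d.T_mul hb, mul_one, mul_zero, zero_mul, add_zero, zero_add, q2, q4, q5, q6, q7, τ_apply]
  rw [add_comm]

end

/-- corner embedding -/
def D (b : G) (hb : 1 ≠ b) : R →* R where
  toFun x := d.T b x 0 0 1
  map_one' := by
    rw [← d.T_12 hb, d.e_val hb]; simp
  map_mul' x y := by rw [d.T_mul hb]; simp

/-- the embedding of `G` in the units -/
def φ₀ (b : G) (hb : 1 ≠ b) : G →* Rˣ := ((d.D b hb).comp d.τ).toHomUnits

theorem φ₀_mem (b : G) (hb : 1 ≠ b) (g : G) : d.φ₀ b hb g ∈ d.E := by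
  have : d.φ₀ b hb g = _ := Units.ext (d.τ_prod hb g)
  rw [this]
  have := d.e_mem
  refine mul_mem (mul_mem (mul_mem (mul_mem (mul_mem ?_ ?_) ?_) ?_) ?_) ?_ <;>
  first | exact this _ _ _ | (refine mul_mem (mul_mem ?_ ?_) ?_ <;> exact this _ _ _)

theorem φ₀_inj [Nontrivial R] (b : G) (hb : 1 ≠ b) : Function.Injective (d.φ₀ b hb) := by
  rw [injective_iff_map_eq_one]
  intro g hg
  by_contra hg1
  have h1 : d.T b (d.τ g) 0 0 1 = 1 := congrArg Units.val hg
  have h2 := congrArg (fun x => d.s' * (d.σ' 1 * (x * d.σ 1)) * d.s) h1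
  have h3 : d.σ' 1 * (d.T b (d.τ g) 0 0 1 * d.σ 1) = d.τ g := by
    simp only [T, add_mul, mul_add, d.j_σ1 hb, mul_zero, zero_mul, mul_assoc, d.σσ, mul_one,
      σσ_assoc, d.σσ_ne hb.symm, add_zero, zero_add, one_mul]
  have sq : d.s' * d.q = 0 := by rw [q, ← mul_assoc, d.hsp, zero_mul]
  simp only [h3, one_mul, σσ, mul_one, d.hss] at h2
  rw [τ_apply] at h2
  rw [show d.s' * (d.q + (1 + d.q) * d.γ g) = d.s' * d.q + d.s' * d.γ g + d.s' * d.q * d.γ g by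
    noncomm_ring, sq, zero_mul, zero_add, add_zero, d.hsg g hg1] at h2
  exact zero_ne_one h2

/-- group elements as units -/
def γu : G →* Rˣ := d.γ.toHomUnits

theorem γu_conj (g a b : G) (r : R) : d.γu g * d.e a b r * (d.γu g)⁻¹ = d.e (g * a) (g * b) r := by
  by_cases hab : a = b
  · simp [hab, e]
  ext
  rw [← map_inv, Units.val_mul, Units.val_mul, d.e_val hab, d.e_val (by simpa using hab)]
  have e1 : ((d.γu g : Rˣ) : R) = d.γ g := rfl
  have e2 : ((d.γu g⁻¹ : Rˣ) : R) = d.γ g⁻¹ := rfl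
  have e3 : d.γ g * d.γ g⁻¹ = 1 := by rw [← map_mul]; simp
  simp only [e1, e2, σ, σ', lt, lt', mul_add, add_mul, mul_one, e3, mul_inv_rev, map_mul, mul_assoc]

theorem E_le_gen [Infinite G] (A : Set G) (hA : Subgroup.closure A = ⊤) (a₀ : G) (ha₀ : 1 ≠ a₀)
    (Γ : Subgroup Rˣ) (h1 : ∀ a ∈ A, d.γu a ∈ Γ) (h2 : ∀ a ∈ A, d.e 1 a 1 ∈ Γ)
    (h2' : ∀ a ∈ A, d.e 1 a⁻¹ 1 ∈ Γ)
    (h3 : ∀ a ∈ A, d.e 1 a₀ (d.γ a) ∈ Γ) (h3' : ∀ a ∈ A, d.e 1 a₀ (d.γ a⁻¹) ∈ Γ)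
    (h4 : ∀ r ∈ ({d.s, d.s', d.p, d.p'} : Set R), d.e 1 a₀ r ∈ Γ) : d.E ≤ Γ := by
  classical
  have hγ : ∀ g, d.γu g ∈ Γ := by
    have : Subgroup.closure A ≤ Γ.comap d.γu := (Subgroup.closure_le _).2 h1
    intro g
    have hg : g ∈ Subgroup.closure A := by rw [hA]; trivial
    exact this hg
  have conj : ∀ g a b r, d.e a b r ∈ Γ → d.e (g * a) (g * b) r ∈ Γ := by
    intro g a b r h
    rw [← γu_conj]
    exact Γ.mul_mem (Γ.mul_mem (hγ g) h) (Γ.inv_mem (hγ g))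
  have triv : ∀ a r, d.e a a r ∈ Γ := fun a r => by
    rw [e, dif_neg (by simp)]; exact Γ.one_mem
  have comm : ∀ a b c r r', a ≠ b → b ≠ c → a ≠ c → d.e a b r ∈ Γ → d.e b c r' ∈ Γ →
      d.e a c (r * r') ∈ Γ := by
    intro a b c r r' hab hbc hac hr hr'
    rw [← d.e_comm hab hbc hac]
    exact Γ.mul_mem (Γ.mul_mem (Γ.mul_mem hr hr') (Γ.inv_mem hr)) (Γ.inv_mem hr')
  have key : ∀ x y, d.e 1 x 1 ∈ Γ → d.e 1 y 1 ∈ Γ → d.e 1 (x * y) 1 ∈ Γ := by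
    intro x y hx hy
    by_cases hx1 : 1 = x
    · subst hx1; simpa using hy
    by_cases hxy : 1 = x * y
    · rw [← hxy]; exact triv _ _
    by_cases hy1 : x = x * y
    · rwa [← hy1]
    have := comm 1 x (x * y) 1 1 hx1 hy1 hxy hx (by simpa using conj x _ _ _ hy)
    simpa using this
  have step1 : ∀ g, d.e 1 g 1 ∈ Γ := by
    intro g
    have hg : g ∈ Subgroup.closure A := by rw [hA]; trivial
    induction hg using Subgroup.closure_induction_left with
    | one => exact triv _ _
    | mul_left x hx y hy ih => exact key _ _ (h2 x hx) ih
    | inv_mul_cancel x hx y hy ih => exact key _ _ (h2' x hx) ih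
  have step1' : ∀ a b, d.e a b 1 ∈ Γ := fun a b => by
    simpa using conj a _ _ _ (step1 (a⁻¹ * b))
  have step2 : ∀ r, d.e 1 a₀ r ∈ Γ → ∀ g, d.e 1 g r ∈ Γ := by
    intro r hr g
    by_cases hg : a₀ = g
    · rwa [← hg]
    by_cases hg1 : 1 = g
    · rw [← hg1]; exact triv _ _
    have := comm 1 a₀ g r 1 ha₀ hg hg1 hr (step1' _ _)
    simpa using this
  have step2' : ∀ r, d.e 1 a₀ r ∈ Γ → ∀ a b, d.e a b r ∈ Γ := by
    intro r hr a b
    simpa using conj a _ _ _ (step2 r hr (a⁻¹ * b))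
  let K : Subring R :=
    { carrier := {r | d.e 1 a₀ r ∈ Γ}
      mul_mem' := by
        intro r r' hr hr'
        obtain ⟨c, hc⟩ := exists_notMem ({1, a₀} : Finset G)
        simp only [Finset.mem_insert, Finset.mem_singleton, not_or] at hc
        exact comm 1 c a₀ r r' (Ne.symm hc.1) hc.2 ha₀ (step2' r hr _ _) (step2' r' hr' _ _)
      one_mem' := step1 a₀
      add_mem' := by
        intro r r' hr hr'
        change d.e 1 a₀ (r + r') ∈ Γ
        rw [← d.e_add ha₀]; exact Γ.mul_mem hr hr'
      zero_mem' := by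
        have := Γ.mul_mem (step1 a₀) (step1 a₀)
        rw [d.e_add ha₀, d.h2] at this
        exact this
      neg_mem' := by
        intro r hr
        rwa [d.neg_eq] }
  have hK : K = ⊤ := by
    rw [eq_top_iff, ← d.hgen, Subring.closure_le]
    rintro x (⟨g, rfl⟩ | hx)
    · have hg : g ∈ Subgroup.closure A := by rw [hA]; trivial
      induction hg using Subgroup.closure_induction_left with
      | one => rw [map_one]; exact K.one_mem
      | mul_left x hx y hy ih => rw [map_mul]; exact K.mul_mem (h3 x hx) ih
      | inv_mul_cancel x hx y hy ih => rw [map_mul]; exact K.mul_mem (h3' x hx) ih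
    · exact h4 x hx
  rw [E, Subgroup.closure_le]
  rintro _ ⟨a, b, r, -, rfl⟩
  have : r ∈ K := by rw [hK]; trivial
  exact step2' r this a b

theorem exists_gen [Infinite G] {n : ℕ} (π : FreeGroup (Fin n) →* G) (hπ : Function.Surjective π) :
    ∃ (m : ℕ) (gen : Fin m → Rˣ), d.E ≤ (FreeGroup.lift gen).range := by
  classical
  obtain ⟨a₀, ha₀⟩ := exists_notMem ({1} : Finset G)
  simp only [Finset.mem_singleton] at ha₀
  let a : Fin n → G := fun i => π (FreeGroup.of i)
  let S : Set Rˣ := Set.range (fun i => d.γu (a i)) ∪ Set.range (fun i => d.e 1 (a i) 1) ∪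
    Set.range (fun i => d.e 1 (a i)⁻¹ 1) ∪ Set.range (fun i => d.e 1 a₀ (d.γ (a i))) ∪
    Set.range (fun i => d.e 1 a₀ (d.γ (a i)⁻¹)) ∪
    (fun r => d.e 1 a₀ r) '' {d.s, d.s', d.p, d.p'}
  have hS : S.Finite := by
    refine ((((((Set.finite_range _).union (Set.finite_range _)).union (Set.finite_range _)).union
      (Set.finite_range _)).union (Set.finite_range _)).union ((Set.toFinite _).image _))
  have := hS.to_subtype
  obtain ⟨m, ⟨eq⟩⟩ := Finite.exists_equiv_fin S
  refine ⟨m, fun i => (eq.symm i : Rˣ), ?_⟩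
  have hmem : ∀ u ∈ S, u ∈ (FreeGroup.lift fun i => (eq.symm i : Rˣ)).range := fun u hu =>
    ⟨FreeGroup.of (eq ⟨u, hu⟩), by simp⟩
  refine d.E_le_gen (Set.range a) ?_ a₀ (Ne.symm ha₀) _ ?_ ?_ ?_ ?_ ?_ ?_
  · rw [eq_top_iff]
    intro g hg0
    clear hg0
    obtain ⟨w, rfl⟩ := hπ g
    induction w using FreeGroup.induction_on with
    | C1 => rw [map_one]; exact one_mem _
    | of i => exact Subgroup.subset_closure ⟨i, rfl⟩
    | inv_of i h => rw [map_inv]; exact inv_mem h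
    | mul x y hx hy => rw [map_mul]; exact mul_mem hx hy
  · rintro _ ⟨i, rfl⟩; exact hmem _ (.inl (.inl (.inl (.inl (.inl ⟨i, rfl⟩)))))
  · rintro _ ⟨i, rfl⟩; exact hmem _ (.inl (.inl (.inl (.inl (.inr ⟨i, rfl⟩)))))
  · rintro _ ⟨i, rfl⟩; exact hmem _ (.inl (.inl (.inl (.inr ⟨i, rfl⟩))))
  · rintro _ ⟨i, rfl⟩; exact hmem _ (.inl (.inl (.inr ⟨i, rfl⟩)))
  · rintro _ ⟨i, rfl⟩; exact hmem _ (.inl (.inr ⟨i, rfl⟩))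
  · intro r hr; exact hmem _ (.inr ⟨r, hr, rfl⟩)

end RD
end BHP

/-! ### Part 5a: presented algebras over the field with two elements -/
namespace BHP

theorem re_of_exists {α β : Type} [Primcodable α] [Primcodable β] {p : α → β → Prop}
    (hp : PrimrecRel p) : REPred fun a => ∃ b, p a b := by
  classical
  let f : α → ℕ → Option β := fun a k =>
    (Encodable.decode (α := β) k).bind fun b => if p a b then some b else none
  have hf : Primrec₂ f := by
    refine Primrec.option_bind (Primrec.decode.comp Primrec.snd) ?_
    exact Primrec.ite (hp.comp (Primrec.fst.comp Primrec.fst) Primrec.snd)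
      (Primrec.option_some.comp Primrec.snd) (Primrec.const none)
  refine (Partrec.rfindOpt hf.to_comp).dom_re.of_eq fun a => ?_
  rw [Nat.rfindOpt_dom]
  constructor
  · rintro ⟨n, b, hb⟩
    simp only [f, Option.mem_def, Option.bind_eq_some_iff] at hb
    obtain ⟨b', -, h⟩ := hb
    split_ifs at h with h1
    exact ⟨b', h1⟩
  · rintro ⟨b, hb⟩
    refine ⟨Encodable.encode b, b, ?_⟩
    simp [f, hb]

section alg
variable {X : Type}

/-- the free algebra -/
abbrev FA (X : Type) := MonoidAlgebra (ZMod 2) (FreeMonoid X)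

/-- monomials -/
noncomputable def mo (w : List X) : FA X := MonoidAlgebra.single (FreeMonoid.ofList w) 1

/-- polynomials given by lists of monomials -/
noncomputable def ev (L : List (List X)) : FA X := (L.map mo).sum

theorem mo_mul (u v : List X) : mo u * mo v = mo (u ++ v) := by
  simp [mo, MonoidAlgebra.single_mul_single]

theorem mo_nil : mo ([] : List X) = 1 := rfl

theorem ev_nil : ev ([] : List (List X)) = 0 := rfl
theorem ev_cons (w : List X) (L) : ev (w :: L) = mo w + ev L := by simp [ev]
theorem ev_append (L L' : List (List X)) : ev (L ++ L') = ev L + ev L' := by simp [ev]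
theorem ev_singleton (w : List X) : ev [w] = mo w := by simp [ev]

theorem ev_flatMap {β : Type} (c : List β) (f : β → List (List X)) :
    ev (c.flatMap f) = (c.map fun b => ev (f b)).sum := by
  induction c with
  | nil => rfl
  | cons b c ih => simp [ev_append, ih]

theorem ev_map_mul (u v : List X) (L : List (List X)) :
    ev (L.map fun w => u ++ w ++ v) = mo u * ev L * mo v := by
  induction L with
  | nil => simp [ev]
  | cons w L ih => rw [List.map_cons, ev_cons, ih, ev_cons, mul_add, add_mul, mo_mul, mo_mul]

/-- product of lists of monomials -/
def pm (L L' : List (List X)) : List (List X) := L.flatMap fun u => L'.map fun v => u ++ v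

theorem ev_pm (L L' : List (List X)) : ev (pm L L') = ev L * ev L' := by
  have : ∀ u : List X, ev (L'.map fun v => u ++ v) = mo u * ev L' := by
    intro u
    have := ev_map_mul u [] L'
    simpa [mo_nil] using this
  induction L with
  | nil => simp [pm, ev]
  | cons u L ih =>
    have e : pm (u :: L) L' = L'.map (fun v => u ++ v) ++ pm L L' := by simp [pm]
    rw [e, ev_append, this, ih, ev_cons, add_mul]

theorem exists_ev (x : FA X) : ∃ L, ev L = x := by
  induction x using MonoidAlgebra.induction_linear with
  | zero => exact ⟨[], rfl⟩
  | add x y hx hy =>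
    obtain ⟨L, rfl⟩ := hx
    obtain ⟨L', rfl⟩ := hy
    exact ⟨L ++ L', ev_append _ _⟩
  | single w r =>
    have hr : r = 0 ∨ r = 1 := by revert r; decide
    rcases hr with rfl | rfl
    · exact ⟨[], by simp [ev_nil]⟩
    · exact ⟨[FreeMonoid.toList w], by simp [ev_singleton, mo]⟩

theorem FA_two (x : FA X) : x + x = 0 := by
  have : (2 : ZMod 2) = 0 := rfl
  rw [← two_smul (ZMod 2) x, this, zero_smul]

variable [DecidableEq X]

theorem ev_coeff (L : List (List X)) (w : List X) :
    (ev L).coeff (FreeMonoid.ofList w) = ((L.filter (fun u => u = w)).length : ZMod 2) := by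
  induction L with
  | nil => simp [ev]
  | cons u L ih =>
    rw [ev_cons, MonoidAlgebra.coeff_add, Finsupp.add_apply, ih, mo, MonoidAlgebra.coeff_single]
    by_cases h : u = w
    · subst h; simp [add_comm]
    · have : FreeMonoid.ofList u ≠ FreeMonoid.ofList w := fun h' => h (FreeMonoid.ofList.injective h')
      simp [h, Finsupp.single_apply, this]

/-- the parity check -/
def Par (L : List (List X)) : Prop := ∀ w ∈ L, (L.filter (fun u => u = w)).length % 2 = 0

theorem ev_eq_zero_iff (L : List (List X)) : ev L = 0 ↔ Par L := by
  constructor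
  · intro h w _
    have := ev_coeff L w
    rw [h, MonoidAlgebra.coeff_zero, Finsupp.zero_apply] at this
    have := (ZMod.natCast_eq_zero_iff _ _).1 this.symm
    omega
  · intro h
    rw [← MonoidAlgebra.coeff_eq_zero]
    ext w
    have := ev_coeff L (FreeMonoid.toList w)
    rw [FreeMonoid.ofList_toList] at this
    rw [this, Finsupp.zero_apply, ZMod.natCast_eq_zero_iff]
    by_cases hw : FreeMonoid.toList w ∈ L
    · exact Nat.dvd_of_mod_eq_zero (h _ hw)
    · rw [List.filter_eq_nil_iff.2]
      · simp
      · intro a ha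
        simp only [decide_eq_true_eq]
        rintro rfl
        exact hw ha

variable {ρ : Type} (rels : ρ → List (List X))

/-- the ideal of relations -/
noncomputable def relI : TwoSidedIdeal (FA X) := TwoSidedIdeal.span (Set.range fun k => ev (rels k))

/-- expansion of a certificate -/
def expand (c : List (List X × ρ × List X)) : List (List X) :=
  c.flatMap fun t => (rels t.2.1).map fun w => t.1 ++ w ++ t.2.2

omit [DecidableEq X] in
theorem ev_expand_mem (c : List (List X × ρ × List X)) : ev (expand rels c) ∈ relI rels := by
  induction c with
  | nil => exact zero_mem _
  | cons t c ih =>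
    have e : expand rels (t :: c) = ((rels t.2.1).map fun w => t.1 ++ w ++ t.2.2) ++ expand rels c := by
      simp [expand]
    rw [e, ev_append, ev_map_mul]
    refine add_mem ?_ ih
    refine TwoSidedIdeal.mul_mem_right _ _ _ (TwoSidedIdeal.mul_mem_left _ _ _ ?_)
    exact TwoSidedIdeal.subset_span ⟨_, rfl⟩

omit [DecidableEq X] in
theorem exists_cert {x : FA X} (hx : x ∈ relI rels) : ∃ c, ev (expand rels c) = x := by
  rw [relI, TwoSidedIdeal.mem_span_iff_mem_addSubgroup_closure] at hx
  induction hx using AddSubgroup.closure_induction with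
  | mem x hx =>
    obtain ⟨_, ⟨a, _, _, ⟨k, rfl⟩, rfl⟩, b, _, rfl⟩ := hx
    obtain ⟨L, rfl⟩ := exists_ev a
    obtain ⟨L', rfl⟩ := exists_ev b
    refine ⟨L.flatMap fun u => L'.map fun v => (u, k, v), ?_⟩
    have h1 : ∀ u, ev (expand rels (L'.map fun v => (u, k, v))) = mo u * ev (rels k) * ev L' := by
      intro u
      simp only [expand, ev_flatMap, List.map_map]
      have e2 : ((fun b : List X × ρ × List X => ev ((rels b.2.1).map fun w => b.1 ++ w ++ b.2.2)) ∘
          fun v => (u, k, v)) = fun v => mo u * ev (rels k) * mo v := by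
        funext v
        simp only [Function.comp, ev_map_mul]
      rw [e2, List.sum_map_mul_left]
      rfl
    have h2 : expand rels (L.flatMap fun u => L'.map fun v => (u, k, v)) =
        L.flatMap fun u => expand rels (L'.map fun v => (u, k, v)) := by
      simp only [expand, List.flatMap_assoc]
    rw [h2, ev_flatMap]
    simp only [h1]
    rw [List.sum_map_mul_right, List.sum_map_mul_right]
    rfl
  | zero => exact ⟨[], rfl⟩
  | add x y _ _ hx hy =>
    obtain ⟨c, rfl⟩ := hx
    obtain ⟨c', rfl⟩ := hy
    exact ⟨c ++ c', by simp [expand, ev_append]⟩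
  | neg x _ hx =>
    obtain ⟨c, rfl⟩ := hx
    exact ⟨c, eq_neg_of_add_eq_zero_left (FA_two _)⟩

theorem ev_mem_iff (L : List (List X)) :
    ev L ∈ relI rels ↔ ∃ c, Par (L ++ expand rels c) := by
  simp only [← ev_eq_zero_iff, ev_append]
  constructor
  · intro h
    obtain ⟨c, hc⟩ := exists_cert rels h
    exact ⟨c, by rw [hc, FA_two]⟩
  · rintro ⟨c, hc⟩
    have := eq_neg_of_add_eq_zero_left hc
    rw [this]
    exact neg_mem (ev_expand_mem rels c)

/-- the presented algebra -/
abbrev PR := (relI rels).ringCon.Quotient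

/-- quotient map -/
noncomputable def cl : FA X →+* PR rels := (relI rels).ringCon.mk'

omit [DecidableEq X] in
theorem cl_surj : Function.Surjective (cl rels) := RingCon.mk'_surjective _

omit [DecidableEq X] in
theorem cl_eq_zero {x : FA X} : cl rels x = 0 ↔ x ∈ relI rels := by
  rw [TwoSidedIdeal.mem_iff]
  exact RingCon.eq _

omit [DecidableEq X] in
theorem PR_two (x : PR rels) : x + x = 0 := by
  obtain ⟨y, rfl⟩ := cl_surj rels x
  rw [← map_add, FA_two, map_zero]

variable [Primcodable X] [Primcodable ρ]

theorem par_primrec : PrimrecPred (Par (X := X)) := by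
  have h1 : PrimrecRel fun (a : List X) (b : List X) => a = b := Primrec.eq
  have h2 := h1.listFilter
  have h3 : PrimrecRel fun (a : List X) (T : List (List X)) =>
      (T.filter (fun u => u = a)).length % 2 = 0 :=
    PrimrecRel.comp Primrec.eq (Primrec.nat_mod.comp (Primrec.list_length.comp
      (h2.comp Primrec.snd Primrec.fst)) (Primrec.const 2)) (Primrec.const 0)
  exact h3.forall_mem_list.comp Primrec.id Primrec.id

omit [DecidableEq X] in
theorem expand_primrec (hr : Primrec rels) : Primrec (expand rels) := by
  refine Primrec.list_flatMap Primrec.id ?_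
  refine Primrec.list_map (hr.comp (Primrec.fst.comp (Primrec.snd.comp Primrec.snd))) ?_
  refine Primrec.list_append.comp (Primrec.list_append.comp ?_ Primrec.snd) ?_
  · exact Primrec.fst.comp (Primrec.snd.comp Primrec.fst)
  · exact Primrec.snd.comp (Primrec.snd.comp (Primrec.snd.comp Primrec.fst))

theorem ev_re (hr : Primrec rels) {α : Type} [Primcodable α] {f : α → List (List X)}
    (hf : Primrec f) : REPred fun a => cl rels (ev (f a)) = 0 := by
  have : PrimrecRel fun (a : α) (c : List (List X × ρ × List X)) => Par (f a ++ expand rels c) :=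
    par_primrec.comp (Primrec.list_append.comp (hf.comp Primrec.fst)
      ((expand_primrec rels hr).comp Primrec.snd))
  refine (re_of_exists this).of_eq fun a => ?_
  rw [cl_eq_zero, ev_mem_iff]

theorem units_re (hr : Primrec rels) {m : ℕ} (gen : Fin m → (PR rels)ˣ) :
    REPred fun w : List (Fin m × Bool) => FreeGroup.mk w ∈ (FreeGroup.lift gen).ker := by
  have hL : ∀ a : Fin m × Bool, ∃ L, cl rels (ev L) =
      ((FreeGroup.lift gen (FreeGroup.mk [a]) : (PR rels)ˣ) : PR rels) := by
    intro a
    obtain ⟨x, hx⟩ := cl_surj rels ((FreeGroup.lift gen (FreeGroup.mk [a]) : (PR rels)ˣ) : PR rels)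
    obtain ⟨L, rfl⟩ := exists_ev x
    exact ⟨L, hx⟩
  choose Lp hLp using hL
  let poly : List (Fin m × Bool) → List (List X) := fun w => w.foldr (fun a acc => pm (Lp a) acc) [[]]
  have hpm : Primrec₂ (pm (X := X)) := by
    refine Primrec.list_flatMap Primrec.fst ?_
    refine Primrec.list_map (Primrec.snd.comp Primrec.fst) ?_
    exact Primrec.list_append.comp (Primrec.snd.comp Primrec.fst) Primrec.snd
  have hpoly : Primrec poly := by
    refine Primrec.list_foldr (h := fun _ p => pm (Lp p.1) p.2) Primrec.id (Primrec.const [[]]) ?_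
    exact hpm.comp ((Primrec.dom_finite Lp).comp (Primrec.fst.comp Primrec.snd))
      (Primrec.snd.comp Primrec.snd)
  have hval : ∀ w, cl rels (ev (poly w)) =
      ((FreeGroup.lift gen (FreeGroup.mk w) : (PR rels)ˣ) : PR rels) := by
    intro w
    induction w with
    | nil =>
      simp only [poly, List.foldr_nil, ev_singleton, mo_nil, map_one]
      change 1 = ((FreeGroup.lift gen 1 : (PR rels)ˣ) : PR rels)
      rw [map_one]; rfl
    | cons a w ih =>
      have e : FreeGroup.mk (a :: w) = FreeGroup.mk [a] * FreeGroup.mk w := by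
        rw [FreeGroup.mul_mk]; rfl
      rw [e, map_mul, Units.val_mul, ← ih, ← hLp, ← map_mul, ← ev_pm]
      rfl
  have hf : Primrec fun w => [] :: poly w := Primrec.list_cons.comp (Primrec.const []) hpoly
  refine (ev_re rels hr hf).of_eq fun w => ?_
  rw [ev_cons, map_add, mo_nil, map_one, hval, MonoidHom.mem_ker, ← Units.val_eq_one]
  constructor
  · intro h
    have := eq_neg_of_add_eq_zero_right h
    rw [this]
    exact (eq_neg_of_add_eq_zero_left (PR_two rels 1)).symm
  · intro h
    rw [h, PR_two]

end alg
end BHP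

/-! ### Part 5b: the ring of a group with solvable word problem -/
namespace BHP

section rep
variable {G : Type} [Group G]

/-- action on the tree -/
def act (g : G) : List (Option G) → List (Option G)
  | [] => []
  | some h :: ω => some (g * h) :: ω
  | none :: ω => none :: act g ω

theorem act_one (ω : List (Option G)) : act 1 ω = ω := by
  induction ω with
  | nil => rfl
  | cons a ω ih => cases a <;> simp [act, ih]

theorem act_mul (g h : G) (ω : List (Option G)) : act (g * h) ω = act g (act h ω) := by
  induction ω with
  | nil => rfl
  | cons a ω ih => cases a <;> simp [act, ih, mul_assoc]

/-- functions on the tree -/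
abbrev VT (G : Type) := List (Option G) → ZMod 2

/-- group elements as operators -/
def opG : G →* Module.End (ZMod 2) (VT G) where
  toFun g :=
    { toFun := fun ξ ω => ξ (act g⁻¹ ω)
      map_add' := fun _ _ => rfl
      map_smul' := fun _ _ => rfl }
  map_one' := by ext ξ ω; simp [act_one]
  map_mul' g h := by ext ξ ω; simp [act_mul]

theorem opG_apply (g : G) (ξ : VT G) (ω) : opG g ξ ω = ξ (act g⁻¹ ω) := rfl

open Classical in
/-- extension by zero -/
noncomputable def opUp (a : Option G) : Module.End (ZMod 2) (VT G) where
  toFun ξ ω := match ω with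
    | [] => 0
    | b :: ω => if b = a then ξ ω else 0
  map_add' ξ η := by
    funext ω
    rcases ω with _ | ⟨b, ω⟩
    · rfl
    · simp only [Pi.add_apply]; split_ifs <;> simp
  map_smul' r ξ := by
    funext ω
    rcases ω with _ | ⟨b, ω⟩
    · simp
    · simp only [Pi.smul_apply, RingHom.id_apply]; split_ifs <;> simp

theorem opUp_nil (a : Option G) (ξ : VT G) : opUp a ξ [] = 0 := rfl
open Classical in
theorem opUp_cons (a : Option G) (ξ : VT G) (b ω) :
    opUp a ξ (b :: ω) = if b = a then ξ ω else 0 := rfl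

/-- restriction -/
def opDn (a : Option G) : Module.End (ZMod 2) (VT G) where
  toFun ξ ω := ξ (a :: ω)
  map_add' _ _ := rfl
  map_smul' _ _ := rfl

theorem opDn_apply (a : Option G) (ξ : VT G) (ω) : opDn a ξ ω = ξ (a :: ω) := rfl

end rep

section pres
variable {n : ℕ}

/-- letters -/
abbrev LX (n : ℕ) := (Fin n × Bool) ⊕ Fin 4

/-- words in group letters -/
def il (w : List (Fin n × Bool)) : List (LX n) := w.map Sum.inl

theorem il_append (u v : List (Fin n × Bool)) : il (u ++ v) = il u ++ il v := by simp [il]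

/-- the relators -/
def bRels (f : ℕ → List (Fin n × Bool) → Option Bool) (x : ℕ × ℕ × List (Fin n × Bool)) :
    List (List (LX n)) :=
  ([if f x.1 x.2.2 = some true then [il x.2.2, []]
      else if f x.1 x.2.2 = some false then [Sum.inr 1 :: (il x.2.2 ++ [Sum.inr 0])] else [],
    [il x.2.2 ++ [Sum.inr 2], Sum.inr 2 :: il x.2.2],
    [il x.2.2 ++ [Sum.inr 3], Sum.inr 3 :: il x.2.2],
    [[Sum.inr 1, Sum.inr 0], []], [[Sum.inr 3, Sum.inr 2], []], [[Sum.inr 3, Sum.inr 0]],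
    [[Sum.inr 1, Sum.inr 2]]] : List (List (List (LX n)))).getD x.2.1 []

theorem bRels_primrec {f : ℕ → List (Fin n × Bool) → Option Bool} (hf : Primrec₂ f) :
    Primrec (bRels f) := by
  have hil : Primrec (il (n := n)) := Primrec.list_map Primrec.id (Primrec.sumInl.comp Primrec.snd)
  have hw : Primrec fun x : ℕ × ℕ × List (Fin n × Bool) => il x.2.2 :=
    hil.comp (Primrec.snd.comp Primrec.snd)
  have hfx : Primrec fun x : ℕ × ℕ × List (Fin n × Bool) => f x.1 x.2.2 :=
    hf.comp Primrec.fst (Primrec.snd.comp Primrec.snd)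
  have hc2 : ∀ {α : Type} {a b : ℕ × ℕ × List (Fin n × Bool) → List α} [Primcodable α],
      Primrec a → Primrec b → Primrec fun x => [a x, b x] := fun ha hb =>
    Primrec.list_cons.comp ha (Primrec.list_cons.comp hb (Primrec.const []))
  refine (Primrec.list_getD []).comp ?_ (Primrec.fst.comp Primrec.snd)
  refine Primrec.list_cons.comp ?_ (Primrec.list_cons.comp ?_ (Primrec.list_cons.comp ?_
    (Primrec.const _)))
  · refine Primrec.ite (PrimrecRel.comp Primrec.eq hfx (Primrec.const _)) ?_
      (Primrec.ite (PrimrecRel.comp Primrec.eq hfx (Primrec.const _)) ?_ (Primrec.const _))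
    · exact hc2 hw (Primrec.const [])
    · exact Primrec.list_cons.comp (Primrec.list_cons.comp (Primrec.const _)
        (Primrec.list_append.comp hw (Primrec.const _))) (Primrec.const [])
  · exact hc2 (Primrec.list_append.comp hw (Primrec.const _))
      (Primrec.list_cons.comp (Primrec.const _) hw)
  · exact hc2 (Primrec.list_append.comp hw (Primrec.const _))
      (Primrec.list_cons.comp (Primrec.const _) hw)

variable {G : Type} [Group G] (π : FreeGroup (Fin n) →* G)
  (f : ℕ → List (Fin n × Bool) → Option Bool)

/-- monomials in the ring -/
noncomputable def cm (w : List (LX n)) : PR (bRels f) := cl (bRels f) (mo w)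

theorem cm_append (u v : List (LX n)) : cm f (u ++ v) = cm f u * cm f v := by
  rw [cm, ← mo_mul, map_mul]; rfl

theorem cm_cons (a : LX n) (v : List (LX n)) : cm f (a :: v) = cm f [a] * cm f v :=
  cm_append f [a] v

theorem cm_nil : cm f [] = 1 := by rw [cm, mo_nil, map_one]

theorem cm_rel (k t w) : cl (bRels f) (ev (bRels f (k, t, w))) = 0 :=
  (cl_eq_zero _).2 (TwoSidedIdeal.subset_span ⟨_, rfl⟩)

theorem PR_eq_of_add {x y : PR (bRels f)} (h : x + y = 0) : x = y := by
  rw [eq_neg_of_add_eq_zero_left h]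
  exact (eq_neg_of_add_eq_zero_left (PR_two _ y)).symm

/-- group letters -/
noncomputable abbrev cs : PR (bRels f) := cm f [Sum.inr 0]
/-- group letters -/
noncomputable abbrev cs' : PR (bRels f) := cm f [Sum.inr 1]
/-- group letters -/
noncomputable abbrev cp : PR (bRels f) := cm f [Sum.inr 2]
/-- group letters -/
noncomputable abbrev cp' : PR (bRels f) := cm f [Sum.inr 3]

theorem rel_w_p (w) : cm f (il w) * cp f = cp f * cm f (il w) := by
  have := cm_rel f 0 1 w
  simp only [bRels, List.getD_cons_succ, List.getD_cons_zero, ev_cons, ev_nil, add_zero, map_add] at this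
  change cm f _ + cm f _ = 0 at this
  rw [cm_append, cm_cons f _ (il w)] at this
  exact PR_eq_of_add f this

theorem rel_w_p' (w) : cp' f * cm f (il w) = cm f (il w) * cp' f := by
  have := cm_rel f 0 2 w
  simp only [bRels, List.getD_cons_succ, List.getD_cons_zero, ev_cons, ev_nil, add_zero, map_add] at this
  change cm f _ + cm f _ = 0 at this
  rw [cm_append, cm_cons f _ (il w)] at this
  exact (PR_eq_of_add f this).symm

theorem rel_ss : cs' f * cs f = 1 := by
  have := cm_rel f 0 3 []
  simp only [bRels, List.getD_cons_succ, List.getD_cons_zero, ev_cons, ev_nil, add_zero, map_add] at this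
  change cm f _ + cm f _ = 0 at this
  rw [cm_cons, cm_nil] at this
  exact PR_eq_of_add f this

theorem rel_pp : cp' f * cp f = 1 := by
  have := cm_rel f 0 4 []
  simp only [bRels, List.getD_cons_succ, List.getD_cons_zero, ev_cons, ev_nil, add_zero, map_add] at this
  change cm f _ + cm f _ = 0 at this
  rw [cm_cons, cm_nil] at this
  exact PR_eq_of_add f this

theorem rel_ps : cp' f * cs f = 0 := by
  have := cm_rel f 0 5 []
  simp only [bRels, List.getD_cons_succ, List.getD_cons_zero, ev_cons, ev_nil, add_zero] at this
  change cm f _ = 0 at this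
  rwa [cm_cons] at this

theorem rel_sp : cs' f * cp f = 0 := by
  have := cm_rel f 0 6 []
  simp only [bRels, List.getD_cons_succ, List.getD_cons_zero, ev_cons, ev_nil, add_zero] at this
  change cm f _ = 0 at this
  rwa [cm_cons] at this

theorem rel_one {k w} (h : f k w = some true) : cm f (il w) = 1 := by
  have := cm_rel f k 0 w
  simp only [bRels, List.getD_cons_zero, h, if_true, ev_cons, ev_nil, add_zero, map_add] at this
  change cm f _ + cm f _ = 0 at this
  rw [cm_nil] at this
  exact PR_eq_of_add f this

theorem rel_ne {k w} (h : f k w = some false) : cs' f * cm f (il w) * cs f = 0 := by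
  have := cm_rel f k 0 w
  simp only [bRels, List.getD_cons_zero, h, Option.some.injEq, Bool.false_eq_true, if_false, if_true,
    ev_cons, ev_nil, add_zero] at this
  change cm f _ = 0 at this
  rwa [cm_cons, cm_append, ← mul_assoc] at this

/-- the decision function is correct -/
def GoodDec : Prop := ∀ w, ((∃ k, f k w = some true) ↔ π (FreeGroup.mk w) = 1) ∧
  ((∃ k, f k w = some false) ↔ π (FreeGroup.mk w) ≠ 1)

variable {π f}

theorem cm_eq (hf : GoodDec π f) {u v : List (Fin n × Bool)}
    (h : π (FreeGroup.mk u) = π (FreeGroup.mk v)) : cm f (il u) = cm f (il v) := by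
  have hi : FreeGroup.mk (FreeGroup.invRev v) = (FreeGroup.mk v)⁻¹ := FreeGroup.inv_mk.symm
  obtain ⟨k, hk⟩ := (hf (u ++ FreeGroup.invRev v)).1.2 (by
    rw [← FreeGroup.mul_mk, map_mul, hi, map_inv, h, mul_inv_cancel])
  obtain ⟨k', hk'⟩ := (hf (FreeGroup.invRev v ++ v)).1.2 (by
    rw [← FreeGroup.mul_mk, map_mul, hi, map_inv, inv_mul_cancel])
  have h1 := rel_one f hk
  have h2 := rel_one f hk'
  rw [il_append, cm_append] at h1 h2
  rw [← mul_one (cm f (il u)), ← h2, ← mul_assoc, h1, one_mul]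

/-- the ring data -/
noncomputable def mkRD (hπ : Function.Surjective π) (hf : GoodDec π f) : RD G (PR (bRels f)) where
  γ :=
    { toFun := fun g => cm f (il (Function.surjInv hπ g).toWord)
      map_one' := by
        rw [← cm_nil f]
        refine cm_eq hf (v := []) ?_
        rw [FreeGroup.mk_toWord, Function.surjInv_eq hπ]
        exact (map_one π).symm
      map_mul' := fun g h => by
        rw [← cm_append, ← il_append]
        refine cm_eq hf ?_
        rw [← FreeGroup.mul_mk, map_mul]
        simp only [FreeGroup.mk_toWord, Function.surjInv_eq hπ] }
  s := cs f
  s' := cs' f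
  p := cp f
  p' := cp' f
  h2 := PR_two _
  hss := rel_ss f
  hsg := fun g hg => by
    obtain ⟨k, hk⟩ := (hf (Function.surjInv hπ g).toWord).2.2 (by
      rwa [FreeGroup.mk_toWord, Function.surjInv_eq hπ])
    exact rel_ne f hk
  hpp := rel_pp f
  hps := rel_ps f
  hsp := rel_sp f
  hpγ := fun g => rel_w_p f _
  hp'γ := fun g => rel_w_p' f _
  hgen := by
    rw [eq_top_iff]
    intro x hx0
    clear hx0
    obtain ⟨y, rfl⟩ := cl_surj _ x
    obtain ⟨L, rfl⟩ := exists_ev y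
    set K := Subring.closure (Set.range (fun g => cm f (il (Function.surjInv hπ g).toWord)) ∪
      {cs f, cs' f, cp f, cp' f}) with hK
    change cl (bRels f) (ev L) ∈ K
    have hl : ∀ a : LX n, cm f [a] ∈ K := by
      rintro (a | i)
      · have : cm f (il [a]) ∈ K := by
          refine Subring.subset_closure (.inl ⟨π (FreeGroup.mk [a]), ?_⟩)
          refine cm_eq hf ?_
          rw [FreeGroup.mk_toWord, Function.surjInv_eq hπ]
        exact this
      · refine Subring.subset_closure (.inr ?_)
        fin_cases i <;> simp
    have hw : ∀ w : List (LX n), cm f w ∈ K := by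
      intro w
      induction w with
      | nil => rw [cm_nil]; exact K.one_mem
      | cons a w ih => rw [cm_cons]; exact K.mul_mem (hl a) ih
    induction L with
    | nil => rw [ev_nil, map_zero]; exact K.zero_mem
    | cons w L ih => rw [ev_cons, map_add]; exact K.add_mem (hw w) ih

variable (π) in
/-- letters as operators -/
noncomputable def opL : LX n → Module.End (ZMod 2) (VT G)
  | .inl a => opG (π (FreeGroup.mk [a]))
  | .inr 0 => opUp (some 1)
  | .inr 1 => opDn (some 1)
  | .inr 2 => opUp none
  | .inr 3 => opDn none

variable (π) in
/-- the representation -/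
noncomputable def rep : FA (LX n) →ₐ[ZMod 2] Module.End (ZMod 2) (VT G) :=
  MonoidAlgebra.lift (ZMod 2) _ (FreeMonoid (LX n)) (FreeMonoid.lift (opL π))

theorem rep_mo (w : List (LX n)) : rep π (mo w) = (w.map (opL π)).prod := by
  simp [rep, mo, MonoidAlgebra.lift_single, FreeMonoid.lift_apply]

theorem rep_il (w : List (Fin n × Bool)) : ((il w).map (opL π)).prod = opG (π (FreeGroup.mk w)) := by
  induction w with
  | nil =>
    change 1 = opG (π 1)
    rw [map_one, map_one]
  | cons a w ih =>
    have e : FreeGroup.mk (a :: w) = FreeGroup.mk [a] * FreeGroup.mk w := by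
      rw [FreeGroup.mul_mk]; rfl
    rw [e, map_mul, map_mul, ← ih]
    rfl

theorem End_two (x : Module.End (ZMod 2) (VT G)) : x + x = 0 := by
  have : (2 : ZMod 2) = 0 := rfl
  rw [← two_smul (ZMod 2) x, this, zero_smul]

theorem rep_rels (hf : GoodDec π f) (x : ℕ × ℕ × List (Fin n × Bool)) :
    rep π (ev (bRels f x)) = 0 := by
  obtain ⟨k, t, w⟩ := x
  rcases t with _ | _ | _ | _ | _ | _ | _ | t
  · simp only [bRels, List.getD_cons_zero]
    split_ifs with h1 h2
    · have := (hf w).1.1 ⟨k, h1⟩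
      simp only [ev_cons, ev_nil, map_add, rep_mo, rep_il, this, map_one, map_zero, add_zero,
        List.map_nil, List.prod_nil]
      exact End_two _
    · have := (hf w).2.1 ⟨k, h2⟩
      simp only [ev_cons, ev_nil, map_add, rep_mo, map_zero, add_zero, List.map_cons,
        List.prod_cons, List.map_append, List.prod_append, rep_il, List.map_nil, List.prod_nil, opL,
        mul_one]
      ext ξ ω
      simp [opDn_apply, opG_apply, act, opUp_cons, this]
    · rw [ev_nil, map_zero]
  · simp only [bRels, List.getD_cons_succ, List.getD_cons_zero, ev_cons, ev_nil, add_zero, map_add,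
      rep_mo, List.map_cons, List.prod_cons, List.map_append, List.prod_append, rep_il,
      List.map_nil, List.prod_nil, opL, mul_one]
    rw [← End_two (opUp none * opG (π (FreeGroup.mk w)))]
    congr 1
    ext ξ ω
    rcases ω with _ | ⟨_ | a, ω⟩ <;>
    simp [opG_apply, act, opUp_cons, opUp_nil]
  · simp only [bRels, List.getD_cons_succ, List.getD_cons_zero, ev_cons, ev_nil, add_zero, map_add,
      rep_mo, List.map_cons, List.prod_cons, List.map_append, List.prod_append, rep_il,
      List.map_nil, List.prod_nil, opL, mul_one]
    rw [← End_two (opDn none * opG (π (FreeGroup.mk w)))]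
    congr 1
  · simp only [bRels, List.getD_cons_succ, List.getD_cons_zero, ev_cons, ev_nil, add_zero, map_add,
      rep_mo, List.map_cons, List.prod_cons, List.map_nil, List.prod_nil, opL, mul_one]
    rw [← End_two 1]
    congr 1
    ext ξ ω
    simp [opDn_apply, opUp_cons]
  · simp only [bRels, List.getD_cons_succ, List.getD_cons_zero, ev_cons, ev_nil, add_zero, map_add,
      rep_mo, List.map_cons, List.prod_cons, List.map_nil, List.prod_nil, opL, mul_one]
    rw [← End_two 1]
    congr 1
  · simp only [bRels, List.getD_cons_succ, List.getD_cons_zero, ev_cons, ev_nil, add_zero,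
      rep_mo, List.map_cons, List.prod_cons, List.map_nil, List.prod_nil, opL, mul_one]
    ext ξ ω
    simp [opDn_apply, opUp_cons]
  · simp only [bRels, List.getD_cons_succ, List.getD_cons_zero, ev_cons, ev_nil, add_zero,
      rep_mo, List.map_cons, List.prod_cons, List.map_nil, List.prod_nil, opL, mul_one]
    ext ξ ω
    simp [opDn_apply, opUp_cons]
  · simp [bRels, ev_nil]

theorem PR_nontrivial (hf : GoodDec π f) : Nontrivial (PR (bRels f)) := by
  refine ⟨⟨1, 0, fun h => ?_⟩⟩
  have h1 : (1 : FA (LX n)) ∈ relI (bRels f) := by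
    rw [← cl_eq_zero, map_one]; exact h
  have hle : relI (bRels f) ≤ TwoSidedIdeal.ker (rep π) := by
    rw [relI, TwoSidedIdeal.span_le]
    rintro _ ⟨x, rfl⟩
    exact (TwoSidedIdeal.mem_ker _).2 (rep_rels hf x)
  have h2 := (TwoSidedIdeal.mem_ker _).1 (hle h1)
  rw [map_one] at h2
  have h3 := congrArg (fun T : Module.End (ZMod 2) (VT G) => T (fun _ => 1) []) h2
  simp at h3

/-- The main embedding for infinite groups. -/
theorem main_infinite [Infinite G] (hπ : Function.Surjective π) (hf : GoodDec π f) (hp : Primrec₂ f) :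
    ∃ (H : Type) (_ : Group H) (S : Subgroup H), IsFinitelyPresented H ∧ IsSimpleGroup S ∧
      ∃ φ : G →* S, Function.Injective φ := by
  classical
  have := PR_nontrivial hf
  let d := mkRD hπ hf
  obtain ⟨m, gen, hgen⟩ := d.exists_gen π hπ
  obtain ⟨H, _, hH, ι, hι⟩ := theoremB _ (units_re _ (bRels_primrec hp) gen)
  obtain ⟨b, hb⟩ := RD.exists_notMem ({1} : Finset G)
  replace hb : 1 ≠ b := fun h => hb (by simp [h])
  let q := QuotientGroup.quotientKerEquivRange (FreeGroup.lift gen)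
  let j : d.E →* H := (ι.comp q.symm.toMonoidHom).comp (Subgroup.inclusion hgen)
  have hj : Function.Injective j := by
    refine (hι.comp q.symm.injective).comp (Subgroup.inclusion_injective hgen)
  refine ⟨H, _, j.range, hH, ?_, ?_⟩
  · have := d.E_simple
    let e := MonoidHom.ofInjective hj
    exact e.symm.isSimpleGroup
  · refine ⟨(MonoidHom.ofInjective hj).toMonoidHom.comp
      ((d.φ₀ b hb).codRestrict d.E (d.φ₀_mem b hb)), ?_⟩
    refine (MonoidHom.ofInjective hj).injective.comp fun x y h => ?_
    exact d.φ₀_inj b hb (congrArg Subtype.val h)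

end pres
end BHP

namespace BHP

theorem exists_goodDec {n : ℕ} {G : Type*} [Group G] {π : FreeGroup (Fin n) →* G}
    (hwp : ComputablePred (fun w : List (Fin n × Bool) => π (FreeGroup.mk w) = 1)) :
    ∃ f : ℕ → List (Fin n × Bool) → Option Bool, Primrec₂ f ∧
      ∀ w, ((∃ k, f k w = some true) ↔ π (FreeGroup.mk w) = 1) ∧
        ((∃ k, f k w = some false) ↔ π (FreeGroup.mk w) ≠ 1) := by
  obtain ⟨hd, hc⟩ := hwp
  obtain ⟨c, hcode⟩ := Nat.Partrec.Code.exists_code.1 hc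
  have hev : ∀ w, c.eval (Encodable.encode w)
      = Part.some (Encodable.encode (decide (π (FreeGroup.mk w) = 1))) := by
    intro w
    rw [hcode]
    simp
  have key : ∀ w b, (∃ k, ((c.evaln k (Encodable.encode w)).bind
      (Encodable.decode : ℕ → Option Bool)) = some b) ↔ decide (π (FreeGroup.mk w) = 1) = b := by
    intro w b
    constructor
    · rintro ⟨k, hk⟩
      obtain ⟨x, hx, hxb⟩ := Option.bind_eq_some_iff.1 hk
      have h1 := Nat.Partrec.Code.evaln_sound hx
      rw [hev, Part.mem_some_iff] at h1
      rw [h1, Encodable.encodek] at hxb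
      exact Option.some.inj hxb
    · intro h
      have h1 : Encodable.encode (decide (π (FreeGroup.mk w) = 1)) ∈ c.eval (Encodable.encode w) := by
        rw [hev]; exact Part.mem_some _
      obtain ⟨k, hk⟩ := Nat.Partrec.Code.evaln_complete.1 h1
      refine ⟨k, ?_⟩
      rw [Option.mem_def.1 hk]
      simp [h]
  refine ⟨fun k w => (c.evaln k (Encodable.encode w)).bind (Encodable.decode : ℕ → Option Bool),
    ?_, fun w => ⟨?_, ?_⟩⟩
  · refine Primrec.option_bind (f := fun p : ℕ × List (Fin n × Bool) => c.evaln p.1 (Encodable.encode p.2))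
      (g := fun _ m => Encodable.decode m) ?_ ?_
    · exact Nat.Partrec.Code.primrec_evaln.comp
        ((Primrec.fst.pair (Primrec.const c)).pair (Primrec.encode.comp Primrec.snd))
    · exact (Primrec.decode.comp Primrec.snd).to₂
  · rw [key]; simp
  · rw [key]; simp

/-- drop the last generator -/
def dropLast {n : ℕ} (x : Fin (n + 1) × Bool) : Option (Fin n × Bool) :=
  if h : x.1.1 < n then some (⟨x.1.1, h⟩, x.2) else none

/-- occurrences of the last generator with given sign -/
def isLastB {n : ℕ} (b : Bool) (x : Fin (n + 1) × Bool) : Option Unit :=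
  if x.1.1 < n then none else if x.2 = b then some () else none

def cnt {n : ℕ} (b : Bool) (w : List (Fin (n + 1) × Bool)) : ℕ := (w.filterMap (isLastB b)).length

def pi1 {n : ℕ} {G : Type} [Group G] (π : FreeGroup (Fin n) →* G) :
    FreeGroup (Fin (n + 1)) →* G × Multiplicative ℤ :=
  FreeGroup.lift fun i => if h : i.1 < n then (π (FreeGroup.of ⟨i.1, h⟩), 1)
    else (1, Multiplicative.ofAdd 1)

theorem pi1_mk {n : ℕ} {G : Type} [Group G] (π : FreeGroup (Fin n) →* G)
    (w : List (Fin (n + 1) × Bool)) :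
    pi1 π (FreeGroup.mk w) = (π (FreeGroup.mk (w.filterMap dropLast)),
      Multiplicative.ofAdd ((cnt true w : ℤ) - cnt false w)) := by
  induction w with
  | nil =>
    simp only [cnt, List.filterMap_nil, ← FreeGroup.one_eq_mk, map_one]
    rfl
  | cons x w ih =>
    obtain ⟨i, b⟩ := x
    have h1 : FreeGroup.mk ((i, b) :: w) = FreeGroup.mk [(i, b)] * FreeGroup.mk w := by
      rw [FreeGroup.mul_mk]; rfl
    rw [h1, map_mul, ih]
    by_cases h : i.1 < n
    · have h2 : ((i, b) :: w).filterMap dropLast = (⟨i.1, h⟩, b) :: w.filterMap dropLast := by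
        simp [dropLast, h]
      have h3 : ∀ c, cnt c ((i, b) :: w) = cnt c w := by
        intro c; simp [cnt, isLastB, h]
      have h4 : FreeGroup.mk ((⟨i.1, h⟩, b) :: w.filterMap dropLast) =
        FreeGroup.mk [((⟨i.1, h⟩ : Fin n), b)] * FreeGroup.mk (w.filterMap dropLast) := by
        rw [FreeGroup.mul_mk]; rfl
      rw [h2, h3, h3, h4, map_mul]
      have h5 : pi1 π (FreeGroup.mk [(i, b)]) = (π (FreeGroup.mk [(⟨i.1, h⟩, b)]), 1) := by
        cases b
        · have e1 : FreeGroup.mk [(i, false)] = (FreeGroup.of i)⁻¹ := rfl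
          have e2 : FreeGroup.mk [((⟨i.1, h⟩ : Fin n), false)] = (FreeGroup.of ⟨i.1, h⟩)⁻¹ := rfl
          rw [e1, e2]; simp [pi1, h]
        · have e1 : FreeGroup.mk [(i, true)] = (FreeGroup.of i) := rfl
          have e2 : FreeGroup.mk [((⟨i.1, h⟩ : Fin n), true)] = (FreeGroup.of ⟨i.1, h⟩) := rfl
          rw [e1, e2]; simp [pi1, h]
      rw [h5]; simp
    · have h2 : ((i, b) :: w).filterMap dropLast = w.filterMap dropLast := by
        simp [dropLast, h]
      rw [h2]
      cases b
      · have e1 : FreeGroup.mk [(i, false)] = (FreeGroup.of i)⁻¹ := rfl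
        rw [e1]
        have c1 : cnt true ((i, false) :: w) = cnt true w := by simp [cnt, isLastB, h]
        have c2 : cnt false ((i, false) :: w) = cnt false w + 1 := by simp [cnt, isLastB, h]
        rw [c1, c2, map_inv]
        simp only [pi1, FreeGroup.lift_apply_of, dif_neg h, Prod.inv_mk, Prod.mk_mul_mk, inv_one,
          one_mul, ← ofAdd_neg, ← ofAdd_add]
        congr 2
        push_cast
        ring
      · have e1 : FreeGroup.mk [(i, true)] = (FreeGroup.of i) := rfl
        rw [e1]
        have c1 : cnt true ((i, true) :: w) = cnt true w + 1 := by simp [cnt, isLastB, h]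
        have c2 : cnt false ((i, true) :: w) = cnt false w := by simp [cnt, isLastB, h]
        rw [c1, c2]
        simp only [pi1, FreeGroup.lift_apply_of, dif_neg h, Prod.mk_mul_mk, one_mul, ← ofAdd_add]
        congr 2
        push_cast
        ring

theorem pi1_surj {n : ℕ} {G : Type} [Group G] {π : FreeGroup (Fin n) →* G}
    (hπ : Function.Surjective π) : Function.Surjective (pi1 π) := by
  rintro ⟨g, z⟩
  obtain ⟨v, rfl⟩ := hπ g
  refine ⟨FreeGroup.map Fin.castSucc v * (FreeGroup.of (Fin.last n)) ^ (Multiplicative.toAdd z), ?_⟩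
  have h1 : (pi1 π).comp (FreeGroup.map Fin.castSucc) = (MonoidHom.inl G (Multiplicative ℤ)).comp π := by
    ext i <;> simp [pi1]
  have h2 := DFunLike.congr_fun h1 v
  simp only [MonoidHom.comp_apply] at h2
  rw [map_mul, h2, map_zpow]
  simp [pi1, ← ofAdd_zsmul]

theorem main_all {n : ℕ} {G : Type} [Group G] {π : FreeGroup (Fin n) →* G}
    (hπ : Function.Surjective π)
    {f : ℕ → List (Fin n × Bool) → Option Bool} (hp : Primrec₂ f) (hf : GoodDec π f) :
    ∃ (H : Type) (_ : Group H) (S : Subgroup H), IsFinitelyPresented H ∧ IsSimpleGroup S ∧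
      ∃ φ : G →* S, Function.Injective φ := by
  let f' : ℕ → List (Fin (n + 1) × Bool) → Option Bool := fun k w =>
    if cnt true w = cnt false w then f k (w.filterMap dropLast) else some false
  have hcnt : ∀ b, Primrec (cnt b : List (Fin (n + 1) × Bool) → ℕ) := fun b =>
    Primrec.list_length.comp (Primrec.listFilterMap Primrec.id
      ((Primrec.dom_finite (isLastB b)).comp Primrec.snd).to₂)
  have hp' : Primrec₂ f' := by
    refine Primrec.ite (Primrec.eq.comp ((hcnt true).comp Primrec.snd) ((hcnt false).comp Primrec.snd))
      (hp.comp Primrec.fst ((Primrec.listFilterMap Primrec.id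
      ((Primrec.dom_finite dropLast).comp Primrec.snd).to₂).comp Primrec.snd)) (Primrec.const _)
  have hf' : GoodDec (pi1 π) f' := by
    intro w
    have e : pi1 π (FreeGroup.mk w) = 1 ↔
      π (FreeGroup.mk (w.filterMap dropLast)) = 1 ∧ cnt true w = cnt false w := by
      rw [pi1_mk, Prod.mk_eq_one, ofAdd_eq_one, sub_eq_zero, Nat.cast_inj]
    obtain ⟨h1, h2⟩ := hf (w.filterMap dropLast)
    by_cases h : cnt true w = cnt false w
    · simp only [f', h, if_true, ne_eq, e, and_true]
      exact ⟨h1, h2⟩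
    · simp [f', h, e]
  obtain ⟨H, i, S, h1, h2, φ, hφ⟩ := main_infinite (pi1_surj hπ) hf' hp'
  exact ⟨H, i, S, h1, h2, φ.comp (MonoidHom.inl G _), hφ.comp fun a b h => congrArg Prod.fst h⟩

theorem main_thm (G : Type*) [Group G] (n : ℕ)
    (π : FreeGroup (Fin n) →* G) (hπ : Function.Surjective π)
    (hwp : ComputablePred (fun w : List (Fin n × Bool) => π (FreeGroup.mk w) = 1)) :
    ∃ (H : Type) (_ : Group H) (S : Subgroup H),
      IsFinitelyPresented H ∧ IsSimpleGroup S ∧ ∃ φ : G →* S, Function.Injective φ := by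
  obtain ⟨f, hp, hf⟩ := exists_goodDec hwp
  have hf0 : GoodDec (QuotientGroup.mk' π.ker) f := by
    intro w
    have : QuotientGroup.mk' π.ker (FreeGroup.mk w) = 1 ↔ π (FreeGroup.mk w) = 1 := by
      rw [← MonoidHom.mem_ker, QuotientGroup.ker_mk', MonoidHom.mem_ker]
    rw [ne_eq, this]
    exact hf w
  obtain ⟨H, i, S, h1, h2, φ, hφ⟩ := main_all (QuotientGroup.mk'_surjective π.ker) hp hf0
  let e := QuotientGroup.quotientKerEquivOfSurjective π hπ
  exact ⟨H, i, S, h1, h2, φ.comp e.symm.toMonoidHom, hφ.comp e.symm.injective⟩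

end BHP

/-!
Boone–Higman (1974), hard direction: every finitely generated group with solvable
word problem embeds in a simple subgroup of a finitely presented group.  Elements
of the free group are effectively encoded by the words representing them.
-/
theorem boone_higman_hard_direction (G : Type*) [Group G] (n : ℕ)
    (π : FreeGroup (Fin n) →* G) (hπ : Function.Surjective π)
    (hwp : ComputablePred (fun w : List (Fin n × Bool) => π (FreeGroup.mk w) = 1)) :
    ∃ (H : Type) (_ : Group H) (S : Subgroup H),
      IsFinitelyPresented H ∧ IsSimpleGroup S ∧ ∃ φ : G →* S, Function.Injective φ := by
  exact BHP.main_thm G n π hπ hwp
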